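/- There exist constants C > 0 and c₀ > 0 such that for every x ∈ {u = v} and every R > 1 there exists a vector e_{x,R} ∈ ℝⁿ with |e_{x,R}| ≥ c₀/2 and ∫_{B_R(x)} |∇u − ∇v − e_{x,R}|² dx ≤ C R^{n−1}. -/

import Mathlib

/-!
The proof replaces averages over balls by averages `E_{x,s}` with respect to the Gaussian measure
`gm x s` of centre `x` and variance `s`; integration by parts is then exact and the dependence on the
scale `s` is given by the heat equation. For a solution `(u, v)` the basic quantities are the means
`mU`, the second moments `mA`, the Dirichlet energies `mD`, the interaction `mP = E[u² v²]` and the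
total mass `mH = mA u + mA v`.

* *Energy.* A Weiss-type energy is monotone in `s`, and linear growth forces it to be nonpositive:
  `s * (mD u + mD v + mP) ≤ mH` at every centre and scale (`Sol.energy_le`). Hence `mH` is doubling.
* *Competition.* The product `mA u * mA v` grows at least like a fixed power of the scale
  (`Sol.prod_growth`). Together with doubling this shows that the suitably truncated components
  are asymptotically disjoint (`Sol.far`, `Sol.dp`).
* *Flatness.* The energy bound says that the difference of the truncations is almost extremal in the
  Gaussian Poincaré inequality, provided it has mean close to zero. The second spectral gap
  (`poincare_gap`) then shows that at a balanced centre, one with `mU u = mU v`, the function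
  `u - v` is close to an affine function (`Sol.flat`).
* *Balanced centres.* Neither component is negligible at infinity (`Sol.both`), so there are
  balanced centres at arbitrarily large scales (`Sol.balanced`).
* *Descent through scales.* Where the affine approximation is not small the minor component is tiny
  (`Sol.clear`). So, starting from a balanced centre near a point `y`, either `y` is `Cleared` or
  there is a balanced centre one scale down with almost the same normalized mass `mH / s`
  (`Sol.chain_step`). The errors are geometrically summable (`Sol.chain`). Consequently around every
  interface point there are, at all large scales, balanced centres of normalized mass comparable to
  one (`Sol.good_scales`), and `min u v` is bounded (`Sol.min_le`).
* *Excess.* If `min u v ≤ K`, the truncations of `u` and `v` at height `K` have disjoint supports,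
  and the deficit in the Poincaré inequality is `O(√mH) = O(√s)`. This gives
  `E |∇u - ∇v - e|² = O(s^(-1/2))` with `|e|` bounded below (`Sol.excess`). Comparing the
  Gaussian with the indicator function of a ball of radius `R ~ √s` (`setIntegral_ball_le`) yields the
  theorem for large `R` (`Sol.large`); small radii only affect the constant.
-/

open MeasureTheory Metric Set
open scoped RealInnerProductSpace ENNReal

/-- Euclidean space `ℝⁿ`. -/
abbrev Euc (n : ℕ) := EuclideanSpace ℝ (Fin n)

/-- The Laplacian `Δu` of a function `u : ℝⁿ → ℝ`. -/
noncomputable def lap {n : ℕ} (u : Euc n → ℝ) (x : Euc n) : ℝ :=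
  ∑ i : Fin n,
    fderiv ℝ (fun y => fderiv ℝ u y (EuclideanSpace.single i 1)) x (EuclideanSpace.single i 1)

/-- The divergence `div Y = Σ_α ∂Y^α/∂x_α` of a vector field `Y`. -/
noncomputable def vdiv {n : ℕ} (Y : Euc n → Euc n) (x : Euc n) : ℝ :=
  ∑ i : Fin n, fderiv ℝ Y x (EuclideanSpace.single i 1) i

/-- `DY(p,q)(x) = Σ_{α,β} (∂Y^α/∂x_β)(x) p_α q_β`. -/
noncomputable def DYbil {n : ℕ} (Y : Euc n → Euc n) (p q x : Euc n) : ℝ :=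
  ∑ α : Fin n, ∑ β : Fin n,
    fderiv ℝ Y x (EuclideanSpace.single β 1) α * p α * q β

/-- The rescaled function `u_κ(x) = R⁻¹ u(x₀ + R x)` (with `κ = R⁴`). -/
noncomputable def resc {n : ℕ} (u : Euc n → ℝ) (x₀ : Euc n) (R : ℝ) (x : Euc n) : ℝ :=
  R⁻¹ * u (x₀ + R • x)

noncomputable section

namespace ExcessDecay

open Filter Topology

variable {n : ℕ}

/-! ### Gaussian measures -/

/-- The Gaussian (heat) kernel of variance `s` on `ℝⁿ`. -/
def gk (s : ℝ) (y : Euc n) : ℝ := (√(2 * Real.pi * s))⁻¹ ^ n * Real.exp (-‖y‖ ^ 2 / (2 * s))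

/-- The Gaussian probability measure with centre `x` and covariance `s · Id`. -/
def gm (x : Euc n) (s : ℝ) : Measure (Euc n) :=
  volume.withDensity (fun y => ENNReal.ofReal (gk s (y - x)))

lemma gk_pos {s : ℝ} (hs : 0 < s) (y : Euc n) : 0 < gk s y := by
  unfold gk; positivity

lemma gk_nonneg (s : ℝ) (y : Euc n) : 0 ≤ gk s y := by
  unfold gk; positivity

lemma contDiff_gk (s : ℝ) : ContDiff ℝ (⊤ : ℕ∞) (gk s : Euc n → ℝ) := by
  unfold gk
  have : ContDiff ℝ (⊤ : ℕ∞) (fun y : Euc n => ‖y‖ ^ 2) := contDiff_norm_sq ℝ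
  fun_prop

lemma contDiff_gk_sub (x : Euc n) (s : ℝ) :
    ContDiff ℝ (⊤ : ℕ∞) (fun y : Euc n => gk s (y - x)) :=
  (contDiff_gk s).comp (contDiff_id.sub contDiff_const)

lemma continuous_gk_sub (x : Euc n) (s : ℝ) : Continuous (fun y : Euc n => gk s (y - x)) :=
  (contDiff_gk_sub x s).continuous

lemma integral_gm (x : Euc n) (s : ℝ) (f : Euc n → ℝ) :
    ∫ y, f y ∂(gm x s) = ∫ y, gk s (y - x) * f y := by
  unfold gm
  rw [integral_withDensity_eq_integral_toReal_smul]
  · simp [ENNReal.toReal_ofReal (gk_nonneg s _)]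
  · exact (continuous_gk_sub x s).measurable.ennreal_ofReal
  · simp

lemma integrable_gm_iff {x : Euc n} {s : ℝ} {f : Euc n → ℝ} :
    Integrable f (gm x s) ↔ Integrable (fun y => gk s (y - x) * f y) := by
  unfold gm
  rw [integrable_withDensity_iff_integrable_smul']
  · simp [ENNReal.toReal_ofReal (gk_nonneg s _)]
  · exact (continuous_gk_sub x s).measurable.ennreal_ofReal
  · simp

lemma integral_gk {s : ℝ} (hs : 0 < s) : ∫ y : Euc n, gk s y = 1 := by
  unfold gk
  rw [integral_const_mul]
  have h := GaussianFourier.integral_rexp_neg_mul_sq_norm (V := Euc n) (b := 1 / (2 * s))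
    (by positivity)
  have e : (fun v : Euc n => Real.exp (-(1 / (2 * s)) * ‖v‖ ^ 2)) =
    fun v => Real.exp (-‖v‖ ^ 2 / (2 * s)) := by
    ext v; congr 1; ring
  rw [e] at h
  rw [h]
  have e2 : Real.pi / (1 / (2 * s)) = 2 * Real.pi * s := by field_simp
  rw [e2, finrank_euclideanSpace, Fintype.card_fin, inv_pow, Real.sqrt_eq_rpow,
    ← Real.rpow_natCast, ← Real.rpow_mul (by positivity)]
  rw [show (1 / 2 * (n : ℝ)) = n / 2 by ring]
  exact inv_mul_cancel₀ (by positivity)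

lemma integrable_gk {s : ℝ} (hs : 0 < s) : Integrable (gk s : Euc n → ℝ) := by
  by_contra h
  have := integral_gk (n := n) hs
  rw [integral_undef h] at this
  exact zero_ne_one this

lemma gm_prob (x : Euc n) {s : ℝ} (hs : 0 < s) : IsProbabilityMeasure (gm x s) := by
  constructor
  unfold gm
  rw [withDensity_apply _ MeasurableSet.univ, Measure.restrict_univ,
    ← ofReal_integral_eq_lintegral_ofReal]
  · rw [integral_sub_right_eq_self (fun y => gk s y) x, integral_gk hs, ENNReal.ofReal_one]
  · exact (integrable_gk hs).comp_sub_right x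
  · exact Eventually.of_forall fun y => gk_nonneg s _

/-- The kernel comparison at different centres and scales. -/
lemma gk_le {s' s : ℝ} (hs' : 0 < s') (hs : s' < s) (x z y : Euc n) :
    gk s' (y - z) ≤ √(s / s') ^ n * Real.exp (‖z - x‖ ^ 2 / (2 * (s - s'))) * gk s (y - x) := by
  have hs0 : 0 < s := hs'.trans hs
  have hd : 0 < s - s' := by linarith
  unfold gk
  have h1 : (√(2 * Real.pi * s'))⁻¹ ^ n = √(s / s') ^ n * (√(2 * Real.pi * s))⁻¹ ^ n := by
    rw [← mul_pow]
    congr 1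
    rw [show 2 * Real.pi * s = (s / s') * (2 * Real.pi * s') by field_simp,
      Real.sqrt_mul (x := s / s') (by positivity), mul_inv, ← mul_assoc,
      mul_inv_cancel₀ (by positivity), one_mul]
  rw [h1]
  have h2 : Real.exp (-‖y - z‖ ^ 2 / (2 * s')) ≤
      Real.exp (‖z - x‖ ^ 2 / (2 * (s - s'))) * Real.exp (-‖y - x‖ ^ 2 / (2 * s)) := by
    rw [← Real.exp_add]
    apply Real.exp_le_exp.mpr
    have ht : ‖y - x‖ ≤ ‖y - z‖ + ‖z - x‖ := by
      have := norm_add_le (y - z) (z - x); simpa using this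
    have ht2 : ‖y - x‖ ^ 2 ≤ (‖y - z‖ + ‖z - x‖) ^ 2 := by gcongr
    set a := ‖y - z‖
    set b := ‖z - x‖
    have key : (a + b) ^ 2 / s ≤ a ^ 2 / s' + b ^ 2 / (s - s') := by
      rw [div_add_div _ _ hs'.ne' hd.ne', div_le_div_iff₀ hs0 (by positivity)]
      nlinarith [sq_nonneg (a * (s - s') - b * s')]
    have e1 : -a ^ 2 / (2 * s') = -(a ^ 2 / s') / 2 := by field_simp
    have e2 : b ^ 2 / (2 * (s - s')) = (b ^ 2 / (s - s')) / 2 := by field_simp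
    have e3 : -‖y - x‖ ^ 2 / (2 * s) = -(‖y - x‖ ^ 2 / s) / 2 := by field_simp
    have h4 : ‖y - x‖ ^ 2 / s ≤ (a + b) ^ 2 / s := by gcongr
    rw [e1, e2, e3]; linarith
  calc _ ≤ √(s / s') ^ n * (√(2 * Real.pi * s))⁻¹ ^ n * (Real.exp (‖z - x‖ ^ 2 / (2 * (s - s')))
        * Real.exp (-‖y - x‖ ^ 2 / (2 * s))) := by gcongr
    _ = _ := by ring

/-- Gaussian averages of nonnegative functions at a smaller scale are controlled by those at a
larger scale and a different centre. -/
lemma integral_gm_le {s' s : ℝ} (hs' : 0 < s') (hs : s' < s) (x z : Euc n) {f : Euc n → ℝ}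
    (hf : ∀ y, 0 ≤ f y) (hi : Integrable f (gm x s)) :
    ∫ y, f y ∂(gm z s') ≤
      √(s / s') ^ n * Real.exp (‖z - x‖ ^ 2 / (2 * (s - s'))) * ∫ y, f y ∂(gm x s) := by
  rw [integral_gm, integral_gm, ← integral_const_mul]
  apply integral_mono_of_nonneg
  · exact Eventually.of_forall fun y => mul_nonneg (gk_nonneg _ _) (hf y)
  · exact (integrable_gm_iff.mp hi).const_mul _
  · refine Eventually.of_forall fun y => ?_
    have := mul_le_mul_of_nonneg_right (gk_le hs' hs x z y) (hf y)
    simpa [mul_assoc] using this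

/-- Integrability with respect to all Gaussian measures. -/
def GInt (f : Euc n → ℝ) : Prop := ∀ (x : Euc n) (s : ℝ), 0 < s → Integrable f (gm x s)

lemma GInt.add {f g : Euc n → ℝ} (hf : GInt f) (hg : GInt g) : GInt (fun y => f y + g y) :=
  fun x s hs => (hf x s hs).add (hg x s hs)

lemma GInt.sub {f g : Euc n → ℝ} (hf : GInt f) (hg : GInt g) : GInt (fun y => f y - g y) :=
  fun x s hs => (hf x s hs).sub (hg x s hs)

lemma GInt.neg {f : Euc n → ℝ} (hf : GInt f) : GInt (fun y => -f y) :=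
  fun x s hs => (hf x s hs).neg

lemma GInt.const_mul {f : Euc n → ℝ} (hf : GInt f) (c : ℝ) : GInt (fun y => c * f y) :=
  fun x s hs => (hf x s hs).const_mul c

lemma GInt.abs {f : Euc n → ℝ} (hf : GInt f) : GInt (fun y => |f y|) :=
  fun x s hs => (hf x s hs).abs

lemma GInt.sum {ι : Type*} {t : Finset ι} {f : ι → Euc n → ℝ} (hf : ∀ i ∈ t, GInt (f i)) :
    GInt (fun y => ∑ i ∈ t, f i y) :=
  fun x s hs => integrable_finsetSum _ fun i hi => hf i hi x s hs

lemma gint_const (c : ℝ) : GInt (fun _ : Euc n => c) := fun x s hs => by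
  have := gm_prob x hs
  exact integrable_const c

lemma GInt.mono {f g : Euc n → ℝ} (hf : GInt f) (hg : Continuous g) (h : ∀ y, |g y| ≤ f y) :
    GInt g := fun x s hs =>
  (hf x s hs).mono' hg.aestronglyMeasurable (Eventually.of_forall h)

lemma gk_weight {s : ℝ} (hs : 0 < s) (x y : Euc n) :
    gk s (y - x) * ‖y - x‖ ^ 2 ≤ 4 * s * √2 ^ n * gk (2 * s) (y - x) := by
  have h : gk s (y - x) = √2 ^ n * Real.exp (-(‖y - x‖ ^ 2 / (4 * s))) * gk (2 * s) (y - x) := by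
    unfold gk
    rw [show 2 * Real.pi * (2 * s) = 2 * (2 * Real.pi * s) by ring,
      Real.sqrt_mul (x := 2) (by positivity), mul_inv, mul_pow]
    have : Real.exp (-‖y - x‖ ^ 2 / (2 * s)) = Real.exp (-(‖y - x‖ ^ 2 / (4 * s))) *
        Real.exp (-‖y - x‖ ^ 2 / (2 * (2 * s))) := by
      rw [← Real.exp_add]; congr 1; field_simp; ring
    rw [this]
    have h2 : √2 ^ n * (√2)⁻¹ ^ n = 1 := by
      rw [← mul_pow, mul_inv_cancel₀ (by positivity), one_pow]
    linear_combination (-(√(2 * Real.pi * s))⁻¹ ^ n * (Real.exp (-(‖y - x‖ ^ 2 / (4 * s))) *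
        Real.exp (-‖y - x‖ ^ 2 / (2 * (2 * s))))) * h2
  rw [h]
  set r := ‖y - x‖ ^ 2 / (4 * s) with hr
  have e : ‖y - x‖ ^ 2 = 4 * s * r := by rw [hr]; field_simp
  rw [e]
  have h3 : r * Real.exp (-r) ≤ 1 := by
    have := Real.add_one_le_exp r
    rw [Real.exp_neg, ← div_eq_mul_inv, div_le_one (Real.exp_pos r)]; linarith
  have : 0 ≤ 4 * s * √2 ^ n * gk (2 * s) (y - x) := by have := gk_nonneg (2 * s) (y - x); positivity
  calc _ = 4 * s * √2 ^ n * gk (2 * s) (y - x) * (r * Real.exp (-r)) := by ring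
    _ ≤ 4 * s * √2 ^ n * gk (2 * s) (y - x) * 1 := by gcongr
    _ = _ := by ring

lemma GInt.norm_sq_mul' {f : Euc n → ℝ} (hf : GInt f) (x : Euc n) {s : ℝ} (hs : 0 < s) :
    Integrable (fun y => ‖y - x‖ ^ 2 * f y) (gm x s) := by
  have h := integrable_gm_iff.mp (hf x (2 * s) (by positivity))
  have h0 := integrable_gm_iff.mp (hf x s hs)
  rw [integrable_gm_iff]
  refine (h.const_mul (4 * s * √2 ^ n)).mono ?_ (Eventually.of_forall fun y => ?_)
  · have : AEStronglyMeasurable (fun y => ‖y - x‖ ^ 2 * (gk s (y - x) * f y)) volume :=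
      (by fun_prop : Continuous fun y : Euc n => ‖y - x‖ ^ 2).aestronglyMeasurable.mul
        h0.aestronglyMeasurable
    refine this.congr (Eventually.of_forall fun y => ?_)
    simp only []; ring
  · have := mul_le_mul_of_nonneg_right (gk_weight hs x y) (abs_nonneg (f y))
    simp only [Real.norm_eq_abs, abs_mul, abs_of_nonneg (gk_nonneg _ _), abs_pow, abs_norm,
      abs_of_pos hs]
    rw [abs_of_pos (show (0:ℝ) < 4 by norm_num), abs_of_nonneg (Real.sqrt_nonneg 2)]
    nlinarith

/-- Gaussian integrability is stable under multiplication by functions of quadratic growth. -/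
lemma GInt.norm_sq_mul {f : Euc n → ℝ} (hf : GInt f) (z : Euc n) :
    GInt (fun y => ‖y - z‖ ^ 2 * f y) := by
  intro x s hs
  have h1 := hf.norm_sq_mul' x hs
  have h2 := hf x s hs
  refine ((h1.norm.const_mul 2).add (h2.norm.const_mul (2 * ‖x - z‖ ^ 2))).mono ?_
    (Eventually.of_forall fun y => ?_)
  · exact (by fun_prop : Continuous fun y : Euc n => ‖y - z‖ ^ 2).aestronglyMeasurable.mul
      h2.aestronglyMeasurable
  · change ‖‖y - z‖ ^ 2 * f y‖ ≤ ‖2 * ‖‖y - x‖ ^ 2 * f y‖ + 2 * ‖x - z‖ ^ 2 * ‖f y‖‖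
    have hr : ‖2 * ‖‖y - x‖ ^ 2 * f y‖ + 2 * ‖x - z‖ ^ 2 * ‖f y‖‖ =
        2 * (‖y - x‖ ^ 2 * |f y|) + 2 * ‖x - z‖ ^ 2 * |f y| := by
      simp only [norm_mul, norm_pow, norm_norm, Real.norm_eq_abs (f y)]
      rw [Real.norm_of_nonneg (by positivity)]
    rw [hr, norm_mul, norm_pow, norm_norm, Real.norm_eq_abs]
    have : ‖y - z‖ ^ 2 ≤ 2 * ‖y - x‖ ^ 2 + 2 * ‖x - z‖ ^ 2 := by
      have := norm_add_le (y - x) (x - z)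
      simp only [sub_add_sub_cancel] at this
      nlinarith [norm_nonneg (y - z), norm_nonneg (y - x), norm_nonneg (x - z),
        sq_nonneg (‖y - x‖ - ‖x - z‖), mul_self_le_mul_self (norm_nonneg _) this]
    nlinarith [abs_nonneg (f y)]

lemma GInt.weight {f g : Euc n → ℝ} (hf : GInt f) (hg : Continuous g) (z : Euc n) (C : ℝ)
    (h : ∀ y, |g y| ≤ C * ((1 + ‖y - z‖ ^ 2) * |f y|)) : GInt g := by
  have h1 : GInt (fun y => C * (|f y| + ‖y - z‖ ^ 2 * |f y|)) :=
    (hf.abs.add (hf.abs.norm_sq_mul z)).const_mul C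
  exact h1.mono hg fun y => (h y).trans_eq (by ring)

lemma gint_of_growth {g : Euc n → ℝ} (hg : Continuous g) (C : ℝ) (m : ℕ)
    (h : ∀ y, |g y| ≤ C * (1 + ‖y‖ ^ 2) ^ m) : GInt g := by
  have key : ∀ m : ℕ, GInt (fun y : Euc n => (1 + ‖y‖ ^ 2) ^ m) := by
    intro m
    induction m with
    | zero => simpa using gint_const (n := n) 1
    | succ m ih =>
      refine ih.weight (by fun_prop) 0 1 fun y => ?_
      rw [abs_of_nonneg (by positivity), abs_of_nonneg (by positivity)]
      simp [pow_succ, mul_comm]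
  exact ((key m).const_mul C).mono hg h

/-! ### Partial derivatives -/

/-- The `i`-th partial derivative. -/
def pd (i : Fin n) (f : Euc n → ℝ) (y : Euc n) : ℝ := fderiv ℝ f y (EuclideanSpace.single i 1)

lemma lap_eq (f : Euc n → ℝ) (y : Euc n) : lap f y = ∑ i, pd i (pd i f) y := rfl

lemma contDiff_pd {f : Euc n → ℝ} (hf : ContDiff ℝ (⊤ : ℕ∞) f) (i : Fin n) :
    ContDiff ℝ (⊤ : ℕ∞) (pd i f) := by
  unfold pd
  exact (hf.fderiv_right (m := (⊤ : ℕ∞)) (by simp)).clm_apply contDiff_const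

lemma continuous_pd {f : Euc n → ℝ} (hf : ContDiff ℝ 1 f) (i : Fin n) : Continuous (pd i f) := by
  unfold pd
  exact (hf.continuous_fderiv (by simp)).clm_apply continuous_const

lemma pd_add {f g : Euc n → ℝ} {y : Euc n} (i : Fin n) (hf : DifferentiableAt ℝ f y)
    (hg : DifferentiableAt ℝ g y) : pd i (fun z => f z + g z) y = pd i f y + pd i g y := by
  unfold pd; rw [fderiv_fun_add hf hg]; rfl

lemma pd_sub {f g : Euc n → ℝ} {y : Euc n} (i : Fin n) (hf : DifferentiableAt ℝ f y)
    (hg : DifferentiableAt ℝ g y) : pd i (fun z => f z - g z) y = pd i f y - pd i g y := by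
  unfold pd; rw [fderiv_fun_sub hf hg]; rfl

lemma pd_mul {f g : Euc n → ℝ} {y : Euc n} (i : Fin n) (hf : DifferentiableAt ℝ f y)
    (hg : DifferentiableAt ℝ g y) :
    pd i (fun z => f z * g z) y = pd i f y * g y + f y * pd i g y := by
  unfold pd; rw [fderiv_fun_mul hf hg]
  simp only [add_apply, smul_apply, smul_eq_mul]; ring

lemma pd_sq {f : Euc n → ℝ} {y : Euc n} (i : Fin n) (hf : DifferentiableAt ℝ f y) :
    pd i (fun z => f z ^ 2) y = 2 * f y * pd i f y := by
  have : (fun z => f z ^ 2) = fun z => f z * f z := by ext; ring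
  rw [this, pd_mul i hf hf]; ring

lemma pd_sum {ι : Type*} {t : Finset ι} {f : ι → Euc n → ℝ} {y : Euc n} (i : Fin n)
    (hf : ∀ j ∈ t, DifferentiableAt ℝ (f j) y) :
    pd i (fun z => ∑ j ∈ t, f j z) y = ∑ j ∈ t, pd i (f j) y := by
  unfold pd; rw [fderiv_fun_sum hf]; simp

lemma pd_const (i : Fin n) (c : ℝ) (y : Euc n) : pd i (fun _ => c) y = 0 := by
  unfold pd; simp

lemma pd_coord (i j : Fin n) (x y : Euc n) :
    pd i (fun z : Euc n => z j - x j) y = if i = j then 1 else 0 := by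
  unfold pd
  have h : HasFDerivAt (fun z : Euc n => z j - x j) (EuclideanSpace.proj (𝕜 := ℝ) j) y :=
    (EuclideanSpace.proj (𝕜 := ℝ) j : Euc n →L[ℝ] ℝ).hasFDerivAt.sub_const _
  rw [h.fderiv]
  simp [eq_comm]

lemma contDiff_coord (j : Fin n) (x : Euc n) {m : WithTop ℕ∞} :
    ContDiff ℝ m (fun z : Euc n => z j - x j) :=
  (EuclideanSpace.proj (𝕜 := ℝ) j : Euc n →L[ℝ] ℝ).contDiff.sub contDiff_const

lemma sum_coord_sq (x y : Euc n) : ∑ i, (y i - x i) ^ 2 = ‖y - x‖ ^ 2 := by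
  rw [EuclideanSpace.norm_sq_eq]; simp

lemma abs_coord_le (i : Fin n) (x y : Euc n) : |y i - x i| ≤ ‖y - x‖ := by
  have := PiLp.norm_apply_le (y - x) i
  simpa using this

lemma abs_coord_le' (i : Fin n) (x y : Euc n) : |y i - x i| ≤ 1 + ‖y - x‖ ^ 2 := by
  have := abs_coord_le i x y
  nlinarith [sq_nonneg (‖y - x‖ - 1)]

lemma pd_gk {s : ℝ} (hs : 0 < s) (i : Fin n) (x y : Euc n) :
    pd i (fun z => gk s (z - x)) y = -((y i - x i) / s) * gk s (y - x) := by
  have h1 := ((hasFDerivAt_id (𝕜 := ℝ) y).sub_const x).norm_sq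
  have h2 := h1.neg.const_mul (2 * s)⁻¹
  have h3 := (h2.exp).const_mul ((√(2 * Real.pi * s))⁻¹ ^ n)
  have e : (fun z : Euc n => gk s (z - x)) = fun z => (√(2 * Real.pi * s))⁻¹ ^ n *
      Real.exp ((2 * s)⁻¹ * -‖id z - x‖ ^ 2) := by
    ext z; simp only [gk, id, div_eq_inv_mul]
  unfold pd
  have h4 := h3.fderiv
  change fderiv ℝ (fun z : Euc n => (√(2 * Real.pi * s))⁻¹ ^ n *
      Real.exp ((2 * s)⁻¹ * -‖id z - x‖ ^ 2)) y = _ at h4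
  rw [e, h4]
  unfold gk
  simp [EuclideanSpace.inner_single_right]
  field_simp

/-- Coordinates times Gaussian integrable functions. -/
lemma GInt.coord_mul {f : Euc n → ℝ} (hf : GInt f) (hc : Continuous f) (x : Euc n) (i : Fin n) :
    GInt (fun y => (y i - x i) * f y) := by
  refine hf.weight (by fun_prop) x 1 fun y => ?_
  rw [abs_mul, one_mul]
  gcongr
  exact abs_coord_le' i x y

/-! ### Cutoffs -/

/-- A smooth bump function equal to one on the unit ball and supported in the ball of radius 2. -/
def bmp (n : ℕ) : ContDiffBump (0 : Euc n) := ⟨1, 2, one_pos, one_lt_two⟩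

/-- Smooth cutoff at radius `N`. -/
def cut (N : ℝ) (y : Euc n) : ℝ := bmp n (N⁻¹ • y)

lemma contDiff_cut (N : ℝ) : ContDiff ℝ (⊤ : ℕ∞) (cut N : Euc n → ℝ) := by
  unfold cut
  exact (bmp n).contDiff.comp (contDiff_const_smul _)

lemma cut_nonneg (N : ℝ) (y : Euc n) : 0 ≤ cut N y := (bmp n).nonneg

lemma cut_le_one (N : ℝ) (y : Euc n) : cut N y ≤ 1 := (bmp n).le_one

lemma cut_eq_one {N : ℝ} (hN : 0 < N) {y : Euc n} (hy : ‖y‖ ≤ N) : cut N y = 1 := by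
  apply (bmp n).one_of_mem_closedBall
  simp only [mem_closedBall, dist_zero_right, norm_smul, norm_inv, Real.norm_of_nonneg hN.le]
  rw [inv_mul_le_iff₀ hN]; simpa [bmp] using hy

lemma cut_support {N : ℝ} (hN : 0 < N) : HasCompactSupport (cut N : Euc n → ℝ) := by
  unfold cut
  exact (bmp n).hasCompactSupport.comp_smul (inv_ne_zero hN.ne')

lemma cut_tendsto (y : Euc n) : Tendsto (fun N : ℕ => cut ((N : ℝ) + 1) y) atTop (𝓝 1) := by
  apply tendsto_const_nhds.congr'
  obtain ⟨M, hM⟩ := exists_nat_ge ‖y‖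
  filter_upwards [eventually_ge_atTop M] with N hN
  refine (cut_eq_one (by positivity) ?_).symm
  have : (M : ℝ) ≤ N := by exact_mod_cast hN
  linarith

lemma cut_pd_bound : ∃ L : ℝ, 0 < L ∧ ∀ (N : ℝ), 0 < N → ∀ (i : Fin n) (y : Euc n),
    |pd i (cut N) y| ≤ L / N := by
  have hc : Continuous (fderiv ℝ (bmp n : Euc n → ℝ)) :=
    ((bmp n).contDiff (n := 1)).continuous_fderiv (by simp)
  obtain ⟨L, hL⟩ := ((bmp n).hasCompactSupport.fderiv (𝕜 := ℝ)).exists_bound_of_continuous hc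
  refine ⟨|L| + 1, by positivity, fun N hN i y => ?_⟩
  have hd : HasFDerivAt (cut N : Euc n → ℝ)
      ((fderiv ℝ (bmp n : Euc n → ℝ) (N⁻¹ • y)).comp (N⁻¹ • ContinuousLinearMap.id ℝ (Euc n))) y := by
    refine HasFDerivAt.comp y ?_ ((hasFDerivAt_id y).const_smul N⁻¹)
    exact (((bmp n).contDiff (n := 1)).differentiable (by simp) _).hasFDerivAt
  unfold pd
  rw [hd.fderiv]
  simp only [ContinuousLinearMap.comp_apply, smul_apply,
    ContinuousLinearMap.id_apply, map_smul, smul_eq_mul, abs_mul, abs_inv, abs_of_pos hN]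
  rw [div_eq_inv_mul]
  gcongr
  have h1 := (fderiv ℝ (bmp n : Euc n → ℝ) (N⁻¹ • y)).le_opNorm (EuclideanSpace.single i 1)
  simp only [PiLp.norm_single, norm_one, mul_one, Real.norm_eq_abs] at h1
  have := hL (N⁻¹ • y)
  linarith [le_abs_self L]

lemma pd_cut_tendsto (i : Fin n) (y : Euc n) :
    Tendsto (fun N : ℕ => pd i (cut ((N : ℝ) + 1)) y) atTop (𝓝 0) := by
  obtain ⟨L, hL, h⟩ := cut_pd_bound (n := n)
  have h0 : Tendsto (fun N : ℕ => L / ((N : ℝ) + 1)) atTop (𝓝 0) :=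
    tendsto_const_nhds.div_atTop (tendsto_natCast_atTop_atTop.atTop_add tendsto_const_nhds)
  exact squeeze_zero_norm (fun N => h _ (by positivity) i y) h0

/-! ### Integration by parts -/

lemma ibp_compact {φ g : Euc n → ℝ} (hφ : ContDiff ℝ 1 φ) (hs : HasCompactSupport φ)
    (hg : ContDiff ℝ 1 g) (i : Fin n) : ∫ y, φ y * pd i g y = -∫ y, pd i φ y * g y := by
  have hs' : HasCompactSupport (pd i φ) := hs.fderiv_apply (𝕜 := ℝ) _
  refine integral_mul_fderiv_eq_neg_fderiv_mul_of_integrable ?_ ?_ ?_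
    (fun x _ => hφ.differentiable (by simp) x) (fun x _ => hg.differentiable (by simp) x)
  · exact ((continuous_pd hφ i).mul hg.continuous).integrable_of_hasCompactSupport hs'.mul_right
  · exact (hφ.continuous.mul (continuous_pd hg i)).integrable_of_hasCompactSupport hs.mul_right
  · exact (hφ.continuous.mul hg.continuous).integrable_of_hasCompactSupport hs.mul_right

lemma div_compact {φ : Euc n → ℝ} {X : Fin n → Euc n → ℝ} (hφ : ContDiff ℝ 1 φ)
    (hs : HasCompactSupport φ) (hX : ∀ i, ContDiff ℝ 1 (X i)) :
    ∫ y, φ y * ∑ i, pd i (X i) y = -∫ y, ∑ i, pd i φ y * X i y := by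
  simp_rw [Finset.mul_sum]
  rw [integral_finsetSum, integral_finsetSum, ← Finset.sum_neg_distrib]
  · exact Finset.sum_congr rfl fun i _ => ibp_compact hφ hs (hX i) i
  · intro i _
    have hs' : HasCompactSupport (pd i φ) := hs.fderiv_apply (𝕜 := ℝ) _
    exact ((continuous_pd hφ i).mul (hX i).continuous).integrable_of_hasCompactSupport
      hs'.mul_right
  · intro i _
    exact (hφ.continuous.mul (continuous_pd (hX i) i)).integrable_of_hasCompactSupport hs.mul_right

/-- The divergence theorem in Gauss space. Only the full divergence, not the individual terms,
has to be integrable. -/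
lemma gauss_div {X : Fin n → Euc n → ℝ} (hX : ∀ i, ContDiff ℝ 1 (X i)) (hI : ∀ i, GInt (X i))
    (hD : GInt (fun y => ∑ i, pd i (X i) y)) (x : Euc n) {s : ℝ} (hs : 0 < s) :
    ∫ y, ∑ i, pd i (X i) y ∂(gm x s) = s⁻¹ * ∫ y, ∑ i, (y i - x i) * X i y ∂(gm x s) := by
  set G : Euc n → ℝ := fun y => gk s (y - x) with hG
  have hGc : ContDiff ℝ 1 G := (contDiff_gk_sub x s).of_le (by simp)
  have hXc : ∀ i, Continuous (X i) := fun i => (hX i).continuous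
  have hDc : Continuous (fun y => ∑ i, pd i (X i) y) :=
    continuous_finsetSum _ fun i _ => continuous_pd (hX i) i
  have hCc : Continuous (fun y : Euc n => ∑ i, (y i - x i) * X i y) :=
    continuous_finsetSum _ fun i _ => (by fun_prop : Continuous fun y : Euc n => y i - x i).mul (hXc i)
  have hC : GInt (fun y => ∑ i, (y i - x i) * X i y) :=
    GInt.sum fun i _ => (hI i).coord_mul (hXc i) x i
  obtain ⟨L, hL, hLb⟩ := cut_pd_bound (n := n)
  let c : ℕ → Euc n → ℝ := fun N => cut ((N : ℝ) + 1)
  have hcc : ∀ N, ContDiff ℝ 1 (c N) := fun N => (contDiff_cut _).of_le (by simp)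
  have hcpos : ∀ N : ℕ, (0 : ℝ) < (N : ℝ) + 1 := fun N => by positivity
  have key : ∀ N : ℕ, ∫ y, c N y * (∑ i, pd i (X i) y) ∂(gm x s) =
      s⁻¹ * ∫ y, c N y * (∑ i, (y i - x i) * X i y) ∂(gm x s)
        - ∫ y, ∑ i, pd i (c N) y * X i y ∂(gm x s) := by
    intro N
    have h := div_compact (φ := fun y => c N y * G y) (X := X) ((hcc N).mul hGc)
      ((cut_support (hcpos N)).mul_right) hX
    have i1 : Integrable (fun y => c N y * (∑ i, (y i - x i) * X i y)) (gm x s) := by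
      refine (hC x s hs).norm.mono' ((hcc N).continuous.mul hCc).aestronglyMeasurable
        (Eventually.of_forall fun y => ?_)
      rw [norm_mul, Real.norm_of_nonneg (cut_nonneg _ _)]
      exact mul_le_of_le_one_left (norm_nonneg _) (cut_le_one _ _)
    have i2 : Integrable (fun y => ∑ i, pd i (c N) y * X i y) (gm x s) := by
      refine integrable_finsetSum _ fun i _ => ?_
      refine ((hI i x s hs).norm.const_mul (L / ((N : ℝ) + 1))).mono'
        ((continuous_pd (hcc N) i).mul (hXc i)).aestronglyMeasurable
        (Eventually.of_forall fun y => ?_)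
      rw [norm_mul]
      gcongr
      exact hLb _ (hcpos N) i y
    rw [← integral_const_mul, ← integral_sub (i1.const_mul _) i2, integral_gm, integral_gm]
    have e1 : ∀ y, gk s (y - x) * (c N y * ∑ i, pd i (X i) y) =
        c N y * G y * ∑ i, pd i (X i) y := fun y => by simp only [hG]; ring
    simp_rw [e1]
    rw [h, ← integral_neg]
    congr 1; ext y
    have e2 : ∀ i, pd i (fun y => c N y * G y) y * X i y =
        gk s (y - x) * (pd i (c N) y * X i y) - gk s (y - x) * (s⁻¹ * (c N y * ((y i - x i) * X i y))) := by
      intro i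
      rw [pd_mul i ((hcc N).differentiable (by simp) y) (hGc.differentiable (by simp) y),
        pd_gk hs i x y]
      simp only [hG]; ring
    simp_rw [e2]
    rw [Finset.sum_sub_distrib, ← Finset.mul_sum, ← Finset.mul_sum, ← Finset.mul_sum,
      ← Finset.mul_sum]
    ring
  have t1 : Tendsto (fun N => ∫ y, c N y * (∑ i, pd i (X i) y) ∂(gm x s)) atTop
      (𝓝 (∫ y, ∑ i, pd i (X i) y ∂(gm x s))) := by
    refine tendsto_integral_of_dominated_convergence (fun y => ‖∑ i, pd i (X i) y‖)
      (fun N => ((hcc N).continuous.mul hDc).aestronglyMeasurable) (hD x s hs).norm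
      (fun N => Eventually.of_forall fun y => ?_) (Eventually.of_forall fun y => ?_)
    · rw [norm_mul, Real.norm_of_nonneg (cut_nonneg _ _)]
      exact mul_le_of_le_one_left (norm_nonneg _) (cut_le_one _ _)
    · simpa using (cut_tendsto y).mul_const (∑ i, pd i (X i) y)
  have t2 : Tendsto (fun N => ∫ y, c N y * (∑ i, (y i - x i) * X i y) ∂(gm x s)) atTop
      (𝓝 (∫ y, ∑ i, (y i - x i) * X i y ∂(gm x s))) := by
    refine tendsto_integral_of_dominated_convergence (fun y => ‖∑ i, (y i - x i) * X i y‖)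
      (fun N => ((hcc N).continuous.mul hCc).aestronglyMeasurable) (hC x s hs).norm
      (fun N => Eventually.of_forall fun y => ?_) (Eventually.of_forall fun y => ?_)
    · rw [norm_mul, Real.norm_of_nonneg (cut_nonneg _ _)]
      exact mul_le_of_le_one_left (norm_nonneg _) (cut_le_one _ _)
    · simpa using (cut_tendsto y).mul_const (∑ i, (y i - x i) * X i y)
  have t3 : Tendsto (fun N => ∫ y, ∑ i, pd i (c N) y * X i y ∂(gm x s)) atTop (𝓝 0) := by
    have := tendsto_integral_of_dominated_convergence (μ := gm x s)
      (F := fun N y => ∑ i, pd i (c N) y * X i y) (f := fun _ => (0 : ℝ))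
      (fun y => ∑ i, L * ‖X i y‖)
      (fun N => (continuous_finsetSum _ fun i _ =>
        (continuous_pd (hcc N) i).mul (hXc i)).aestronglyMeasurable)
      (integrable_finsetSum _ fun i _ => (hI i x s hs).norm.const_mul _)
      (fun N => Eventually.of_forall fun y => ?_) (Eventually.of_forall fun y => ?_)
    · simpa using this
    · refine (norm_sum_le _ _).trans (Finset.sum_le_sum fun i _ => ?_)
      rw [norm_mul]
      gcongr
      refine (hLb _ (hcpos N) i y).trans (div_le_self hL.le ?_)
      linarith [(Nat.cast_nonneg N : (0 : ℝ) ≤ N)]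
    · have : Tendsto (fun N => ∑ i, pd i (c N) y * X i y) atTop (𝓝 (∑ i, 0 * X i y)) :=
        tendsto_finsetSum _ fun i _ => (pd_cut_tendsto i y).mul_const _
      simpa using this
  have := (t2.const_mul s⁻¹).sub t3
  rw [sub_zero] at this
  refine tendsto_nhds_unique t1 (this.congr fun N => (key N).symm)

/-! ### Dependence of Gaussian averages on scale and centre -/

lemma hasDerivAt_gk {s : ℝ} (hs : 0 < s) (y : Euc n) :
    HasDerivAt (fun t => gk t y) ((‖y‖ ^ 2 / (2 * s ^ 2) - n / (2 * s)) * gk s y) s := by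
  unfold gk
  have hp : 0 < 2 * Real.pi * s := by positivity
  have h0 : HasDerivAt (fun t : ℝ => 2 * Real.pi * t) (2 * Real.pi) s := by
    simpa using (hasDerivAt_id s).const_mul (2 * Real.pi)
  have h1 : HasDerivAt (fun t => (√(2 * Real.pi * t))⁻¹)
      (-(2 * Real.pi / (2 * √(2 * Real.pi * s))) / √(2 * Real.pi * s) ^ 2) s :=
    (h0.sqrt hp.ne').fun_inv (Real.sqrt_ne_zero'.mpr hp)
  have h1' : HasDerivAt (fun t => (√(2 * Real.pi * t))⁻¹)
      (-(1 / (2 * s)) * (√(2 * Real.pi * s))⁻¹) s := by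
    convert h1 using 1
    rw [Real.sq_sqrt hp.le]
    have := Real.sqrt_pos.mpr hp
    field_simp
  have h2 := h1'.fun_pow n
  have h3 : HasDerivAt (fun t : ℝ => -‖y‖ ^ 2 / (2 * t)) (‖y‖ ^ 2 / (2 * s ^ 2)) s := by
    have := (hasDerivAt_inv hs.ne').const_mul (-‖y‖ ^ 2 / 2)
    refine (this.congr_deriv ?_).congr_of_eventuallyEq (Eventually.of_forall fun t => ?_)
    · field_simp
    · simp only []; rw [div_mul_eq_div_div, div_eq_mul_inv (-‖y‖ ^ 2 / 2)]
  refine (h2.mul h3.exp).congr_deriv ?_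
  rcases Nat.eq_zero_or_pos n with hn | hn
  · subst hn; simp; ring
  · obtain ⟨m, rfl⟩ := Nat.exists_eq_succ_of_ne_zero hn.ne'
    simp only [Nat.succ_eq_add_one, Nat.add_sub_cancel, pow_succ, Nat.cast_add, Nat.cast_one]
    field_simp
    ring

/-- Derivative of a Gaussian average with respect to the scale. -/
lemma hasDerivAt_gE {f : Euc n → ℝ} (hf : GInt f) (x : Euc n) {s : ℝ} (hs : 0 < s) :
    HasDerivAt (fun t => ∫ y, f y ∂(gm x t))
      (∫ y, (‖y - x‖ ^ 2 / (2 * s ^ 2) - n / (2 * s)) * f y ∂(gm x s)) s := by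
  simp_rw [integral_gm]
  have h2s := hf x (2 * s) (by positivity)
  have hw := hf.norm_sq_mul' x (s := 2 * s) (by positivity)
  have hb : Integrable (fun y => 2 ^ n * (2 / s ^ 2 * |gk (2 * s) (y - x) * (‖y - x‖ ^ 2 * f y)|
      + n / s * |gk (2 * s) (y - x) * f y|)) :=
    (((integrable_gm_iff.mp hw).abs.const_mul _).add
      ((integrable_gm_iff.mp h2s).abs.const_mul _)).const_mul _
  have hmeas : ∀ t, 0 < t → AEStronglyMeasurable (fun y => gk t (y - x) * f y) volume :=
    fun t ht => (integrable_gm_iff.mp (hf x t ht)).aestronglyMeasurable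
  have h := hasDerivAt_integral_of_dominated_loc_of_deriv_le (μ := volume)
    (F := fun t y => gk t (y - x) * f y)
    (F' := fun t y => (‖y - x‖ ^ 2 / (2 * t ^ 2) - n / (2 * t)) * gk t (y - x) * f y)
    (s := ball s (s / 2)) (x₀ := s) (ball_mem_nhds s (by positivity)) ?_
    (integrable_gm_iff.mp (hf x s hs)) ?_ (Eventually.of_forall fun y => ?_) hb
    (Eventually.of_forall fun y => ?_)
  · exact h.2.congr_deriv (by congr 1; ext y; ring)
  · filter_upwards [lt_mem_nhds hs] with t ht using hmeas t ht
  · have := (by fun_prop : Continuous fun y : Euc n => ‖y - x‖ ^ 2 / (2 * s ^ 2) - n / (2 * s))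
      |>.aestronglyMeasurable.mul (hmeas s hs)
    refine this.congr (Eventually.of_forall fun y => ?_)
    simp only [Pi.mul_apply]; ring
  · intro t ht
    rw [mem_ball, Real.dist_eq, abs_lt] at ht
    have ht1 : s / 2 < t := by linarith [ht.1]
    have ht2 : t < 2 * s := by linarith [ht.2]
    have ht0 : 0 < t := by linarith
    have hk := gk_le ht0 ht2 x x y
    have hq : √(2 * s / t) ^ n ≤ 2 ^ n := by
      gcongr
      rw [Real.sqrt_le_left (by norm_num), div_le_iff₀ ht0]; linarith
    simp only [sub_self, norm_zero, ne_eq, OfNat.ofNat_ne_zero, not_false_eq_true, zero_pow,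
      zero_div, Real.exp_zero, mul_one] at hk
    have hk2 : gk t (y - x) ≤ 2 ^ n * gk (2 * s) (y - x) :=
      hk.trans (mul_le_mul_of_nonneg_right hq (gk_nonneg _ _))
    have hc : |‖y - x‖ ^ 2 / (2 * t ^ 2) - n / (2 * t)| ≤ 2 / s ^ 2 * ‖y - x‖ ^ 2 + n / s := by
      have a1 : ‖y - x‖ ^ 2 / (2 * t ^ 2) ≤ 2 / s ^ 2 * ‖y - x‖ ^ 2 := by
        rw [div_mul_eq_mul_div, div_le_div_iff₀ (by positivity) (by positivity)]
        have : s ^ 2 ≤ 4 * t ^ 2 := by nlinarith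
        nlinarith [sq_nonneg ‖y - x‖, mul_le_mul_of_nonneg_left this (sq_nonneg ‖y - x‖)]
      have a2 : n / (2 * t) ≤ n / s := by gcongr; linarith
      have a3 : 0 ≤ ‖y - x‖ ^ 2 / (2 * t ^ 2) := by positivity
      have a4 : 0 ≤ n / (2 * t) := by positivity
      rw [abs_le]; constructor <;> linarith
    simp only [norm_mul, Real.norm_eq_abs, abs_mul, abs_of_nonneg (gk_nonneg _ _)]
    calc _ ≤ (2 / s ^ 2 * ‖y - x‖ ^ 2 + n / s) * (2 ^ n * gk (2 * s) (y - x)) * |f y| := by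
          have := gk_nonneg t (y - x)
          gcongr
      _ = _ := by rw [abs_of_nonneg (sq_nonneg ‖y - x‖)]; ring
  · intro t ht
    rw [mem_ball, Real.dist_eq, abs_lt] at ht
    exact (hasDerivAt_gk (by linarith [ht.1]) (y - x)).mul_const (f y)

lemma gE_radial {f : Euc n → ℝ} (hc : ContDiff ℝ 1 f) (hf : GInt f) (hd : ∀ i, GInt (pd i f))
    (x : Euc n) {s : ℝ} (hs : 0 < s) :
    ∫ y, (‖y - x‖ ^ 2 / (2 * s ^ 2) - n / (2 * s)) * f y ∂(gm x s) =
      (2 * s)⁻¹ * ∫ y, ∑ i, (y i - x i) * pd i f y ∂(gm x s) := by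
  have hX : ∀ i : Fin n, ContDiff ℝ 1 (fun y : Euc n => (y i - x i) * f y) :=
    fun i => (contDiff_coord i x).mul hc
  have hpd : ∀ y, ∑ i, pd i (fun y : Euc n => (y i - x i) * f y) y =
      n * f y + ∑ i, (y i - x i) * pd i f y := by
    intro y
    have : ∀ i : Fin n, pd i (fun y : Euc n => (y i - x i) * f y) y = f y + (y i - x i) * pd i f y := by
      intro i
      rw [pd_mul i ((contDiff_coord i x (m := 1)).differentiable (by simp) y)
        (hc.differentiable (by simp) y), pd_coord]
      simp
    simp_rw [this]
    rw [Finset.sum_add_distrib]; simp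
  have hR : GInt (fun y => ∑ i, (y i - x i) * pd i f y) :=
    GInt.sum fun i _ => (hd i).coord_mul (continuous_pd hc i) x i
  have hD : GInt (fun y => ∑ i, pd i (fun y : Euc n => (y i - x i) * f y) y) := by
    simp_rw [hpd]; exact (hf.const_mul _).add hR
  have h := gauss_div hX (fun i => hf.coord_mul hc.continuous x i) hD x hs
  simp_rw [hpd] at h
  have e : ∀ y : Euc n, ∑ i, (y i - x i) * ((y i - x i) * f y) = ‖y - x‖ ^ 2 * f y := by
    intro y; rw [← sum_coord_sq, Finset.sum_mul]; exact Finset.sum_congr rfl fun i _ => by ring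
  simp_rw [e] at h
  rw [integral_add ((hf x s hs).const_mul _) (hR x s hs), integral_const_mul] at h
  have e2 : ∀ y, (‖y - x‖ ^ 2 / (2 * s ^ 2) - n / (2 * s)) * f y =
      (2 * s)⁻¹ * (s⁻¹ * (‖y - x‖ ^ 2 * f y)) - n / (2 * s) * f y := by
    intro y; field_simp
  simp_rw [e2]
  rw [integral_sub (((hf.norm_sq_mul' x hs).const_mul _).const_mul _) ((hf x s hs).const_mul _),
    integral_const_mul, integral_const_mul, integral_const_mul, ← h]
  field_simp
  ring

lemma gE_lap {f : Euc n → ℝ} (hc : ContDiff ℝ 2 f) (hd : ∀ i, GInt (pd i f))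
    (hl : GInt (lap f)) (x : Euc n) {s : ℝ} (hs : 0 < s) :
    ∫ y, lap f y ∂(gm x s) = s⁻¹ * ∫ y, ∑ i, (y i - x i) * pd i f y ∂(gm x s) := by
  refine gauss_div (X := fun i => pd i f) (fun i => ?_) hd hl x hs
  unfold pd
  exact (hc.fderiv_right (m := 1) (by norm_num)).clm_apply contDiff_const

/-- The heat equation for Gaussian averages. -/
lemma heat_deriv {f : Euc n → ℝ} (hc : ContDiff ℝ 2 f) (hf : GInt f) (hd : ∀ i, GInt (pd i f))
    (hl : GInt (lap f)) (x : Euc n) {s : ℝ} (hs : 0 < s) :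
    HasDerivAt (fun t => ∫ y, f y ∂(gm x t)) (1 / 2 * ∫ y, lap f y ∂(gm x s)) s := by
  refine (hasDerivAt_gE hf x hs).congr_deriv ?_
  rw [gE_radial (hc.of_le (by norm_num)) hf hd x hs, gE_lap hc hd hl x hs]
  field_simp

/-- Continuous functions of polynomial growth. -/
def PG (f : Euc n → ℝ) : Prop := Continuous f ∧ ∃ (C : ℝ) (m : ℕ), ∀ y, |f y| ≤ C * (1 + ‖y‖ ^ 2) ^ m

lemma PG.gint {f : Euc n → ℝ} (hf : PG f) : GInt f := by
  obtain ⟨h, C, m, hb⟩ := hf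
  exact gint_of_growth h C m hb

lemma PG.mul {f g : Euc n → ℝ} (hf : PG f) (hg : PG g) : PG (fun y => f y * g y) := by
  obtain ⟨h, C, m, hb⟩ := hf
  obtain ⟨h', C', m', hb'⟩ := hg
  refine ⟨h.mul h', C * C', m + m', fun y => ?_⟩
  rw [abs_mul]
  calc _ ≤ (C * (1 + ‖y‖ ^ 2) ^ m) * (C' * (1 + ‖y‖ ^ 2) ^ m') :=
        mul_le_mul (hb y) (hb' y) (abs_nonneg _) ((abs_nonneg _).trans (hb y))
    _ = _ := by rw [pow_add]; ring

lemma PG.add {f g : Euc n → ℝ} (hf : PG f) (hg : PG g) : PG (fun y => f y + g y) := by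
  obtain ⟨h, C, m, hb⟩ := hf
  obtain ⟨h', C', m', hb'⟩ := hg
  refine ⟨h.add h', |C| + |C'|, m + m', fun y => (abs_add_le _ _).trans ?_⟩
  have h1 : (1 + ‖y‖ ^ 2) ^ m ≤ (1 + ‖y‖ ^ 2) ^ (m + m') :=
    pow_le_pow_right₀ (by nlinarith [sq_nonneg ‖y‖]) (by lia)
  have h2 : (1 + ‖y‖ ^ 2) ^ m' ≤ (1 + ‖y‖ ^ 2) ^ (m + m') :=
    pow_le_pow_right₀ (by nlinarith [sq_nonneg ‖y‖]) (by lia)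
  have h3 : C * (1 + ‖y‖ ^ 2) ^ m ≤ |C| * (1 + ‖y‖ ^ 2) ^ (m + m') :=
    mul_le_mul (le_abs_self _) h1 (by positivity) (abs_nonneg _)
  have h4 : C' * (1 + ‖y‖ ^ 2) ^ m' ≤ |C'| * (1 + ‖y‖ ^ 2) ^ (m + m') :=
    mul_le_mul (le_abs_self _) h2 (by positivity) (abs_nonneg _)
  linarith [hb y, hb' y]

lemma PG.const_mul {f : Euc n → ℝ} (hf : PG f) (c : ℝ) : PG (fun y => c * f y) := by
  obtain ⟨h, C, m, hb⟩ := hf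
  refine ⟨h.const_mul c, |c| * C, m, fun y => ?_⟩
  rw [abs_mul, mul_assoc]; gcongr; exact hb y

lemma PG.sub {f g : Euc n → ℝ} (hf : PG f) (hg : PG g) : PG (fun y => f y - g y) := by
  simpa [sub_eq_add_neg] using hf.add (hg.const_mul (-1))

lemma PG.sq {f : Euc n → ℝ} (hf : PG f) : PG (fun y => f y ^ 2) := by
  simpa [pow_two] using hf.mul hf

lemma integral_gm_scale (x : Euc n) {s : ℝ} (hs : 0 < s) (f : Euc n → ℝ) :
    ∫ y, f y ∂(gm x s) = ∫ ξ, f (x + √s • ξ) ∂(gm 0 1) := by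
  rw [integral_gm, integral_gm]
  have hq : 0 < √s := Real.sqrt_pos.mpr hs
  have h1 : ∫ y, gk s (y - x) * f y = ∫ y, gk s y * f (x + y) := by
    rw [← integral_sub_right_eq_self (fun y => gk s y * f (x + y)) x]
    simp
  have h2 := Measure.integral_comp_smul (volume : Measure (Euc n))
    (fun y => gk s y * f (x + y)) (√s)
  rw [h1]
  have h3 : ∀ ξ : Euc n, gk 1 (ξ - 0) * f (x + √s • ξ) =
      √s ^ n * (gk s (√s • ξ) * f (x + √s • ξ)) := by
    intro ξ
    have : gk 1 ξ = √s ^ n * gk s (√s • ξ) := by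
      unfold gk
      rw [norm_smul, mul_pow, Real.norm_of_nonneg hq.le, Real.sq_sqrt hs.le,
        Real.sqrt_mul (x := 2 * Real.pi) (by positivity) s, mul_inv, mul_pow, mul_one (2 * Real.pi)]
      have e : √s ^ n * (√s)⁻¹ ^ n = 1 := by rw [← mul_pow, mul_inv_cancel₀ hq.ne', one_pow]
      have e' : -(s * ‖ξ‖ ^ 2) / (2 * s) = -‖ξ‖ ^ 2 / (2 * 1) := by field_simp
      rw [e']
      linear_combination (-(√(2 * Real.pi))⁻¹ ^ n * Real.exp (-‖ξ‖ ^ 2 / (2 * 1))) * e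
    rw [sub_zero, this]; ring
  simp_rw [h3]
  rw [integral_const_mul, h2]
  simp only [finrank_euclideanSpace, Fintype.card_fin, smul_eq_mul]
  rw [abs_of_pos (by positivity), ← mul_assoc, mul_inv_cancel₀ (by positivity), one_mul]

/-- Gaussian averages of functions of polynomial growth depend continuously on centre and scale,
down to scale zero. -/
lemma continuous_gE {f : Euc n → ℝ} (hf : PG f) :
    Continuous (fun p : Euc n × ℝ => ∫ ξ, f (p.1 + √p.2 • ξ) ∂(gm 0 1)) := by
  obtain ⟨hc, C, m, hb⟩ := hf
  rw [continuous_iff_continuousAt]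
  intro p
  set R := ‖p.1‖ + √p.2 + 1 with hR
  have hR0 : 1 ≤ R := by have := norm_nonneg p.1; have := Real.sqrt_nonneg p.2; linarith
  refine continuousAt_of_dominated (bound := fun ξ => |C| * (3 * R ^ 2 * (1 + ‖ξ‖ ^ 2)) ^ m)
    ?_ ?_ ?_ ?_
  · exact Eventually.of_forall fun q => (hc.comp (by fun_prop)).aestronglyMeasurable
  · have h1 : ∀ᶠ q : Euc n × ℝ in 𝓝 p, ‖q.1‖ < R :=
      (continuous_fst.norm.tendsto p).eventually_lt_const (by
        have := Real.sqrt_nonneg p.2; linarith)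
    have h2 : ∀ᶠ q : Euc n × ℝ in 𝓝 p, √q.2 < R :=
      ((Real.continuous_sqrt.comp continuous_snd).tendsto p).eventually_lt_const (by
        have := norm_nonneg p.1; simp only [Function.comp]; linarith)
    filter_upwards [h1, h2] with q hq1 hq2
    refine Eventually.of_forall fun ξ => ?_
    rw [Real.norm_eq_abs]
    refine (hb _).trans ?_
    have : 1 + ‖q.1 + √q.2 • ξ‖ ^ 2 ≤ 3 * R ^ 2 * (1 + ‖ξ‖ ^ 2) := by
      have t : ‖q.1 + √q.2 • ξ‖ ≤ R + R * ‖ξ‖ := by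
        refine (norm_add_le _ _).trans (add_le_add hq1.le ?_)
        rw [norm_smul, Real.norm_of_nonneg (Real.sqrt_nonneg _)]
        gcongr
      have := pow_le_pow_left₀ (norm_nonneg _) t 2
      nlinarith [sq_nonneg (1 - ‖ξ‖), sq_nonneg R, mul_nonneg (sq_nonneg R) (sq_nonneg (1 - ‖ξ‖))]
    calc C * (1 + ‖q.1 + √q.2 • ξ‖ ^ 2) ^ m ≤ |C| * (1 + ‖q.1 + √q.2 • ξ‖ ^ 2) ^ m := by
          gcongr; exact le_abs_self C
      _ ≤ _ := by gcongr
  · exact ((gint_of_growth (by fun_prop) (|C| * (3 * R ^ 2) ^ m) m fun y => by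
      rw [abs_of_nonneg (by positivity), mul_pow]; exact le_of_eq (by ring)) 0 1 one_pos)
  · exact Eventually.of_forall fun ξ => by fun_prop

/-! ### Solutions: integrability and monotonicity -/

/-- Positive solutions of linear growth of the system. -/
structure Sol (u v : Euc n → ℝ) : Prop where
  cu : ContDiff ℝ (⊤ : ℕ∞) u
  cv : ContDiff ℝ (⊤ : ℕ∞) v
  up : ∀ x, 0 < u x
  vp : ∀ x, 0 < v x
  equ : ∀ x, lap u x = u x * v x ^ 2
  eqv : ∀ x, lap v x = v x * u x ^ 2
  growth : ∃ C₀ : ℝ, 0 < C₀ ∧ ∀ x, u x + v x ≤ C₀ * (1 + ‖x‖)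

lemma Sol.symm {u v : Euc n → ℝ} (h : Sol u v) : Sol v u :=
  ⟨h.cv, h.cu, h.vp, h.up, h.eqv, h.equ, by simpa [add_comm] using h.growth⟩

/-- The squared length of the gradient, in coordinates. -/
def gsq (f : Euc n → ℝ) (y : Euc n) : ℝ := ∑ i, pd i f y ^ 2

lemma gsq_nonneg (f : Euc n → ℝ) (y : Euc n) : 0 ≤ gsq f y :=
  Finset.sum_nonneg fun _ _ => sq_nonneg _

lemma continuous_gsq {f : Euc n → ℝ} (hf : ContDiff ℝ 1 f) : Continuous (gsq f) :=
  continuous_finsetSum _ fun i _ => (continuous_pd hf i).pow 2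

lemma pd_sq_le_gsq (f : Euc n → ℝ) (i : Fin n) (y : Euc n) : pd i f y ^ 2 ≤ gsq f y :=
  Finset.single_le_sum (f := fun i => pd i f y ^ 2) (fun _ _ => sq_nonneg _) (Finset.mem_univ i)

lemma Sol.c1 {u v : Euc n → ℝ} (h : Sol u v) : ContDiff ℝ 1 u := h.cu.of_le (by simp)

lemma Sol.diff {u v : Euc n → ℝ} (h : Sol u v) (y : Euc n) : DifferentiableAt ℝ u y :=
  h.c1.differentiable (by simp) y

lemma Sol.pg {u v : Euc n → ℝ} (h : Sol u v) : PG u := by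
  obtain ⟨C, hC, hb⟩ := h.growth
  refine ⟨h.cu.continuous, 2 * C, 1, fun y => ?_⟩
  rw [abs_of_pos (h.up y), pow_one]
  nlinarith [hb y, h.vp y, sq_nonneg (‖y‖ - 1), norm_nonneg y]

lemma PG.gint_mul_sq {f : Euc n → ℝ} (hf : PG f) : GInt (fun y => f y ^ 2) := hf.sq.gint

lemma lap_sq {u : Euc n → ℝ} (hu : ContDiff ℝ (⊤ : ℕ∞) u) (y : Euc n) :
    lap (fun z => u z ^ 2) y = 2 * gsq u y + 2 * u y * lap u y := by
  have hd : ∀ z, DifferentiableAt ℝ u z := fun z => hu.differentiable (by simp) z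
  have h1 : ∀ i : Fin n, pd i (fun z => u z ^ 2) = fun z => 2 * (u z * pd i u z) := by
    intro i; ext z; rw [pd_sq i (hd z)]; ring
  have h2 : ∀ i : Fin n, pd i (pd i (fun z => u z ^ 2)) y =
      2 * (pd i u y ^ 2) + 2 * u y * pd i (pd i u) y := by
    intro i
    have hd2 : DifferentiableAt ℝ (pd i u) y := (contDiff_pd hu i).differentiable (by simp) y
    rw [h1, pd_mul i (by fun_prop) ((hd y).fun_mul hd2), pd_const, pd_mul i (hd y) hd2]
    ring
  rw [lap_eq, lap_eq]
  simp_rw [h2]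
  rw [Finset.sum_add_distrib, ← Finset.mul_sum, ← Finset.mul_sum]; rfl

/-- Caccioppoli's inequality in Gauss space: the gradient is square integrable. -/
lemma Sol.gint_gsq {u v : Euc n → ℝ} (h : Sol u v) : GInt (gsq u) := by
  intro x s hs
  obtain ⟨L, hL, hLb⟩ := cut_pd_bound (n := n)
  have hgc := continuous_gsq h.c1
  let B : Euc n → ℝ := fun y => (‖y - x‖ ^ 2 * s⁻¹ ^ 2 + 4 * n * L ^ 2) * u y ^ 2
  have hB : GInt B := by
    have := (h.pg.sq.gint.norm_sq_mul x).const_mul (s⁻¹ ^ 2)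
    have h2 := this.add (h.pg.sq.gint.const_mul (4 * n * L ^ 2))
    convert h2 using 2
    simp only [B]; ring
  have hBi := integrable_gm_iff.mp (hB x s hs)
  let c : ℕ → Euc n → ℝ := fun N => cut ((N : ℝ) + 1)
  have hcc : ∀ N, ContDiff ℝ 1 (c N) := fun N => (contDiff_cut _).of_le (by simp)
  have hcpos : ∀ N : ℕ, (0 : ℝ) < (N : ℝ) + 1 := fun N => by positivity
  have hGc : ContDiff ℝ 1 (fun y => gk s (y - x)) := (contDiff_gk_sub x s).of_le (by simp)
  have hGn : ∀ y, 0 ≤ gk s (y - x) := fun y => gk_nonneg _ _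
  have hpu : ∀ i, ContDiff ℝ 1 (pd i u) := fun i => (contDiff_pd h.cu i).of_le (by simp)
  have hcint : ∀ N, Integrable (fun y => gk s (y - x) * (c N y ^ 2 * gsq u y)) := by
    intro N
    refine (hGc.continuous.mul (((hcc N).continuous.pow 2).mul hgc)).integrable_of_hasCompactSupport ?_
    have h1 : HasCompactSupport (fun y => c N y * c N y) := (cut_support (hcpos N)).mul_right
    have : HasCompactSupport (fun y => c N y ^ 2) := by simpa [pow_two] using h1
    exact (this.mul_right).mul_left
  have main : ∀ N : ℕ, ∫ y, gk s (y - x) * (c N y ^ 2 * gsq u y) ≤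
      2 * ∫ y, gk s (y - x) * B y := by
    intro N
    let φ : Euc n → ℝ := fun y => c N y * (c N y * gk s (y - x))
    have hφ : ContDiff ℝ 1 φ := (hcc N).mul ((hcc N).mul hGc)
    have hid := div_compact (φ := φ) (X := fun i y => u y * pd i u y) hφ
      ((cut_support (hcpos N)).mul_right) (fun i => h.c1.mul (hpu i))
    have e1 : ∀ y, φ y * ∑ i, pd i (fun y => u y * pd i u y) y =
        gk s (y - x) * (c N y ^ 2 * gsq u y) + gk s (y - x) * (c N y ^ 2 * (u y ^ 2 * v y ^ 2)) := by
      intro y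
      have : ∀ i, pd i (fun y => u y * pd i u y) y = pd i u y ^ 2 + u y * pd i (pd i u) y := by
        intro i
        rw [pd_mul i (h.diff y) ((hpu i).differentiable (by simp) y)]; ring
      simp_rw [this]
      rw [Finset.sum_add_distrib, ← Finset.mul_sum, ← lap_eq, h.equ]
      simp only [φ, gsq]; ring
    have e2 : ∀ y, -∑ i, pd i φ y * (u y * pd i u y) ≤
        1 / 2 * (gk s (y - x) * (c N y ^ 2 * gsq u y)) + gk s (y - x) * B y := by
      intro y
      have hc1 : ∀ i, pd i φ y = gk s (y - x) * (2 * c N y * pd i (c N) y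
          - c N y ^ 2 * ((y i - x i) * s⁻¹)) := by
        intro i
        have d1 := (hcc N).differentiable (by simp) y
        have d2 := hGc.differentiable (by simp) y
        rw [show φ = fun y => c N y * (c N y * gk s (y - x)) from rfl,
          pd_mul i d1 (d1.fun_mul d2), pd_mul i d1 d2, pd_gk hs]
        ring
      have hterm : ∀ i, -(pd i φ y * (u y * pd i u y)) ≤ gk s (y - x) *
          (1 / 2 * (c N y ^ 2 * pd i u y ^ 2) +
            ((y i - x i) ^ 2 * s⁻¹ ^ 2 + 4 * L ^ 2) * u y ^ 2) := by
        intro i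
        rw [hc1]
        have hci : pd i (c N) y ^ 2 ≤ L ^ 2 := by
          rw [← sq_abs]
          refine pow_le_pow_left₀ (abs_nonneg _) ((hLb _ (hcpos N) i y).trans
            (div_le_self hL.le ?_)) 2
          linarith [(Nat.cast_nonneg N : (0 : ℝ) ≤ N)]
        have hc2 : c N y ^ 2 ≤ 1 := pow_le_one₀ (cut_nonneg _ _) (cut_le_one _ _)
        have : -(gk s (y - x) * (2 * c N y * pd i (c N) y - c N y ^ 2 * ((y i - x i) * s⁻¹)) *
            (u y * pd i u y)) = gk s (y - x) * ((c N y * pd i u y) *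
              ((c N y * ((y i - x i) * s⁻¹) - 2 * pd i (c N) y) * u y)) := by ring
        rw [this]
        refine mul_le_mul_of_nonneg_left ?_ (hGn y)
        set a := c N y * pd i u y
        set q := (y i - x i) * s⁻¹
        set b := c N y * q - 2 * pd i (c N) y
        have hb2 : b ^ 2 ≤ 2 * q ^ 2 + 8 * L ^ 2 := by
          have h1 : b ^ 2 ≤ 2 * (c N y ^ 2 * q ^ 2) + 8 * pd i (c N) y ^ 2 := by
            simp only [b]; nlinarith [sq_nonneg (c N y * q + 2 * pd i (c N) y)]
          have h2 : c N y ^ 2 * q ^ 2 ≤ q ^ 2 := mul_le_of_le_one_left (sq_nonneg _) hc2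
          linarith
        have h3 : a * (b * u y) ≤ 1 / 2 * a ^ 2 + 1 / 2 * (b ^ 2 * u y ^ 2) := by
          nlinarith [sq_nonneg (a - b * u y)]
        have h4 : b ^ 2 * u y ^ 2 ≤ (2 * q ^ 2 + 8 * L ^ 2) * u y ^ 2 := by gcongr
        have h5 : a ^ 2 = c N y ^ 2 * pd i u y ^ 2 := by simp only [a]; ring
        have h6 : q ^ 2 = (y i - x i) ^ 2 * s⁻¹ ^ 2 := by simp only [q]; ring
        rw [← h5, ← h6]; linarith
      rw [← Finset.sum_neg_distrib]
      refine (Finset.sum_le_sum fun i _ => hterm i).trans (le_of_eq ?_)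
      rw [← Finset.mul_sum, Finset.sum_add_distrib, ← Finset.mul_sum, ← Finset.mul_sum,
        ← Finset.sum_mul, Finset.sum_add_distrib, ← Finset.sum_mul, sum_coord_sq]
      simp only [gsq, B, Finset.sum_const, Finset.card_univ, Fintype.card_fin, nsmul_eq_mul]
      ring
    have i1 : Integrable (fun y => gk s (y - x) * (c N y ^ 2 * (u y ^ 2 * v y ^ 2))) := by
      refine (hGc.continuous.mul (((hcc N).continuous.pow 2).mul
        ((h.cu.continuous.pow 2).mul (h.cv.continuous.pow 2)))).integrable_of_hasCompactSupport ?_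
      have h1 : HasCompactSupport (fun y => c N y * c N y) := (cut_support (hcpos N)).mul_right
      have : HasCompactSupport (fun y => c N y ^ 2) := by simpa [pow_two] using h1
      exact (this.mul_right).mul_left
    simp_rw [e1] at hid
    rw [integral_add (hcint N) i1, ← integral_neg] at hid
    have i2 : 0 ≤ ∫ y, gk s (y - x) * (c N y ^ 2 * (u y ^ 2 * v y ^ 2)) :=
      integral_nonneg fun y => mul_nonneg (hGn y) (by positivity)
    have i3 : ∫ y, -∑ i, pd i φ y * (u y * pd i u y) ≤
        ∫ y, (1 / 2 * (gk s (y - x) * (c N y ^ 2 * gsq u y)) + gk s (y - x) * B y) := by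
      refine integral_mono ?_ (((hcint N).const_mul _).add hBi) e2
      refine (integrable_finsetSum _ fun i _ => ?_).neg
      have hs' : HasCompactSupport (pd i φ) :=
        HasCompactSupport.fderiv_apply (𝕜 := ℝ) ((cut_support (hcpos N)).mul_right) _
      exact ((continuous_pd hφ i).mul (h.c1.continuous.mul
        (hpu i).continuous)).integrable_of_hasCompactSupport hs'.mul_right
    rw [integral_add ((hcint N).const_mul _) hBi, integral_const_mul] at i3
    linarith
  rw [integrable_gm_iff]
  have hcov : AECover (volume : Measure (Euc n)) atTop (fun N : ℕ => ball (0 : Euc n) N) :=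
    aecover_ball tendsto_natCast_atTop_atTop
  refine hcov.integrable_of_integral_bounded_of_nonneg_ae (2 * ∫ y, gk s (y - x) * B y)
    (fun N => ?_) (Eventually.of_forall fun y => mul_nonneg (hGn y) (gsq_nonneg u y))
    (Eventually.of_forall fun N => ?_)
  · exact ((hGc.continuous.mul hgc).continuousOn.integrableOn_compact
      (isCompact_closedBall (0 : Euc n) N)).mono_set ball_subset_closedBall
  · refine le_trans ?_ (main N)
    have : ∫ y in ball (0 : Euc n) N, gk s (y - x) * gsq u y =
        ∫ y in ball (0 : Euc n) N, gk s (y - x) * (c N y ^ 2 * gsq u y) := by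
      refine setIntegral_congr_fun measurableSet_ball fun y hy => ?_
      have : c N y = 1 := cut_eq_one (hcpos N) (by
        rw [mem_ball_zero_iff] at hy; linarith)
      simp [this]
    rw [this]
    exact setIntegral_le_integral (hcint N) (Eventually.of_forall fun y =>
      mul_nonneg (hGn y) (mul_nonneg (sq_nonneg _) (gsq_nonneg u y)))

lemma Sol.gint_pd {u v : Euc n → ℝ} (h : Sol u v) (i : Fin n) : GInt (pd i u) := by
  refine ((gint_const 1).add h.gint_gsq).mono (continuous_pd h.c1 i) fun y => ?_
  have := pd_sq_le_gsq u i y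
  nlinarith [sq_nonneg (|pd i u y| - 1), sq_abs (pd i u y)]

lemma Sol.gint_mul_pd {u v : Euc n → ℝ} (h : Sol u v) (i : Fin n) :
    GInt (fun y => u y * pd i u y) := by
  refine (h.pg.sq.gint.add h.gint_gsq).mono (h.c1.continuous.mul (continuous_pd h.c1 i))
    fun y => ?_
  have := pd_sq_le_gsq u i y
  rw [abs_mul]
  nlinarith [sq_nonneg (|pd i u y| - |u y|), sq_abs (pd i u y), sq_abs (u y),
    abs_nonneg (u y), abs_nonneg (pd i u y), sq_nonneg (pd i u y)]

/-- The mean of a function. -/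
def mU (u : Euc n → ℝ) (x : Euc n) (s : ℝ) : ℝ := ∫ y, u y ∂(gm x s)

/-- The second moment of a function. -/
def mA (u : Euc n → ℝ) (x : Euc n) (s : ℝ) : ℝ := ∫ y, u y ^ 2 ∂(gm x s)

/-- The mean Dirichlet energy density. -/
def mD (u : Euc n → ℝ) (x : Euc n) (s : ℝ) : ℝ := ∫ y, gsq u y ∂(gm x s)

/-- The mean interaction energy density. -/
def mP (u v : Euc n → ℝ) (x : Euc n) (s : ℝ) : ℝ := ∫ y, u y ^ 2 * v y ^ 2 ∂(gm x s)

lemma Sol.pgP {u v : Euc n → ℝ} (h : Sol u v) : PG (fun y => u y ^ 2 * v y ^ 2) :=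
  h.pg.sq.mul h.symm.pg.sq

lemma mP_comm (u v : Euc n → ℝ) (x : Euc n) (s : ℝ) : mP u v x s = mP v u x s := by
  unfold mP; simp_rw [mul_comm]

lemma mP_nonneg (u v : Euc n → ℝ) (x : Euc n) (s : ℝ) : 0 ≤ mP u v x s :=
  integral_nonneg fun y => by positivity

lemma mD_nonneg (u : Euc n → ℝ) (x : Euc n) (s : ℝ) : 0 ≤ mD u x s :=
  integral_nonneg (gsq_nonneg u)

lemma mA_nonneg (u : Euc n → ℝ) (x : Euc n) (s : ℝ) : 0 ≤ mA u x s :=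
  integral_nonneg fun _ => sq_nonneg _

lemma Sol.pd_sq_fun {u v : Euc n → ℝ} (h : Sol u v) (i : Fin n) :
    pd i (fun y => u y ^ 2) = fun y => 2 * (u y * pd i u y) := by
  ext y; rw [pd_sq i (h.diff y)]; ring

lemma Sol.lap_sq_eq {u v : Euc n → ℝ} (h : Sol u v) :
    lap (fun y => u y ^ 2) = fun y => 2 * (gsq u y + u y ^ 2 * v y ^ 2) := by
  ext y; rw [lap_sq h.cu, h.equ]; ring

lemma Sol.hasDerivAt_mA {u v : Euc n → ℝ} (h : Sol u v) (x : Euc n) {s : ℝ} (hs : 0 < s) :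
    HasDerivAt (mA u x) (mD u x s + mP u v x s) s := by
  have hl : GInt (lap (fun y => u y ^ 2)) := by
    rw [h.lap_sq_eq]; exact (h.gint_gsq.add h.pgP.gint).const_mul 2
  have := heat_deriv (f := fun y => u y ^ 2) (contDiff_infty.mp (h.cu.pow 2) 2) h.pg.sq.gint
    (fun i => by rw [h.pd_sq_fun]; exact (h.gint_mul_pd i).const_mul 2) hl x hs
  refine this.congr_deriv ?_
  rw [h.lap_sq_eq, integral_const_mul, integral_add (h.gint_gsq x s hs) (h.pgP.gint x s hs)]
  unfold mD mP; ring

/-- The derivative of the second moment as a radial derivative. -/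
lemma Sol.radial {u v : Euc n → ℝ} (h : Sol u v) (x : Euc n) {s : ℝ} (hs : 0 < s) :
    mD u x s + mP u v x s = s⁻¹ * ∫ y, u y * ∑ i, (y i - x i) * pd i u y ∂(gm x s) := by
  have hl : GInt (lap (fun y => u y ^ 2)) := by
    rw [h.lap_sq_eq]; exact (h.gint_gsq.add h.pgP.gint).const_mul 2
  have := gE_lap (f := fun y => u y ^ 2) (contDiff_infty.mp (h.cu.pow 2) 2)
    (fun i => by rw [h.pd_sq_fun]; exact (h.gint_mul_pd i).const_mul 2) hl x hs
  simp_rw [h.lap_sq_eq, h.pd_sq_fun] at this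
  rw [integral_const_mul, integral_add (h.gint_gsq x s hs) (h.pgP.gint x s hs)] at this
  have e : ∀ y : Euc n, ∑ i, (y i - x i) * (2 * (u y * pd i u y)) =
      2 * (u y * ∑ i, (y i - x i) * pd i u y) := by
    intro y; rw [Finset.mul_sum, Finset.mul_sum]; exact Finset.sum_congr rfl fun i _ => by ring
  simp_rw [e] at this
  rw [integral_const_mul] at this
  unfold mD mP; linarith

lemma Sol.pg_lap {u v : Euc n → ℝ} (h : Sol u v) : PG (fun y => u y * v y ^ 2) :=
  h.pg.mul h.symm.pg.sq

lemma Sol.hasDerivAt_mU {u v : Euc n → ℝ} (h : Sol u v) (x : Euc n) {s : ℝ} (hs : 0 < s) :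
    HasDerivAt (mU u x) (1 / 2 * ∫ y, u y * v y ^ 2 ∂(gm x s)) s := by
  have e : lap u = fun y => u y * v y ^ 2 := funext h.equ
  have := heat_deriv (f := u) (contDiff_infty.mp h.cu 2) h.pg.gint h.gint_pd
    (by rw [e]; exact h.pg_lap.gint) x hs
  rwa [e] at this

/-- Gaussian means with nonnegative derivative in the scale dominate the value at the centre. -/
lemma le_gE_of_deriv {f : Euc n → ℝ} (hf : PG f) (x : Euc n) {d : ℝ → ℝ}
    (hd : ∀ s, 0 < s → HasDerivAt (fun t => ∫ y, f y ∂(gm x t)) (d s) s) (hn : ∀ s, 0 < s → 0 ≤ d s)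
    {s : ℝ} (hs : 0 < s) : f x ≤ ∫ y, f y ∂(gm x s) := by
  have hmono : MonotoneOn (fun t => ∫ y, f y ∂(gm x t)) (Ioi 0) := by
    refine monotoneOn_of_deriv_nonneg (convex_Ioi 0)
      (fun t ht => (hd t ht).continuousAt.continuousWithinAt) ?_ ?_
    · rw [interior_Ioi]; exact fun t ht => (hd t ht).differentiableAt.differentiableWithinAt
    · rw [interior_Ioi]; exact fun t ht => by rw [(hd t ht).deriv]; exact hn t ht
  have hcont : Continuous (fun t : ℝ => ∫ ξ, f (x + √t • ξ) ∂(gm 0 1)) :=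
    (continuous_gE hf).comp (by fun_prop : Continuous fun t : ℝ => (x, t))
  have h0 : Tendsto (fun t : ℝ => ∫ ξ, f (x + √t • ξ) ∂(gm 0 1)) (𝓝[>] 0) (𝓝 (f x)) := by
    have := (hcont.tendsto 0).mono_left (nhdsWithin_le_nhds (s := Ioi 0))
    have hp := gm_prob (0 : Euc n) one_pos
    simpa using this
  refine le_of_tendsto h0 ?_
  filter_upwards [Ioo_mem_nhdsGT hs] with t ht
  rw [← integral_gm_scale x ht.1]
  exact hmono ht.1 hs ht.2.le

lemma Sol.le_mU {u v : Euc n → ℝ} (h : Sol u v) (x : Euc n) {s : ℝ} (hs : 0 < s) :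
    u x ≤ mU u x s :=
  le_gE_of_deriv h.pg x (fun _ hs => h.hasDerivAt_mU x hs) (fun s _ => by
    have : 0 ≤ ∫ y, u y * v y ^ 2 ∂(gm x s) :=
      integral_nonneg fun y => mul_nonneg (h.up y).le (sq_nonneg _)
    positivity) hs

lemma Sol.sq_le_mA {u v : Euc n → ℝ} (h : Sol u v) (x : Euc n) {s : ℝ} (hs : 0 < s) :
    u x ^ 2 ≤ mA u x s :=
  le_gE_of_deriv h.pg.sq x (fun _ hs => h.hasDerivAt_mA x hs) (fun s _ => by
    have := mD_nonneg u x s; have := mP_nonneg u v x s; positivity) hs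

lemma Sol.mA_pos {u v : Euc n → ℝ} (h : Sol u v) (x : Euc n) {s : ℝ} (hs : 0 < s) :
    0 < mA u x s := (pow_pos (h.up x) 2).trans_le (h.sq_le_mA x hs)

lemma Sol.mU_pos {u v : Euc n → ℝ} (h : Sol u v) (x : Euc n) {s : ℝ} (hs : 0 < s) :
    0 < mU u x s := (h.up x).trans_le (h.le_mU x hs)

lemma Sol.mA_mono {u v : Euc n → ℝ} (h : Sol u v) (x : Euc n) {s t : ℝ} (hs : 0 < s)
    (hst : s ≤ t) : mA u x s ≤ mA u x t := by
  have hmono : MonotoneOn (mA u x) (Ioi 0) := by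
    refine monotoneOn_of_deriv_nonneg (convex_Ioi 0)
      (fun t ht => (h.hasDerivAt_mA x ht).continuousAt.continuousWithinAt) ?_ ?_
    · rw [interior_Ioi]
      exact fun t ht => (h.hasDerivAt_mA x ht).differentiableAt.differentiableWithinAt
    · rw [interior_Ioi]
      intro t ht
      rw [(h.hasDerivAt_mA x ht).deriv]
      have := mD_nonneg u x t; have := mP_nonneg u v x t; positivity
  exact hmono hs (hs.trans_le hst) hst

/-! ### The Weiss-type monotonicity formula -/

/-- Gaussian Caccioppoli inequality. -/
lemma Sol.cac {u v : Euc n → ℝ} (h : Sol u v) (x : Euc n) {s : ℝ} (hs : 0 < s) :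
    s * (mD u x s + mP u v x s) ≤ √2 ^ n * mA u x (2 * s) := by
  obtain ⟨t, ht, he⟩ := exists_hasDerivAt_eq_slope (mA u x) (fun t => mD u x t + mP u v x t)
    (show s < 2 * s by linarith)
    (fun t ht => (h.hasDerivAt_mA x (hs.trans_le ht.1)).continuousAt.continuousWithinAt)
    (fun t ht => h.hasDerivAt_mA x (hs.trans ht.1))
  have ht0 : 0 < t := hs.trans ht.1
  have k := integral_gm_le hs ht.1 x x (f := fun y => gsq u y + u y ^ 2 * v y ^ 2)
    (fun y => add_nonneg (gsq_nonneg u y) (by positivity))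
    ((h.gint_gsq.add h.pgP.gint) x t ht0)
  rw [integral_add (h.gint_gsq x s hs) (h.pgP.gint x s hs),
    integral_add (h.gint_gsq x t ht0) (h.pgP.gint x t ht0)] at k
  simp only [sub_self, norm_zero, ne_eq, OfNat.ofNat_ne_zero, not_false_eq_true, zero_pow,
      zero_div, Real.exp_zero, mul_one] at k
  change mD u x s + mP u v x s ≤ √(t / s) ^ n * (mD u x t + mP u v x t) at k
  have hq : √(t / s) ^ n ≤ √2 ^ n := by
    gcongr
    rw [div_le_iff₀ hs]; exact ht.2.le
  have h0 : 0 ≤ mD u x t + mP u v x t := add_nonneg (mD_nonneg _ _ _) (mP_nonneg _ _ _ _)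
  have e : s * (mD u x t + mP u v x t) = mA u x (2 * s) - mA u x s := by
    rw [he]; field_simp; ring
  have h1 : mD u x s + mP u v x s ≤ √2 ^ n * (mD u x t + mP u v x t) :=
    k.trans (mul_le_mul_of_nonneg_right hq h0)
  calc s * (mD u x s + mP u v x s) ≤ s * (√2 ^ n * (mD u x t + mP u v x t)) := by gcongr
    _ = √2 ^ n * (mA u x (2 * s) - mA u x s) := by rw [← e]; ring
    _ ≤ _ := by
      gcongr
      linarith [mA_nonneg u x s]

/-- The radial derivative `(y - x) · ∇f(y)`. -/
def rad (x : Euc n) (f : Euc n → ℝ) (y : Euc n) : ℝ := ∑ i, (y i - x i) * pd i f y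

lemma contDiff_rad {f : Euc n → ℝ} (hf : ContDiff ℝ (⊤ : ℕ∞) f) (x : Euc n) :
    ContDiff ℝ (⊤ : ℕ∞) (rad x f) :=
  ContDiff.sum fun i _ => (contDiff_coord i x).mul (contDiff_pd hf i)

lemma rad_sq_le (x : Euc n) (f : Euc n → ℝ) (y : Euc n) :
    rad x f y ^ 2 ≤ ‖y - x‖ ^ 2 * gsq f y := by
  rw [← sum_coord_sq]
  exact Finset.sum_mul_sq_le_sq_mul_sq _ _ _

lemma pd_comm {f : Euc n → ℝ} (hf : ContDiff ℝ (⊤ : ℕ∞) f) (i j : Fin n) (y : Euc n) :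
    pd i (pd j f) y = pd j (pd i f) y := by
  have h2 : ∀ a b : Fin n, pd a (pd b f) y =
      fderiv ℝ (fderiv ℝ f) y (EuclideanSpace.single a 1) (EuclideanSpace.single b 1) := by
    intro a b
    have hd : DifferentiableAt ℝ (fderiv ℝ f) y :=
      (hf.fderiv_right (m := (⊤ : ℕ∞)) (by simp)).differentiable (by simp) y
    unfold pd
    rw [fderiv_clm_apply hd (differentiableAt_const _)]
    simp
  have hs : IsSymmSndFDerivAt ℝ f y :=
    (contDiff_infty.mp hf 2).contDiffAt.isSymmSndFDerivAt (by simp)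
  rw [h2, h2]
  exact hs.eq _ _

/-- The Pohozaev-type divergence identity. -/
lemma div_pohozaev {f : Euc n → ℝ} (hf : ContDiff ℝ (⊤ : ℕ∞) f) (x y : Euc n) :
    ∑ i, pd i (fun y => 2 * (pd i f y * rad x f y) - (y i - x i) * gsq f y) y =
      2 * (lap f y * rad x f y) + (2 - n) * gsq f y := by
  have hp : ∀ i, DifferentiableAt ℝ (pd i f) y :=
    fun i => (contDiff_pd hf i).differentiable (by simp) y
  have hr : DifferentiableAt ℝ (rad x f) y := (contDiff_rad hf x).differentiable (by simp) y
  have hg : DifferentiableAt ℝ (gsq f) y := by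
    unfold gsq
    exact DifferentiableAt.fun_sum fun i _ => (hp i).pow 2
  have hco : ∀ j : Fin n, DifferentiableAt ℝ (fun z : Euc n => z j - x j) y :=
    fun j => (contDiff_coord j x (m := 1)).differentiable (by simp) y
  have d1 : ∀ i, pd i (rad x f) y = pd i f y + ∑ j, (y j - x j) * pd i (pd j f) y := by
    intro i
    unfold rad
    rw [pd_sum i fun j _ => (hco j).fun_mul (hp j)]
    have : ∀ j : Fin n, pd i (fun z : Euc n => (z j - x j) * pd j f z) y =
        (if i = j then pd j f y else 0) + (y j - x j) * pd i (pd j f) y := by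
      intro j
      rw [pd_mul i (hco j) (hp j), pd_coord]
      split_ifs <;> ring
    simp_rw [this]
    rw [Finset.sum_add_distrib]
    simp
  have d2 : ∀ i, pd i (gsq f) y = 2 * ∑ j, pd j f y * pd i (pd j f) y := by
    intro i
    unfold gsq
    rw [pd_sum i fun j _ => (hp j).fun_pow 2, Finset.mul_sum]
    exact Finset.sum_congr rfl fun j _ => by rw [pd_sq i (hp j)]; ring
  have d3 : ∀ i, pd i (fun y => 2 * (pd i f y * rad x f y) - (y i - x i) * gsq f y) y =
      2 * (pd i (pd i f) y * rad x f y) + 2 * pd i f y ^ 2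
        + 2 * ∑ j, (y j - x j) * pd i f y * pd i (pd j f) y
        - gsq f y - 2 * ∑ j, (y i - x i) * pd j f y * pd i (pd j f) y := by
    intro i
    rw [pd_sub i ((differentiableAt_const _).fun_mul ((hp i).fun_mul hr)) ((hco i).fun_mul hg),
      pd_mul i (differentiableAt_const _) ((hp i).fun_mul hr), pd_const,
      pd_mul i (hp i) hr, pd_mul i (hco i) hg, pd_coord, d1, d2]
    have e1 : ∑ j, (y j - x j) * pd i f y * pd i (pd j f) y =
        pd i f y * ∑ j, (y j - x j) * pd i (pd j f) y := by
      rw [Finset.mul_sum]; exact Finset.sum_congr rfl fun j _ => by ring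
    have e2 : ∑ j, (y i - x i) * pd j f y * pd i (pd j f) y =
        (y i - x i) * ∑ j, pd j f y * pd i (pd j f) y := by
      rw [Finset.mul_sum]; exact Finset.sum_congr rfl fun j _ => by ring
    rw [e1, e2]
    simp only [if_true]
    ring
  simp_rw [d3]
  rw [Finset.sum_sub_distrib, Finset.sum_sub_distrib, Finset.sum_add_distrib,
    Finset.sum_add_distrib, ← Finset.mul_sum, ← Finset.mul_sum, ← Finset.mul_sum, ← Finset.mul_sum,
    ← Finset.sum_mul, ← lap_eq]
  have sw : ∑ i, ∑ j, (y j - x j) * pd i f y * pd i (pd j f) y =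
      ∑ i, ∑ j, (y i - x i) * pd j f y * pd i (pd j f) y := by
    rw [Finset.sum_comm]
    exact Finset.sum_congr rfl fun i _ => Finset.sum_congr rfl fun j _ => by rw [pd_comm hf]
  rw [sw]
  simp only [Finset.sum_const, Finset.card_univ, Fintype.card_fin, nsmul_eq_mul]
  change 2 * (lap f y * rad x f y) + 2 * gsq f y + _ - _ - _ = _
  ring

lemma Sol.continuous_rad {u v : Euc n → ℝ} (h : Sol u v) (x : Euc n) : Continuous (rad x u) :=
  (contDiff_rad h.cu x).continuous

lemma Sol.gint_rad_sq {u v : Euc n → ℝ} (h : Sol u v) (x : Euc n) :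
    GInt (fun y => rad x u y ^ 2) := by
  refine (h.gint_gsq.norm_sq_mul x).mono ((h.continuous_rad x).pow 2) fun y => ?_
  rw [abs_of_nonneg (sq_nonneg _)]
  exact rad_sq_le x u y

lemma GInt.mul_of_sq {f g : Euc n → ℝ} (hf : GInt (fun y => f y ^ 2)) (hg : GInt (fun y => g y ^ 2))
    (cf : Continuous f) (cg : Continuous g) : GInt (fun y => f y * g y) := by
  refine (hf.add hg).mono (cf.mul cg) fun y => ?_
  rw [abs_mul]
  nlinarith [sq_nonneg (|f y| - |g y|), sq_abs (f y), sq_abs (g y), abs_nonneg (f y),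
    abs_nonneg (g y), sq_nonneg (f y), sq_nonneg (g y)]

/-- Derivative of the Dirichlet energy with respect to the scale. -/
lemma Sol.hasDerivAt_mD {u v : Euc n → ℝ} (h : Sol u v) (x : Euc n) {s : ℝ} (hs : 0 < s) :
    HasDerivAt (mD u x) (s⁻¹ ^ 2 * (∫ y, rad x u y ^ 2 ∂(gm x s))
      - s⁻¹ * (∫ y, u y * v y ^ 2 * rad x u y ∂(gm x s)) - s⁻¹ * mD u x s) s := by
  refine (hasDerivAt_gE h.gint_gsq x hs).congr_deriv ?_
  have hpu : ∀ i, ContDiff ℝ (⊤ : ℕ∞) (pd i u) := fun i => contDiff_pd h.cu i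
  have hgq : ContDiff ℝ (⊤ : ℕ∞) (gsq u) := ContDiff.sum fun i _ => (hpu i).pow 2
  have i1 : GInt (fun y => u y * v y ^ 2 * rad x u y) :=
    h.pg_lap.sq.gint.mul_of_sq (h.gint_rad_sq x) h.pg_lap.1 (h.continuous_rad x)
  have hpi : ∀ i, GInt (fun y => pd i u y ^ 2) := fun i =>
    h.gint_gsq.mono ((hpu i).continuous.pow 2) fun y => by
      rw [abs_of_nonneg (sq_nonneg _)]; exact pd_sq_le_gsq u i y
  have hX : ∀ i : Fin n, ContDiff ℝ 1
      (fun y : Euc n => 2 * (pd i u y * rad x u y) - (y i - x i) * gsq u y) := by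
    intro i
    refine ((contDiff_const.mul ((hpu i).mul (contDiff_rad h.cu x))).sub
      ((contDiff_coord i x).mul hgq)).of_le (by simp)
  have hI : ∀ i : Fin n, GInt
      (fun y : Euc n => 2 * (pd i u y * rad x u y) - (y i - x i) * gsq u y) := fun i =>
    (((hpi i).mul_of_sq (h.gint_rad_sq x) (hpu i).continuous (h.continuous_rad x)).const_mul 2).sub
      (h.gint_gsq.coord_mul hgq.continuous x i)
  have hdiv : (fun y => ∑ i, pd i (fun y => 2 * (pd i u y * rad x u y)
      - (y i - x i) * gsq u y) y) = fun y => 2 * (u y * v y ^ 2 * rad x u y) + (2 - n) * gsq u y := by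
    ext y; rw [div_pohozaev h.cu, h.equ]
  have hD : GInt (fun y => ∑ i, pd i (fun y => 2 * (pd i u y * rad x u y)
      - (y i - x i) * gsq u y) y) := by
    rw [hdiv]; exact (i1.const_mul 2).add (h.gint_gsq.const_mul _)
  have key := gauss_div hX hI hD x hs
  rw [hdiv, integral_add ((i1 x s hs).const_mul 2) ((h.gint_gsq x s hs).const_mul _),
    integral_const_mul, integral_const_mul] at key
  have e : ∀ y : Euc n, ∑ i, (y i - x i) * (2 * (pd i u y * rad x u y) - (y i - x i) * gsq u y) =
      2 * rad x u y ^ 2 - ‖y - x‖ ^ 2 * gsq u y := by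
    intro y
    have : ∀ i, (y i - x i) * (2 * (pd i u y * rad x u y) - (y i - x i) * gsq u y) =
      2 * rad x u y * ((y i - x i) * pd i u y) - (y i - x i) ^ 2 * gsq u y := fun i => by ring
    simp_rw [this]
    rw [Finset.sum_sub_distrib, ← Finset.mul_sum, ← Finset.sum_mul, sum_coord_sq]
    change 2 * rad x u y * rad x u y - _ = _
    ring
  have i2 := h.gint_gsq.norm_sq_mul' x hs
  simp_rw [e] at key
  rw [integral_sub ((h.gint_rad_sq x x s hs).const_mul 2) i2, integral_const_mul] at key
  have e2 : ∀ y, (‖y - x‖ ^ 2 / (2 * s ^ 2) - n / (2 * s)) * gsq u y =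
      (2 * s)⁻¹ * (s⁻¹ * (‖y - x‖ ^ 2 * gsq u y)) - n / (2 * s) * gsq u y := by
    intro y; field_simp
  simp_rw [e2]
  rw [integral_sub ((i2.const_mul _).const_mul _) ((h.gint_gsq x s hs).const_mul _),
    integral_const_mul, integral_const_mul, integral_const_mul]
  unfold mD
  set a := ∫ y, ‖y - x‖ ^ 2 * gsq u y ∂(gm x s)
  set b := ∫ y, rad x u y ^ 2 ∂(gm x s)
  set c := ∫ y, u y * v y ^ 2 * rad x u y ∂(gm x s)
  set d := ∫ y, gsq u y ∂(gm x s)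
  have : s⁻¹ * a = s⁻¹ * (2 * b) - (2 * c + (2 - n) * d) := by rw [key]; ring
  rw [this]
  field_simp
  ring

lemma Sol.hasDerivAt_mP {u v : Euc n → ℝ} (h : Sol u v) (x : Euc n) {s : ℝ} (hs : 0 < s) :
    HasDerivAt (mP u v x) (s⁻¹ * (∫ y, u y * v y ^ 2 * rad x u y ∂(gm x s))
      + s⁻¹ * (∫ y, v y * u y ^ 2 * rad x v y ∂(gm x s))) s := by
  have hc : ContDiff ℝ 1 (fun y => u y ^ 2 * v y ^ 2) := (h.c1.pow 2).mul (h.symm.c1.pow 2)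
  have hpd : ∀ i, pd i (fun y => u y ^ 2 * v y ^ 2) =
      fun y => 2 * (u y * v y ^ 2 * pd i u y) + 2 * (v y * u y ^ 2 * pd i v y) := by
    intro i; ext y
    rw [pd_mul i ((h.diff y).fun_pow 2) ((h.symm.diff y).fun_pow 2), pd_sq i (h.diff y),
      pd_sq i (h.symm.diff y)]
    ring
  have hp2 : ∀ {u v : Euc n → ℝ}, Sol u v → ∀ i, GInt (fun y => u y * v y ^ 2 * pd i u y) := by
    intro u v h i
    refine h.pg_lap.sq.gint.mul_of_sq (h.gint_gsq.mono ((continuous_pd h.c1 i).pow 2) fun y => ?_)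
      h.pg_lap.1 (continuous_pd h.c1 i)
    rw [abs_of_nonneg (sq_nonneg _)]; exact pd_sq_le_gsq u i y
  have hd : ∀ i, GInt (pd i (fun y => u y ^ 2 * v y ^ 2)) := by
    intro i
    rw [hpd]
    exact ((hp2 h i).const_mul 2).add ((hp2 h.symm i).const_mul 2)
  have i1 : ∀ {u v : Euc n → ℝ}, Sol u v → GInt (fun y => u y * v y ^ 2 * rad x u y) :=
    fun h => h.pg_lap.sq.gint.mul_of_sq (h.gint_rad_sq x) h.pg_lap.1 (h.continuous_rad x)
  refine (hasDerivAt_gE h.pgP.gint x hs).congr_deriv ?_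
  rw [gE_radial hc h.pgP.gint hd x hs]
  have e : ∀ y : Euc n, ∑ i, (y i - x i) * pd i (fun y => u y ^ 2 * v y ^ 2) y =
      2 * (u y * v y ^ 2 * rad x u y) + 2 * (v y * u y ^ 2 * rad x v y) := by
    intro y
    have : ∀ i, (y i - x i) * pd i (fun y => u y ^ 2 * v y ^ 2) y =
        2 * (u y * v y ^ 2) * ((y i - x i) * pd i u y)
        + 2 * (v y * u y ^ 2) * ((y i - x i) * pd i v y) := by
      intro i; rw [hpd]; ring
    simp_rw [this]
    rw [Finset.sum_add_distrib, ← Finset.mul_sum, ← Finset.mul_sum]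
    unfold rad; ring
  simp_rw [e]
  rw [integral_add ((i1 h x s hs).const_mul 2) ((i1 h.symm x s hs).const_mul 2),
    integral_const_mul, integral_const_mul]
  field_simp

/-- The total second moment. -/
def mH (u v : Euc n → ℝ) (x : Euc n) (s : ℝ) : ℝ := mA u x s + mA v x s

/-- The Weiss-type energy for homogeneity one; it is nondecreasing in the scale. -/
def mW (u v : Euc n → ℝ) (x : Euc n) (s : ℝ) : ℝ :=
  mD u x s + mD v x s + mP u v x s - s⁻¹ * mH u v x s

lemma mH_comm (u v : Euc n → ℝ) (x : Euc n) (s : ℝ) : mH u v x s = mH v u x s := add_comm _ _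

lemma Sol.int_rad_sub {u v : Euc n → ℝ} (h : Sol u v) (x : Euc n) {s : ℝ} (hs : 0 < s) :
    ∫ y, (rad x u y - u y) ^ 2 ∂(gm x s) = (∫ y, rad x u y ^ 2 ∂(gm x s))
      - 2 * (s * (mD u x s + mP u v x s)) + mA u x s := by
  have e : ∀ y, (rad x u y - u y) ^ 2 = rad x u y ^ 2 - 2 * (u y * rad x u y) + u y ^ 2 :=
    fun y => by ring
  have i2 : GInt (fun y => u y * rad x u y) :=
    h.pg.sq.gint.mul_of_sq (h.gint_rad_sq x) h.pg.1 (h.continuous_rad x)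
  simp_rw [e]
  rw [integral_add (((h.gint_rad_sq x).sub (i2.const_mul 2)) x s hs) (h.pg.sq.gint x s hs),
    integral_sub (h.gint_rad_sq x x s hs) ((i2 x s hs).const_mul 2), integral_const_mul,
    h.radial x hs]
  unfold mA
  have : ∫ y, u y * rad x u y ∂(gm x s) =
    s * (s⁻¹ * ∫ y, u y * ∑ i, (y i - x i) * pd i u y ∂(gm x s)) := by
    rw [← mul_assoc, mul_inv_cancel₀ hs.ne', one_mul]; rfl
  rw [this]

lemma Sol.hasDerivAt_mH {u v : Euc n → ℝ} (h : Sol u v) (x : Euc n) {s : ℝ} (hs : 0 < s) :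
    HasDerivAt (mH u v x) (mD u x s + mD v x s + 2 * mP u v x s) s := by
  refine ((h.hasDerivAt_mA x hs).add (h.symm.hasDerivAt_mA x hs)).congr_deriv ?_
  rw [mP_comm v u]; ring

lemma Sol.hasDerivAt_mW {u v : Euc n → ℝ} (h : Sol u v) (x : Euc n) {s : ℝ} (hs : 0 < s) :
    HasDerivAt (mW u v x) (s⁻¹ ^ 2 * ((∫ y, (rad x u y - u y) ^ 2 ∂(gm x s))
      + ∫ y, (rad x v y - v y) ^ 2 ∂(gm x s)) + 2 * s⁻¹ * mP u v x s) s := by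
  have h1 := ((h.hasDerivAt_mD x hs).add (h.symm.hasDerivAt_mD x hs)).add (h.hasDerivAt_mP x hs)
  have h2 := (hasDerivAt_inv hs.ne').mul (h.hasDerivAt_mH x hs)
  refine (h1.sub h2).congr_deriv ?_
  rw [h.int_rad_sub x hs, h.symm.int_rad_sub x hs, mP_comm v u]
  unfold mH
  field_simp
  ring

lemma Sol.mW_mono {u v : Euc n → ℝ} (h : Sol u v) (x : Euc n) {s t : ℝ} (hs : 0 < s)
    (hst : s ≤ t) : mW u v x s ≤ mW u v x t := by
  have hmono : MonotoneOn (mW u v x) (Ioi 0) := by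
    refine monotoneOn_of_deriv_nonneg (convex_Ioi 0)
      (fun t ht => (h.hasDerivAt_mW x ht).continuousAt.continuousWithinAt) ?_ ?_
    · rw [interior_Ioi]
      exact fun t ht => (h.hasDerivAt_mW x ht).differentiableAt.differentiableWithinAt
    · rw [interior_Ioi]
      intro t ht
      rw [(h.hasDerivAt_mW x ht).deriv]
      have := mP_nonneg u v x t
      have ht' : (0 : ℝ) < t := ht
      have h1 : 0 ≤ ∫ y, (rad x u y - u y) ^ 2 ∂(gm x t) := integral_nonneg fun _ => sq_nonneg _
      have h2 : 0 ≤ ∫ y, (rad x v y - v y) ^ 2 ∂(gm x t) := integral_nonneg fun _ => sq_nonneg _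
      positivity
  exact hmono hs (hs.trans_le hst) hst

lemma second_moment (x : Euc n) {s : ℝ} (hs : 0 < s) :
    ∫ y, ‖y - x‖ ^ 2 ∂(gm x s) = n * s := by
  have h1 : ∀ i : Fin n, pd i (fun _ : Euc n => (1 : ℝ)) = fun _ => 0 := fun i => by
    ext y; exact pd_const i 1 y
  have := gE_radial (f := fun _ : Euc n => (1 : ℝ)) contDiff_const (gint_const 1)
    (fun i => by rw [h1]; exact gint_const 0) x hs
  simp_rw [h1] at this
  have hp := gm_prob x hs
  have hi : Integrable (fun y => ‖y - x‖ ^ 2) (gm x s) := by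
    simpa using (gint_const (n := n) 1).norm_sq_mul' x hs
  simp only [mul_one, mul_zero, Finset.sum_const_zero, integral_zero] at this
  rw [integral_sub (hi.div_const _) (integrable_const _), integral_div, integral_const] at this
  simp at this
  field_simp at this
  linarith

/-- Linear growth of the solutions, seen through Gaussian averages. -/
lemma Sol.mA_growth {u v : Euc n → ℝ} (h : Sol u v) :
    ∃ B : ℝ, 0 < B ∧ ∀ (x : Euc n) (s : ℝ), 0 < s → mA u x s ≤ B * (1 + ‖x‖ ^ 2 + s) := by
  obtain ⟨C, hC, hb⟩ := h.growth
  refine ⟨C ^ 2 * (4 + 4 * n), by positivity, fun x s hs => ?_⟩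
  have hp := gm_prob x hs
  have hi : Integrable (fun y => ‖y - x‖ ^ 2) (gm x s) := by
    simpa using (gint_const (n := n) 1).norm_sq_mul' x hs
  have h1 : mA u x s ≤ ∫ y, (C ^ 2 * (2 + 4 * ‖x‖ ^ 2) + C ^ 2 * 4 * ‖y - x‖ ^ 2) ∂(gm x s) := by
    refine integral_mono (h.pg.sq.gint x s hs) ((integrable_const _).add (hi.const_mul _))
      fun y => ?_
    have a1 : u y ≤ C * (1 + ‖y‖) := by linarith [hb y, h.vp y]
    have a2 : u y ^ 2 ≤ (C * (1 + ‖y‖)) ^ 2 := pow_le_pow_left₀ (h.up y).le a1 2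
    have a3 : ‖y‖ ≤ ‖y - x‖ + ‖x‖ := by
      have := norm_add_le (y - x) x; simpa using this
    have a4 : (1 + ‖y‖) ^ 2 ≤ 2 + 4 * ‖x‖ ^ 2 + 4 * ‖y - x‖ ^ 2 := by
      have : ‖y‖ ^ 2 ≤ (‖y - x‖ + ‖x‖) ^ 2 := pow_le_pow_left₀ (norm_nonneg _) a3 2
      nlinarith [sq_nonneg (1 - ‖y‖), sq_nonneg (‖y - x‖ - ‖x‖)]
    simp only []
    nlinarith [sq_nonneg C]
  rw [integral_add (integrable_const _) (hi.const_mul _), integral_const, integral_const_mul,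
    second_moment x hs] at h1
  simp only [probReal_univ, one_smul] at h1
  refine h1.trans ?_
  have : 0 ≤ C ^ 2 * (n * (4 + 4 * ‖x‖ ^ 2) + 2 + 4 * s) := by positivity
  nlinarith

/-- The energy bound at every centre and scale: `mW` is nondecreasing in the scale, and a positive
value would contradict the linear growth of `u` and `v`. -/
lemma Sol.mW_nonpos {u v : Euc n → ℝ} (h : Sol u v) (x : Euc n) {s : ℝ} (hs : 0 < s) :
    mW u v x s ≤ 0 := by
  by_contra! hw
  set w := mW u v x s with hwd
  obtain ⟨B, hB, hb⟩ := h.mA_growth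
  obtain ⟨B', hB', hb'⟩ := h.symm.mA_growth
  have hd : ∀ t, 0 < t → HasDerivAt (fun t => t⁻¹ * mH u v x t - w * Real.log t)
      (t⁻¹ * (mW u v x t + mP u v x t - w)) t := by
    intro t ht
    refine (((hasDerivAt_inv ht.ne').mul (h.hasDerivAt_mH x ht)).sub
      ((Real.hasDerivAt_log ht.ne').const_mul w)).congr_deriv ?_
    unfold mW
    field_simp
    ring
  have hmono : MonotoneOn (fun t => t⁻¹ * mH u v x t - w * Real.log t) (Ici s) := by
    refine monotoneOn_of_deriv_nonneg (convex_Ici s)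
      (fun t ht => (hd t (hs.trans_le ht)).continuousAt.continuousWithinAt) ?_ ?_
    · rw [interior_Ici]
      exact fun t ht => (hd t (hs.trans ht)).differentiableAt.differentiableWithinAt
    · rw [interior_Ici]
      intro t ht
      have ht0 : 0 < t := hs.trans ht
      rw [(hd t ht0).deriv]
      have := h.mW_mono x hs (le_of_lt ht)
      have := mP_nonneg u v x t
      exact mul_nonneg (by positivity) (by linarith)
  have hlim : Tendsto (fun t => w * Real.log t) atTop atTop :=
    Real.tendsto_log_atTop.const_mul_atTop hw
  obtain ⟨t, ht⟩ := (hlim.eventually_gt_atTop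
    ((B + B') * (2 + ‖x‖ ^ 2) - (s⁻¹ * mH u v x s - w * Real.log s))).and
    (eventually_ge_atTop (max s 1)) |>.exists
  have hts : s ≤ t := (le_max_left _ _).trans ht.2
  have ht1 : 1 ≤ t := (le_max_right _ _).trans ht.2
  have ht0 : 0 < t := by linarith
  have h1 := hmono (mem_Ici.mpr le_rfl) (mem_Ici.mpr hts) hts
  have h2 : t⁻¹ * mH u v x t ≤ (B + B') * (2 + ‖x‖ ^ 2) := by
    rw [inv_mul_le_iff₀ ht0]
    have h3 : mH u v x t ≤ (B + B') * (1 + ‖x‖ ^ 2 + t) := by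
      unfold mH; linarith [hb x t ht0, hb' x t ht0]
    refine h3.trans ?_
    have : 1 + ‖x‖ ^ 2 + t ≤ t * (2 + ‖x‖ ^ 2) := by nlinarith [sq_nonneg ‖x‖]
    calc _ ≤ (B + B') * (t * (2 + ‖x‖ ^ 2)) := by gcongr
      _ = _ := by ring
  simp only [] at h1
  linarith [ht.1]

lemma Sol.energy_le {u v : Euc n → ℝ} (h : Sol u v) (x : Euc n) {s : ℝ} (hs : 0 < s) :
    s * (mD u x s + mD v x s + mP u v x s) ≤ mH u v x s := by
  have := h.mW_nonpos x hs
  unfold mW at this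
  rw [sub_nonpos, ← div_eq_inv_mul, le_div_iff₀ hs] at this
  linarith

lemma Sol.mH_pos {u v : Euc n → ℝ} (h : Sol u v) (x : Euc n) {s : ℝ} (hs : 0 < s) :
    0 < mH u v x s := add_pos (h.mA_pos x hs) (h.symm.mA_pos x hs)

lemma Sol.mH_mono {u v : Euc n → ℝ} (h : Sol u v) (x : Euc n) {s t : ℝ} (hs : 0 < s)
    (hst : s ≤ t) : mH u v x s ≤ mH u v x t :=
  add_le_add (h.mA_mono x hs hst) (h.symm.mA_mono x hs hst)

/-- `mH` grows at most quadratically in the scale: by the energy bound, `(t ^ 2)⁻¹ * mH` is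
nonincreasing. -/
lemma Sol.mH_doubling {u v : Euc n → ℝ} (h : Sol u v) (x : Euc n) {s t : ℝ} (hs : 0 < s)
    (hst : s ≤ t) : mH u v x t ≤ (t / s) ^ 2 * mH u v x s := by
  have hd : ∀ t, 0 < t → HasDerivAt (fun t => (t ^ 2)⁻¹ * mH u v x t)
      ((t ^ 3)⁻¹ * (t * (mD u x t + mD v x t + 2 * mP u v x t) - 2 * mH u v x t)) t := by
    intro t ht
    refine ((((hasDerivAt_id t).fun_pow 2).fun_inv (by positivity)).mul
      (h.hasDerivAt_mH x ht)).congr_deriv ?_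
    simp
    field_simp
    ring
  have hanti : AntitoneOn (fun t => (t ^ 2)⁻¹ * mH u v x t) (Ioi 0) := by
    refine antitoneOn_of_deriv_nonpos (convex_Ioi 0)
      (fun t ht => (hd t ht).continuousAt.continuousWithinAt) ?_ ?_
    · rw [interior_Ioi]
      exact fun t ht => (hd t ht).differentiableAt.differentiableWithinAt
    · rw [interior_Ioi]
      intro t ht
      have ht0 : (0 : ℝ) < t := ht
      rw [(hd t ht0).deriv]
      have h1 := h.energy_le x ht0
      have h2 := mul_nonneg ht0.le (mD_nonneg u x t)
      have h3 := mul_nonneg ht0.le (mD_nonneg v x t)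
      refine mul_nonpos_of_nonneg_of_nonpos (by positivity) ?_
      have h4 := mul_nonneg ht0.le (mP_nonneg u v x t)
      nlinarith
  have ht0 := hs.trans_le hst
  have := hanti (mem_Ioi.mpr hs) (mem_Ioi.mpr ht0) hst
  simp only [] at this
  rw [inv_mul_le_iff₀ (by positivity)] at this
  refine this.trans (le_of_eq ?_)
  field_simp

/-! ### The Gaussian Poincaré inequality with its second spectral gap -/

/-- Smooth compactly supported functions. -/
structure TF (g : Euc n → ℝ) : Prop where
  smooth : ContDiff ℝ (⊤ : ℕ∞) g
  supp : HasCompactSupport g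

lemma TF.pd {g : Euc n → ℝ} (hg : TF g) (i : Fin n) : TF (pd i g) :=
  ⟨contDiff_pd hg.smooth i, by
    unfold ExcessDecay.pd
    exact hg.supp.fderiv_apply ℝ _⟩

lemma TF.bound {g : Euc n → ℝ} (hg : TF g) : ∃ M : ℝ, 0 ≤ M ∧ ∀ y, |g y| ≤ M := by
  obtain ⟨M, hM⟩ := hg.supp.exists_bound_of_continuous hg.smooth.continuous
  exact ⟨M, (norm_nonneg _).trans (hM 0), hM⟩

lemma pg_of_bound {g : Euc n → ℝ} (hg : Continuous g) {M : ℝ} (h : ∀ y, |g y| ≤ M) : PG g :=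
  ⟨hg, M, 0, by simpa using h⟩

lemma TF.pg {g : Euc n → ℝ} (hg : TF g) : PG g := by
  obtain ⟨M, -, hM⟩ := hg.bound
  exact pg_of_bound hg.smooth.continuous hM

lemma TF.sum {ι : Type*} {t : Finset ι} {f : ι → Euc n → ℝ} (hf : ∀ i ∈ t, TF (f i)) :
    TF (fun y => ∑ i ∈ t, f i y) := by
  refine ⟨ContDiff.sum fun i hi => (hf i hi).smooth, ?_⟩
  classical
  induction t using Finset.induction_on with
  | empty => simp only [Finset.sum_empty]; exact HasCompactSupport.zero
  | insert a t ha ih =>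
    have := (hf a (Finset.mem_insert_self a t)).supp.add
      (ih fun i hi => hf i (Finset.mem_insert_of_mem hi))
    simp only [Finset.sum_insert ha]
    exact this

lemma TF.lap {g : Euc n → ℝ} (hg : TF g) : TF (lap g) :=
  TF.sum fun i _ => (hg.pd i).pd i

/-- The heat semigroup `E g(y + √t ξ)`, normalised to make sense at `t = 0`. -/
def hh (g : Euc n → ℝ) (y : Euc n) (t : ℝ) : ℝ := ∫ ξ, g (y + √t • ξ) ∂(gm 0 1)

lemma hh_eq (g : Euc n → ℝ) (y : Euc n) {t : ℝ} (ht : 0 < t) : hh g y t = ∫ z, g z ∂(gm y t) :=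
  (integral_gm_scale y ht g).symm

lemma continuous_hh {g : Euc n → ℝ} (hg : PG g) : Continuous (fun p : Euc n × ℝ => hh g p.1 p.2) :=
  continuous_gE hg

lemma abs_hh_le {g : Euc n → ℝ} {M : ℝ} (hM : ∀ y, |g y| ≤ M) (y : Euc n) (t : ℝ) :
    |hh g y t| ≤ M := by
  have := gm_prob (0 : Euc n) one_pos
  have h := norm_integral_le_of_norm_le_const (μ := gm (0 : Euc n) 1)
    (Eventually.of_forall fun ξ => (Real.norm_eq_abs _).trans_le (hM (y + √t • ξ)))
  unfold hh
  simpa using h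

lemma pd_hh {g : Euc n → ℝ} (hg : TF g) (i : Fin n) (t : ℝ) (y : Euc n) :
    pd i (fun z => hh g z t) y = hh (pd i g) y t := by
  have := gm_prob (0 : Euc n) one_pos
  have hc := hg.smooth.continuous_fderiv (by simp)
  obtain ⟨M, hM⟩ := (hg.supp.fderiv (𝕜 := ℝ)).exists_bound_of_continuous hc
  have hcomp : ∀ z : Euc n, Continuous fun ξ : Euc n => z + √t • ξ := fun z => by fun_prop
  have hmeas : AEStronglyMeasurable (fun ξ : Euc n => fderiv ℝ g (y + √t • ξ)) (gm 0 1) :=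
    (hc.comp (hcomp y)).aestronglyMeasurable
  have hint : Integrable (fun ξ : Euc n => fderiv ℝ g (y + √t • ξ)) (gm 0 1) :=
    (integrable_const M).mono' hmeas (Eventually.of_forall fun ξ => hM _)
  have h := hasFDerivAt_integral_of_dominated_of_fderiv_le (𝕜 := ℝ) (μ := gm (0 : Euc n) 1)
    (F := fun z ξ => g (z + √t • ξ)) (F' := fun z ξ => fderiv ℝ g (z + √t • ξ)) (s := univ)
    (x₀ := y) (bound := fun _ => M) univ_mem
    (Eventually.of_forall fun z => (hg.smooth.continuous.comp (hcomp z)).aestronglyMeasurable)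
    ?_ hmeas (Eventually.of_forall fun ξ z _ => hM _) (integrable_const M)
    (Eventually.of_forall fun ξ z _ => ?_)
  · unfold pd hh
    rw [h.fderiv, ContinuousLinearMap.integral_apply hint]
  · obtain ⟨M', -, hM'⟩ := hg.bound
    exact (integrable_const M').mono' (hg.smooth.continuous.comp (hcomp y)).aestronglyMeasurable
      (Eventually.of_forall fun ξ => hM' _)
  · have hd := (hg.smooth.differentiable (by simp) (z + √t • ξ)).hasFDerivAt
    exact (hd.comp z ((hasFDerivAt_id z).add_const (√t • ξ))).congr_fderiv (by simp)

lemma contDiff_hh {g : Euc n → ℝ} (hg : TF g) {t : ℝ} (ht : 0 < t) :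
    ContDiff ℝ (⊤ : ℕ∞) (fun z => hh g z t) := by
  have h := hg.supp.contDiff_convolution_right (n := ⊤) (ContinuousLinearMap.mul ℝ ℝ)
    (μ := (volume : Measure (Euc n)))
    (integrable_gk ht).locallyIntegrable hg.smooth
  convert h using 1
  ext y
  rw [hh_eq g y ht, integral_gm, convolution_def]
  simp only [ContinuousLinearMap.mul_apply']
  rw [← integral_sub_left_eq_self (fun ξ => gk t ξ * g (y - ξ)) volume y]
  congr 1
  ext z
  have : gk t (z - y) = gk t (y - z) := by unfold gk; rw [norm_sub_rev]
  rw [this]; simp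

lemma hasDerivAt_hh {g : Euc n → ℝ} (hg : TF g) (y : Euc n) {t : ℝ} (ht : 0 < t) :
    HasDerivAt (fun t => hh g y t) (1 / 2 * hh (lap g) y t) t := by
  have h := heat_deriv (contDiff_infty.mp hg.smooth 2) hg.pg.gint (fun i => (hg.pd i).pg.gint)
    hg.lap.pg.gint y ht
  rw [hh_eq _ y ht]
  refine h.congr_of_eventuallyEq ?_
  filter_upwards [lt_mem_nhds ht] with r hr using hh_eq g y hr

lemma lap_hh {g : Euc n → ℝ} (hg : TF g) (t : ℝ) (y : Euc n) :
    lap (fun z => hh g z t) y = hh (lap g) y t := by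
  have := gm_prob (0 : Euc n) one_pos
  rw [lap_eq]
  have e : ∀ i : Fin n, pd i (fun z => hh g z t) = fun z => hh (pd i g) z t :=
    fun i => funext (pd_hh hg i t)
  simp_rw [e, pd_hh (hg.pd _)]
  unfold hh
  rw [← integral_finsetSum]
  · simp_rw [lap_eq]
  · intro i _
    obtain ⟨M', -, hM'⟩ := ((hg.pd i).pd i).bound
    exact (integrable_const M').mono' (((hg.pd i).pd i).smooth.continuous.comp
      (by fun_prop)).aestronglyMeasurable (Eventually.of_forall fun ξ => hM' _)

/-- The interpolation between `(E g)²` (at `c = 0`) and `E g²` (at `c = s`). -/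
def KK (g : Euc n → ℝ) (x : Euc n) (s c : ℝ) : ℝ := ∫ ξ, hh g (x + √c • ξ) (s - c) ^ 2 ∂(gm 0 1)

lemma KK_nonneg (g : Euc n → ℝ) (x : Euc n) (s c : ℝ) : 0 ≤ KK g x s c :=
  integral_nonneg fun _ => sq_nonneg _

lemma continuous_KK {g : Euc n → ℝ} (hg : TF g) (x : Euc n) (s : ℝ) : Continuous (KK g x s) := by
  have := gm_prob (0 : Euc n) one_pos
  obtain ⟨M, hM0, hM⟩ := hg.bound
  have hc := continuous_hh hg.pg
  refine continuous_of_dominated (bound := fun _ => M ^ 2) (fun c => ?_) (fun c => ?_)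
    (integrable_const _) ?_
  · exact ((hc.comp (by fun_prop : Continuous fun ξ : Euc n =>
      ((x + √c • ξ, s - c) : Euc n × ℝ))).pow 2).aestronglyMeasurable
  · refine Eventually.of_forall fun ξ => ?_
    rw [Real.norm_eq_abs, abs_pow]
    exact pow_le_pow_left₀ (abs_nonneg _) (abs_hh_le hM _ _) 2
  · refine Eventually.of_forall fun ξ => ?_
    exact (hc.comp (by fun_prop : Continuous fun c : ℝ =>
      ((x + √c • ξ, s - c) : Euc n × ℝ))).pow 2

lemma KK_eq (g : Euc n → ℝ) (x : Euc n) (s : ℝ) {c : ℝ} (hc : 0 < c) :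
    KK g x s c = ∫ y, hh g y (s - c) ^ 2 ∂(gm x c) :=
  (integral_gm_scale x hc (fun y => hh g y (s - c) ^ 2)).symm

lemma KK_zero (g : Euc n → ℝ) (x : Euc n) {s : ℝ} (hs : 0 < s) :
    KK g x s 0 = (∫ y, g y ∂(gm x s)) ^ 2 := by
  have := gm_prob (0 : Euc n) one_pos
  unfold KK
  simp [hh_eq g x hs]

lemma KK_end (g : Euc n → ℝ) (x : Euc n) {s : ℝ} (hs : 0 < s) :
    KK g x s s = ∫ y, g y ^ 2 ∂(gm x s) := by
  have := gm_prob (0 : Euc n) one_pos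
  rw [KK_eq g x s hs]
  simp [hh]

/-- Differentiation of the interpolation. -/
lemma hasDerivAt_KK {g : Euc n → ℝ} (hg : TF g) (x : Euc n) {s c : ℝ} (hc : 0 < c) (hcs : c < s) :
    HasDerivAt (KK g x s) (∑ i, KK (pd i g) x s c) c := by
  obtain ⟨M, hM0, hM⟩ := hg.bound
  obtain ⟨M', hM0', hM'⟩ := hg.lap.bound
  set δ := min (c / 2) (s - c) with hδ
  have hδ0 : 0 < δ := lt_min (by positivity) (by linarith)
  have hP := gm_prob x (s := 2 * c) (by positivity)
  have hgi : Integrable (fun y => gk (2 * c) (y - x)) := by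
    have := integrable_gm_iff.mp (gint_const (n := n) 1 x (2 * c) (by positivity)); simpa using this
  have hgw : Integrable (fun y => gk (2 * c) (y - x) * ‖y - x‖ ^ 2) := by
    have := integrable_gm_iff.mp ((gint_const (n := n) 1).norm_sq_mul' x (s := 2 * c) (by positivity))
    simpa using this
  have hch : ∀ t, Continuous fun y => hh g y t := fun t =>
    (continuous_hh hg.pg).comp (by fun_prop : Continuous fun y : Euc n => ((y, t) : Euc n × ℝ))
  have hchl : ∀ t, Continuous fun y => hh (lap g) y t := fun t =>
    (continuous_hh hg.lap.pg).comp (by fun_prop : Continuous fun y : Euc n => ((y, t) : Euc n × ℝ))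
  have hsc : 0 < s - c := by linarith
  have pgh : PG (fun y => hh g y (s - c)) := pg_of_bound (hch _) fun y => abs_hh_le hM y _
  have pghl : PG (fun y => hh (lap g) y (s - c)) := pg_of_bound (hchl _) fun y => abs_hh_le hM' y _
  have hb : Integrable (fun y => 2 ^ n * (M ^ 2 * (2 / c ^ 2) * (gk (2 * c) (y - x) * ‖y - x‖ ^ 2)
      + (M ^ 2 * (n / c) + M * M') * gk (2 * c) (y - x))) :=
    ((hgw.const_mul _).add (hgi.const_mul _)).const_mul _
  have h := hasDerivAt_integral_of_dominated_loc_of_deriv_le (μ := volume)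
    (F := fun t y => gk t (y - x) * hh g y (s - t) ^ 2)
    (F' := fun t y => (‖y - x‖ ^ 2 / (2 * t ^ 2) - n / (2 * t)) * gk t (y - x) * hh g y (s - t) ^ 2
      + gk t (y - x) * (-(hh g y (s - t) * hh (lap g) y (s - t))))
    (s := ball c δ) (x₀ := c) (ball_mem_nhds c hδ0) ?_
    (integrable_gm_iff.mp (pgh.sq.gint x c hc)) ?_ (Eventually.of_forall fun y => ?_) hb
    (Eventually.of_forall fun y => ?_)
  · have h2 := h.2
    have e1 : (fun t => ∫ y, gk t (y - x) * hh g y (s - t) ^ 2) =ᶠ[𝓝 c] KK g x s := by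
      filter_upwards [lt_mem_nhds hc] with t ht
      rw [KK_eq g x s ht, integral_gm]
    refine (h2.congr_of_eventuallyEq e1.symm).congr_deriv ?_
    have c2 := contDiff_hh hg hsc
    have e : ∀ i : Fin n, pd i (fun z => hh g z (s - c)) = fun z => hh (pd i g) z (s - c) :=
      fun i => funext (pd_hh hg i (s - c))
    have pgd : ∀ i, PG (fun y => hh (pd i g) y (s - c)) := fun i => by
      obtain ⟨L, -, hL⟩ := (hg.pd i).bound
      exact pg_of_bound ((continuous_hh (hg.pd i).pg).comp
        (by fun_prop : Continuous fun y : Euc n => ((y, s - c) : Euc n × ℝ)))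
        fun y => abs_hh_le hL y _
    have hgsq : gsq (fun z => hh g z (s - c)) = fun y => ∑ i, hh (pd i g) y (s - c) ^ 2 := by
      unfold gsq; simp_rw [e]
    have hlapsq : lap (fun z => hh g z (s - c) ^ 2) = fun y =>
        2 * (∑ i, hh (pd i g) y (s - c) ^ 2) + 2 * (hh g y (s - c) * hh (lap g) y (s - c)) := by
      ext y
      rw [lap_sq c2, hgsq, lap_hh hg]; ring
    have hpdsq : ∀ i, pd i (fun z => hh g z (s - c) ^ 2) =
        fun y => 2 * (hh g y (s - c) * hh (pd i g) y (s - c)) := by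
      intro i; ext y
      rw [pd_sq i (c2.differentiable (by simp) y), e]; ring
    have gs : GInt (fun y => ∑ i, hh (pd i g) y (s - c) ^ 2) :=
      GInt.sum fun i _ => (pgd i).sq.gint
    have hu := (heat_deriv (f := fun z => hh g z (s - c) ^ 2)
      (contDiff_infty.mp (c2.pow 2) 2) pgh.sq.gint
      (fun i => by rw [hpdsq]; exact ((pgh.mul (pgd i)).const_mul 2).gint)
      (by rw [hlapsq]; exact (gs.const_mul 2).add ((pgh.mul pghl).const_mul 2).gint) x hc).unique
      (hasDerivAt_gE pgh.sq.gint x hc)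
    have hw : Integrable (fun y => (‖y - x‖ ^ 2 / (2 * c ^ 2) - n / (2 * c)) * hh g y (s - c) ^ 2)
        (gm x c) := by
      have := ((pgh.sq.gint.norm_sq_mul' x hc).const_mul (1 / (2 * c ^ 2))).sub
        ((pgh.sq.gint x c hc).const_mul (n / (2 * c)))
      refine this.congr (Eventually.of_forall fun y => ?_)
      simp only [Pi.sub_apply]; ring
    have hI : ∫ y, ((‖y - x‖ ^ 2 / (2 * c ^ 2) - n / (2 * c)) * gk c (y - x) * hh g y (s - c) ^ 2
      + gk c (y - x) * (-(hh g y (s - c) * hh (lap g) y (s - c)))) =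
      ∫ y, ((‖y - x‖ ^ 2 / (2 * c ^ 2) - n / (2 * c)) * hh g y (s - c) ^ 2
        - hh g y (s - c) * hh (lap g) y (s - c)) ∂(gm x c) := by
      rw [integral_gm]; congr 1; ext y; ring
    rw [hI, integral_sub hw ((pgh.mul pghl).gint x c hc), ← hu, hlapsq,
      integral_add ((gs x c hc).const_mul 2) (((pgh.mul pghl).gint x c hc).const_mul 2),
      integral_const_mul, integral_const_mul, integral_finsetSum _ fun i _ => (pgd i).sq.gint x c hc]
    simp_rw [KK_eq _ x s hc]
    ring
  · filter_upwards [lt_mem_nhds hc] with t ht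
    exact ((continuous_gk_sub x t).mul ((hch _).pow 2)).aestronglyMeasurable
  · exact (((((by fun_prop : Continuous fun y : Euc n => ‖y - x‖ ^ 2 / (2 * c ^ 2) - n / (2 * c)).mul
      (continuous_gk_sub x c)).mul ((hch _).pow 2)).add
      ((continuous_gk_sub x c).mul ((hch _).mul (hchl _)).neg))).aestronglyMeasurable
  · intro t ht
    rw [mem_ball, Real.dist_eq, abs_lt] at ht
    have hδ1 : δ ≤ c / 2 := min_le_left _ _
    have ht1 : c / 2 < t := by linarith [ht.1]
    have ht2 : t < 2 * c := by linarith [ht.2]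
    have ht0 : 0 < t := by linarith
    have hk := gk_le ht0 ht2 x x y
    have hq : √(2 * c / t) ^ n ≤ 2 ^ n := by
      gcongr
      rw [Real.sqrt_le_left (by norm_num), div_le_iff₀ ht0]; linarith
    simp only [sub_self, norm_zero, ne_eq, OfNat.ofNat_ne_zero, not_false_eq_true, zero_pow,
      zero_div, Real.exp_zero, mul_one] at hk
    have hk2 : gk t (y - x) ≤ 2 ^ n * gk (2 * c) (y - x) :=
      hk.trans (mul_le_mul_of_nonneg_right hq (gk_nonneg _ _))
    have hcc : |‖y - x‖ ^ 2 / (2 * t ^ 2) - n / (2 * t)| ≤ 2 / c ^ 2 * ‖y - x‖ ^ 2 + n / c := by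
      have a1 : ‖y - x‖ ^ 2 / (2 * t ^ 2) ≤ 2 / c ^ 2 * ‖y - x‖ ^ 2 := by
        rw [div_mul_eq_mul_div, div_le_div_iff₀ (by positivity) (by positivity)]
        have : c ^ 2 ≤ 4 * t ^ 2 := by nlinarith
        nlinarith [sq_nonneg ‖y - x‖, mul_le_mul_of_nonneg_left this (sq_nonneg ‖y - x‖)]
      have a2 : n / (2 * t) ≤ n / c := by gcongr; linarith
      have a3 : 0 ≤ ‖y - x‖ ^ 2 / (2 * t ^ 2) := by positivity
      have a4 : 0 ≤ n / (2 * t) := by positivity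
      rw [abs_le]; constructor <;> linarith
    have b1 : |hh g y (s - t)| ≤ M := abs_hh_le hM y _
    have b2 : |hh (lap g) y (s - t)| ≤ M' := abs_hh_le hM' y _
    have hk0 := gk_nonneg t (y - x)
    rw [Real.norm_eq_abs]
    refine (abs_add_le _ _).trans ?_
    simp only [abs_mul, abs_neg, abs_pow, abs_of_nonneg hk0]
    calc _ ≤ (2 / c ^ 2 * ‖y - x‖ ^ 2 + n / c) * (2 ^ n * gk (2 * c) (y - x)) * M ^ 2
          + (2 ^ n * gk (2 * c) (y - x)) * (M * M') := by
          have hk3 := gk_nonneg (2 * c) (y - x)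
          gcongr
      _ = _ := by ring
  · intro t ht
    rw [mem_ball, Real.dist_eq, abs_lt] at ht
    have hδ1 : δ ≤ c / 2 := min_le_left _ _
    have hδ2 : δ ≤ s - c := min_le_right _ _
    have h1 := hasDerivAt_gk (n := n) (s := t) (by linarith [ht.1]) (y - x)
    have h2 := (hasDerivAt_hh hg y (t := s - t) (by linarith [ht.2])).comp t
      ((hasDerivAt_id t).const_sub s)
    refine (h1.mul (h2.fun_pow 2)).congr_deriv ?_
    simp only [Function.comp]
    push_cast
    ring

/-- The trapezoid inequality for functions with convex derivative. -/
lemma trapezoid {s : ℝ} (hs : 0 < s) {F F1 F2 : ℝ → ℝ} {F3 : ℝ → ℝ} (cF : Continuous F)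
    (cF1 : Continuous F1) (cF2 : Continuous F2) (d1 : ∀ c, 0 < c → c < s → HasDerivAt F (F1 c) c)
    (d2 : ∀ c, 0 < c → c < s → HasDerivAt F1 (F2 c) c)
    (d3 : ∀ c, 0 < c → c < s → HasDerivAt F2 (F3 c) c) (h3 : ∀ c, 0 ≤ F3 c) :
    F s - F 0 ≤ s / 2 * (F1 0 + F1 s) := by
  have mono : ∀ {f f' : ℝ → ℝ}, Continuous f → (∀ c, 0 < c → c < s → HasDerivAt f (f' c) c) →
      (∀ c, 0 < c → c < s → 0 ≤ f' c) → ∀ c, 0 ≤ c → c ≤ s → f 0 ≤ f c := by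
    intro f f' cf df pf c hc hcs
    have : MonotoneOn f (Icc 0 s) := by
      refine monotoneOn_of_deriv_nonneg (convex_Icc 0 s) cf.continuousOn ?_ ?_
      · rw [interior_Icc]
        exact fun c hc => (df c hc.1 hc.2).differentiableAt.differentiableWithinAt
      · rw [interior_Icc]
        intro c hc
        rw [(df c hc.1 hc.2).deriv]; exact pf c hc.1 hc.2
    exact this ⟨le_rfl, hs.le⟩ ⟨hc, hcs⟩ hc
  have g1 : ∀ c, 0 ≤ c → c ≤ s → 0 ≤ 1 / 2 * (F1 0 - F1 c + c * F2 c) := by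
    intro c hc hcs
    have := mono (f := fun c => 1 / 2 * (F1 0 - F1 c + c * F2 c)) (f' := fun c => 1 / 2 * (c * F3 c))
      (by fun_prop) (fun c hc hcs => ((((d2 c hc hcs).const_sub _).add
        ((hasDerivAt_id c).mul (d3 c hc hcs))).const_mul _).congr_deriv (by simp))
      (fun c hc hcs => by have := h3 c; positivity) c hc hcs
    simpa using this
  have := mono (f := fun c => c / 2 * (F1 0 + F1 c) - (F c - F 0))
    (f' := fun c => 1 / 2 * (F1 0 - F1 c + c * F2 c)) (by fun_prop)
    (fun c hc hcs => ((((hasDerivAt_id c).div_const 2).mul ((d2 c hc hcs).const_add _)).sub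
      ((d1 c hc hcs).sub_const _)).congr_deriv (by simp; ring))
    (fun c hc hcs => g1 c hc.le hcs.le) s hs.le le_rfl
  simp at this
  linarith

lemma poincare_TF {g : Euc n → ℝ} (hg : TF g) (x : Euc n) {s : ℝ} (hs : 0 < s) :
    (∫ y, g y ^ 2 ∂(gm x s)) - (∫ y, g y ∂(gm x s)) ^ 2 ≤
      s / 2 * ((∑ i, (∫ y, pd i g y ∂(gm x s)) ^ 2) + ∫ y, gsq g y ∂(gm x s)) := by
  have h := trapezoid hs (F := KK g x s) (F1 := fun c => ∑ i, KK (pd i g) x s c)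
    (F2 := fun c => ∑ i, ∑ j, KK (pd j (pd i g)) x s c)
    (F3 := fun c => ∑ i, ∑ j, ∑ k, KK (pd k (pd j (pd i g))) x s c)
    (continuous_KK hg x s)
    (continuous_finsetSum _ fun i _ => continuous_KK (hg.pd i) x s)
    (continuous_finsetSum _ fun i _ => continuous_finsetSum _ fun j _ =>
      continuous_KK ((hg.pd i).pd j) x s)
    (fun c hc hcs => hasDerivAt_KK hg x hc hcs)
    (fun c hc hcs => HasDerivAt.fun_sum fun i _ => hasDerivAt_KK (hg.pd i) x hc hcs)
    (fun c hc hcs => HasDerivAt.fun_sum fun i _ => HasDerivAt.fun_sum fun j _ =>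
      hasDerivAt_KK ((hg.pd i).pd j) x hc hcs)
    (fun c => Finset.sum_nonneg fun i _ => Finset.sum_nonneg fun j _ =>
      Finset.sum_nonneg fun k _ => KK_nonneg _ _ _ _)
  simp_rw [KK_zero _ x hs, KK_end _ x hs] at h
  unfold gsq
  rwa [integral_finsetSum _ fun i _ => (hg.pd i).pg.sq.gint x s hs]

/-- Gaussian Poincaré inequality. The second spectral gap appears as the average of the mean of
the squared gradient and the square of the mean gradient. -/
lemma poincare {f : Euc n → ℝ} (hf : ContDiff ℝ (⊤ : ℕ∞) f) (h2 : GInt (fun y => f y ^ 2))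
    (hg : GInt (gsq f)) (x : Euc n) {s : ℝ} (hs : 0 < s) :
    (∫ y, f y ^ 2 ∂(gm x s)) - (∫ y, f y ∂(gm x s)) ^ 2 ≤
      s / 2 * ((∑ i, (∫ y, pd i f y ∂(gm x s)) ^ 2) + ∫ y, gsq f y ∂(gm x s)) := by
  obtain ⟨L, hL0, hL⟩ := cut_pd_bound (n := n)
  have hp := gm_prob x hs
  set F : ℕ → Euc n → ℝ := fun N y => cut ((N : ℝ) + 1) y * f y with hF
  have hN : ∀ N : ℕ, (0 : ℝ) < (N : ℝ) + 1 := fun N => by positivity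
  have hTF : ∀ N, TF (F N) := fun N => ⟨(contDiff_cut _).mul hf, (cut_support (hN N)).mul_right⟩
  have hpd : ∀ N i y, pd i (F N) y =
      pd i (cut ((N : ℝ) + 1)) y * f y + cut ((N : ℝ) + 1) y * pd i f y := fun N i y =>
    pd_mul i ((contDiff_cut _).differentiable (by simp) y) (hf.differentiable (by simp) y)
  have hcut : ∀ (N : ℕ) (y : Euc n), |cut ((N : ℝ) + 1) y| ≤ 1 := fun N y => by
    rw [abs_of_nonneg (cut_nonneg _ _)]; exact cut_le_one _ _
  have bF : ∀ N y, |F N y| ≤ |f y| := fun N y => by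
    rw [hF, abs_mul]
    exact mul_le_of_le_one_left (abs_nonneg _) (hcut N y)
  have bpd : ∀ N i y, |pd i (F N) y| ≤ L * |f y| + |pd i f y| := fun N i y => by
    rw [hpd]
    refine (abs_add_le _ _).trans ?_
    rw [abs_mul, abs_mul]
    have : |pd i (cut ((N : ℝ) + 1)) y| ≤ L :=
      (hL _ (hN N) i y).trans (div_le_self hL0.le (by linarith [(Nat.cast_nonneg N : (0 : ℝ) ≤ N)]))
    gcongr
    exact mul_le_of_le_one_left (abs_nonneg _) (hcut N y)
  have c1 : ContDiff ℝ 1 f := hf.of_le (by simp)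
  have g1 : GInt (fun y => |f y|) := ((gint_const 1).add h2).mono (by fun_prop) fun y => by
    rw [abs_abs]; nlinarith [sq_nonneg (|f y| - 1), sq_abs (f y), abs_nonneg (f y)]
  have gp : ∀ i, GInt (fun y => |pd i f y|) := fun i =>
    ((gint_const 1).add hg).mono (continuous_pd c1 i).abs fun y => by
      rw [abs_abs]
      nlinarith [sq_nonneg (|pd i f y| - 1), sq_abs (pd i f y), pd_sq_le_gsq f i y,
        abs_nonneg (pd i f y)]
  have lF : ∀ y, Tendsto (fun N => F N y) atTop (𝓝 (f y)) := fun y => by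
    simpa using (cut_tendsto y).mul_const (f y)
  have lpd : ∀ i y, Tendsto (fun N => pd i (F N) y) atTop (𝓝 (pd i f y)) := fun i y => by
    simp_rw [hpd]
    simpa using ((pd_cut_tendsto i y).mul_const (f y)).add ((cut_tendsto y).mul_const (pd i f y))
  have t1 : Tendsto (fun N => ∫ y, F N y ^ 2 ∂(gm x s)) atTop (𝓝 (∫ y, f y ^ 2 ∂(gm x s))) := by
    refine tendsto_integral_of_dominated_convergence (fun y => f y ^ 2)
      (fun N => ((hTF N).smooth.continuous.pow 2).aestronglyMeasurable) (h2 x s hs)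
      (fun N => Eventually.of_forall fun y => ?_) (Eventually.of_forall fun y => (lF y).pow 2)
    rw [Real.norm_eq_abs, abs_pow, ← sq_abs (f y)]
    exact pow_le_pow_left₀ (abs_nonneg _) (bF N y) 2
  have t2 : Tendsto (fun N => ∫ y, F N y ∂(gm x s)) atTop (𝓝 (∫ y, f y ∂(gm x s))) :=
    tendsto_integral_of_dominated_convergence (fun y => |f y|)
      (fun N => (hTF N).smooth.continuous.aestronglyMeasurable) (g1 x s hs)
      (fun N => Eventually.of_forall fun y => bF N y) (Eventually.of_forall fun y => lF y)
  have t3 : ∀ i, Tendsto (fun N => ∫ y, pd i (F N) y ∂(gm x s)) atTop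
      (𝓝 (∫ y, pd i f y ∂(gm x s))) := fun i =>
    tendsto_integral_of_dominated_convergence (fun y => L * |f y| + |pd i f y|)
      (fun N => ((hTF N).pd i).smooth.continuous.aestronglyMeasurable)
      (((g1.const_mul L).add (gp i)) x s hs)
      (fun N => Eventually.of_forall fun y => bpd N i y) (Eventually.of_forall fun y => lpd i y)
  have t4 : Tendsto (fun N => ∫ y, gsq (F N) y ∂(gm x s)) atTop (𝓝 (∫ y, gsq f y ∂(gm x s))) := by
    refine tendsto_integral_of_dominated_convergence
      (fun y => ∑ _i : Fin n, (2 * L ^ 2 * f y ^ 2 + 2 * gsq f y))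
      (fun N => (continuous_gsq ((hTF N).smooth.of_le (by simp))).aestronglyMeasurable)
      ((GInt.sum fun i _ => (h2.const_mul _).add (hg.const_mul _)) x s hs)
      (fun N => Eventually.of_forall fun y => ?_)
      (Eventually.of_forall fun y => tendsto_finsetSum _ fun i _ => (lpd i y).pow 2)
    rw [Real.norm_eq_abs, abs_of_nonneg (gsq_nonneg _ _)]
    refine Finset.sum_le_sum fun i _ => ?_
    rw [← sq_abs]
    have h1 := pow_le_pow_left₀ (abs_nonneg _) (bpd N i y) 2
    have h3 := pd_sq_le_gsq f i y
    rw [← sq_abs] at h3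
    rw [← sq_abs (f y)]
    nlinarith [sq_nonneg (L * |f y| - |pd i f y|)]
  exact le_of_tendsto_of_tendsto' (t1.sub (t2.pow 2))
    (((tendsto_finsetSum _ fun i _ => (t3 i).pow 2).add t4).const_mul (s / 2))
    fun N => poincare_TF (hTF N) x hs

lemma int_grad_sub {f : Euc n → ℝ} (hf : ContDiff ℝ 1 f) (hg : GInt (gsq f)) (x : Euc n) {s : ℝ}
    (hs : 0 < s) (e : Fin n → ℝ) :
    ∫ y, ∑ i, (pd i f y - e i) ^ 2 ∂(gm x s) = (∫ y, gsq f y ∂(gm x s))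
      - 2 * (∑ i, e i * ∫ y, pd i f y ∂(gm x s)) + ∑ i, e i ^ 2 := by
  have hp := gm_prob x hs
  have g2 : ∀ i, GInt (fun y => pd i f y ^ 2) := fun i =>
    hg.mono ((continuous_pd hf i).pow 2) fun y => by
      rw [abs_of_nonneg (sq_nonneg _)]; exact pd_sq_le_gsq f i y
  have g1 : ∀ i, GInt (fun y => pd i f y) := fun i => by
    simpa using GInt.mul_of_sq (g2 i) (gint_const (1 ^ 2)) (continuous_pd hf i) continuous_const
  have e1 : ∀ y, ∑ i, (pd i f y - e i) ^ 2 = ∑ i, (pd i f y ^ 2 - 2 * e i * pd i f y + e i ^ 2) :=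
    fun y => Finset.sum_congr rfl fun i _ => by ring
  have i1 : ∀ i, Integrable (fun y => pd i f y ^ 2 - 2 * e i * pd i f y) (gm x s) := fun i =>
    (g2 i x s hs).sub ((g1 i x s hs).const_mul _)
  simp_rw [e1]
  rw [integral_finsetSum _ fun i _ => (i1 i).fun_add (integrable_const _)]
  unfold gsq
  rw [integral_finsetSum _ fun i _ => g2 i x s hs, Finset.mul_sum, ← Finset.sum_sub_distrib,
    ← Finset.sum_add_distrib]
  refine Finset.sum_congr rfl fun i _ => ?_
  rw [integral_add (i1 i) (integrable_const _),
    integral_sub (g2 i x s hs) ((g1 i x s hs).const_mul _), integral_const_mul]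
  simp
  ring

lemma sum_sq_mean_le {f : Euc n → ℝ} (hf : ContDiff ℝ 1 f) (hg : GInt (gsq f)) (x : Euc n) {s : ℝ}
    (hs : 0 < s) : ∑ i, (∫ y, pd i f y ∂(gm x s)) ^ 2 ≤ ∫ y, gsq f y ∂(gm x s) := by
  have h := int_grad_sub hf hg x hs (fun i => ∫ y, pd i f y ∂(gm x s))
  have h0 : 0 ≤ ∫ y, ∑ i, (pd i f y - ∫ y, pd i f y ∂(gm x s)) ^ 2 ∂(gm x s) :=
    integral_nonneg fun y => Finset.sum_nonneg fun i _ => sq_nonneg _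
  simp_rw [← pow_two] at h
  linarith

lemma poincare_basic {f : Euc n → ℝ} (hf : ContDiff ℝ (⊤ : ℕ∞) f) (h2 : GInt (fun y => f y ^ 2))
    (hg : GInt (gsq f)) (x : Euc n) {s : ℝ} (hs : 0 < s) :
    (∫ y, f y ^ 2 ∂(gm x s)) - (∫ y, f y ∂(gm x s)) ^ 2 ≤ s * ∫ y, gsq f y ∂(gm x s) := by
  have h := poincare hf h2 hg x hs
  have h' := sum_sq_mean_le (hf.of_le (by simp)) hg x hs
  nlinarith

/-- The deficit in the Poincaré inequality controls the oscillation of the gradient. -/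
lemma poincare_gap {f : Euc n → ℝ} (hf : ContDiff ℝ (⊤ : ℕ∞) f) (h2 : GInt (fun y => f y ^ 2))
    (hg : GInt (gsq f)) (x : Euc n) {s : ℝ} (hs : 0 < s) :
    s / 2 * (∫ y, ∑ i, (pd i f y - ∫ y, pd i f y ∂(gm x s)) ^ 2 ∂(gm x s)) ≤
      s * (∫ y, gsq f y ∂(gm x s)) - ((∫ y, f y ^ 2 ∂(gm x s)) - (∫ y, f y ∂(gm x s)) ^ 2) := by
  have h := poincare hf h2 hg x hs
  have h1 := int_grad_sub (hf.of_le (by simp)) hg x hs (fun i => ∫ y, pd i f y ∂(gm x s))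
  simp_rw [← pow_two] at h1
  rw [h1]
  linarith

/-! ### Competition: growth of the product of the two second moments -/

lemma cs_int {μ : Measure (Euc n)} {f g : Euc n → ℝ} (hf : Integrable (fun y => f y ^ 2) μ)
    (hg : Integrable (fun y => g y ^ 2) μ) (hfg : Integrable (fun y => f y * g y) μ) :
    (∫ y, f y * g y ∂μ) ^ 2 ≤ (∫ y, f y ^ 2 ∂μ) * ∫ y, g y ^ 2 ∂μ := by
  have h : ∀ t : ℝ, 0 ≤ (∫ y, f y ^ 2 ∂μ) * (t * t) + (2 * ∫ y, f y * g y ∂μ) * t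
      + ∫ y, g y ^ 2 ∂μ := by
    intro t
    have e : ∫ y, (t * f y + g y) ^ 2 ∂μ = (∫ y, f y ^ 2 ∂μ) * (t * t)
        + (2 * ∫ y, f y * g y ∂μ) * t + ∫ y, g y ^ 2 ∂μ := by
      have : ∀ y, (t * f y + g y) ^ 2 = (t * t) * f y ^ 2 + (2 * t) * (f y * g y) + g y ^ 2 :=
        fun y => by ring
      simp_rw [this]
      rw [integral_add ((hf.const_mul _).fun_add (hfg.const_mul _)) hg,
        integral_add (hf.const_mul _) (hfg.const_mul _), integral_const_mul, integral_const_mul]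
      ring
    rw [← e]; exact integral_nonneg fun y => sq_nonneg _
  have := discrim_le_zero h
  unfold discrim at this
  nlinarith

lemma sq_mean_le {μ : Measure (Euc n)} [IsProbabilityMeasure μ] {f : Euc n → ℝ}
    (hf : Integrable (fun y => f y ^ 2) μ) (hf1 : Integrable f μ) :
    (∫ y, f y ∂μ) ^ 2 ≤ ∫ y, f y ^ 2 ∂μ := by
  have := cs_int (g := fun _ => 1) hf (by simp) (by simpa using hf1)
  simpa using this

lemma var_eq {μ : Measure (Euc n)} [IsProbabilityMeasure μ] {f : Euc n → ℝ}
    (hf : Integrable (fun y => f y ^ 2) μ) (hf1 : Integrable f μ) :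
    ∫ y, (f y - ∫ y, f y ∂μ) ^ 2 ∂μ = (∫ y, f y ^ 2 ∂μ) - (∫ y, f y ∂μ) ^ 2 := by
  set m := ∫ y, f y ∂μ
  have : ∀ y, (f y - m) ^ 2 = f y ^ 2 - 2 * m * f y + m ^ 2 := fun y => by ring
  have i1 : Integrable (fun y => f y ^ 2 - 2 * m * f y) μ := hf.sub (hf1.const_mul _)
  simp_rw [this]
  rw [integral_add i1 (integrable_const _),
    integral_sub hf (hf1.const_mul _), integral_const_mul]
  simp
  ring

/-- Covariance is controlled by the variances. -/
lemma cov_sq_le {μ : Measure (Euc n)} [IsProbabilityMeasure μ] {f g : Euc n → ℝ}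
    (hf : Integrable (fun y => f y ^ 2) μ) (hf1 : Integrable f μ)
    (hg : Integrable (fun y => g y ^ 2) μ) (hg1 : Integrable g μ)
    (hfg : Integrable (fun y => f y * g y) μ) :
    ((∫ y, f y * g y ∂μ) - (∫ y, f y ∂μ) * ∫ y, g y ∂μ) ^ 2 ≤
      ((∫ y, f y ^ 2 ∂μ) - (∫ y, f y ∂μ) ^ 2) * ((∫ y, g y ^ 2 ∂μ) - (∫ y, g y ∂μ) ^ 2) := by
  rw [← var_eq hf hf1, ← var_eq hg hg1]
  set a := ∫ y, f y ∂μ with ha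
  set b := ∫ y, g y ∂μ with hb
  have e1 : ∀ y, (f y - a) ^ 2 = f y ^ 2 - 2 * a * f y + a ^ 2 := fun y => by ring
  have e2 : ∀ y, (g y - b) ^ 2 = g y ^ 2 - 2 * b * g y + b ^ 2 := fun y => by ring
  have e3 : ∀ y, (f y - a) * (g y - b) = f y * g y - b * f y - a * g y + a * b := fun y => by ring
  have i1 : Integrable (fun y => f y * g y - b * f y) μ := hfg.sub (hf1.const_mul _)
  have i2 : Integrable (fun y => f y * g y - b * f y - a * g y) μ := i1.sub (hg1.const_mul _)
  have h := cs_int (μ := μ) (f := fun y => f y - a) (g := fun y => g y - b)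
    (by simp_rw [e1]; exact (hf.sub (hf1.const_mul _)).add (integrable_const _))
    (by simp_rw [e2]; exact (hg.sub (hg1.const_mul _)).add (integrable_const _))
    (by simp_rw [e3]; exact i2.add (integrable_const _))
  refine le_trans (le_of_eq ?_) h
  congr 1
  simp_rw [e3]
  rw [integral_add i2 (integrable_const _), integral_sub i1 (hg1.const_mul _),
    integral_sub hfg (hf1.const_mul _), integral_const_mul, integral_const_mul, ← ha, ← hb]
  simp
  ring

lemma Sol.var_le {u v : Euc n → ℝ} (h : Sol u v) (y : Euc n) {t : ℝ} (ht : 0 < t) :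
    mA u y t - mU u y t ^ 2 ≤ t * mD u y t :=
  poincare_basic h.cu h.pg.sq.gint h.gint_gsq y ht

lemma Sol.mU_sq_le {u v : Euc n → ℝ} (h : Sol u v) (y : Euc n) {t : ℝ} (ht : 0 < t) :
    mU u y t ^ 2 ≤ mA u y t := by
  have := gm_prob y ht
  exact sq_mean_le (h.pg.sq.gint y t ht) (h.pg.gint y t ht)

/-- If both components have small variance then their product has a large second moment. -/
lemma Sol.mP_lower {u v : Euc n → ℝ} (h : Sol u v) (y : Euc n) {t : ℝ} (ht : 0 < t)
    (hu : t * mD u y t ≤ 1 / 8 * mA u y t) (hv : t * mD v y t ≤ 1 / 8 * mA v y t) :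
    1 / 2 * (mA u y t * mA v y t) ≤ mP u v y t := by
  have := gm_prob y ht
  have hA := h.mA_pos y ht
  have hB := h.symm.mA_pos y ht
  have hU := h.mU_pos y ht
  have hV := h.symm.mU_pos y ht
  have iuv : GInt (fun y => u y * v y) := (h.pg.mul h.symm.pg).gint
  have hcov := cov_sq_le (h.pg.sq.gint y t ht) (h.pg.gint y t ht) (h.symm.pg.sq.gint y t ht)
    (h.symm.pg.gint y t ht) (iuv y t ht)
  change ((∫ y, u y * v y ∂(gm y t)) - mU u y t * mU v y t) ^ 2 ≤
    (mA u y t - mU u y t ^ 2) * (mA v y t - mU v y t ^ 2) at hcov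
  have hsq : (∫ z, u z * v z ∂(gm y t)) ^ 2 ≤ mP u v y t := by
    have e : ∀ z, (u z * v z) ^ 2 = u z ^ 2 * v z ^ 2 := fun z => by ring
    have := sq_mean_le (μ := gm y t) (f := fun z => u z * v z)
      (by simp_rw [e]; exact h.pgP.gint y t ht) (iuv y t ht)
    unfold mP
    simpa only [e] using this
  set I := ∫ z, u z * v z ∂(gm y t)
  set A := mA u y t
  set B := mA v y t
  have v1 := (h.var_le y ht).trans hu
  have v2 := (h.symm.var_le y ht).trans hv
  have v1' := h.mU_sq_le y ht
  have v2' := h.symm.mU_sq_le y ht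
  set m := √(A * B) with hm
  have hm0 : 0 < m := Real.sqrt_pos.mpr (mul_pos hA hB)
  have hm2 : m ^ 2 = A * B := Real.sq_sqrt (mul_pos hA hB).le
  have c1 : (I - mU u y t * mU v y t) ^ 2 ≤ (1 / 8 * m) ^ 2 := by
    refine hcov.trans ?_
    rw [mul_pow, hm2]
    calc _ ≤ (1 / 8 * A) * (1 / 8 * B) := by
          apply mul_le_mul v1 v2 (by linarith) (by positivity)
      _ = _ := by ring
  have c2 := (abs_le_of_sq_le_sq' c1 (by positivity)).1
  have c3 : (7 / 8 * m) ^ 2 ≤ (mU u y t * mU v y t) ^ 2 := by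
    rw [mul_pow, mul_pow, hm2]
    calc _ = (7 / 8 * A) * (7 / 8 * B) := by ring
      _ ≤ _ := by
        apply mul_le_mul (by linarith) (by linarith) (by positivity) (by positivity)
  have c4 : 7 / 8 * m ≤ mU u y t * mU v y t :=
    (abs_le_of_sq_le_sq' c3 (mul_pos hU hV).le).2
  nlinarith

/-- The logarithmic derivative of `mA u * mA v` in the scale is at least `1 / (8 * t)`: either the
variance of a component, hence its Dirichlet energy, is a fixed fraction of its second moment, or the
interaction term `mP` is large. -/
lemma Sol.log_growth {u v : Euc n → ℝ} (h : Sol u v) (y : Euc n) {t : ℝ} (ht : 0 < t)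
    (h1 : 1 ≤ t * mA u y t) :
    1 / 8 * (mA u y t * mA v y t) ≤ t * ((mD u y t + mP u v y t) * mA v y t
      + mA u y t * (mD v y t + mP u v y t)) := by
  have hA := h.mA_pos y ht
  have hB := h.symm.mA_pos y ht
  have hP := mP_nonneg u v y t
  have hDu := mD_nonneg u y t
  have hDv := mD_nonneg v y t
  by_contra! hlt
  have e1 : t * ((mD u y t + mP u v y t) * mA v y t) + t * (mA u y t * (mD v y t + mP u v y t)) <
    1 / 8 * (mA u y t * mA v y t) := by linarith
  have p1 : 0 ≤ t * ((mD u y t + mP u v y t) * mA v y t) := by positivity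
  have p2 : 0 ≤ t * (mA u y t * (mD v y t + mP u v y t)) := by positivity
  have f1 : t * (mD u y t + mP u v y t) < 1 / 8 * mA u y t := by
    refine lt_of_mul_lt_mul_right ?_ hB.le
    linarith
  have f2 : t * (mD v y t + mP u v y t) < 1 / 8 * mA v y t := by
    refine lt_of_mul_lt_mul_right ?_ hA.le
    linarith
  have q1 : 0 ≤ t * mP u v y t := by positivity
  have q2 : 0 ≤ t * mD v y t := by positivity
  have g := h.mP_lower y ht (by linarith) (by linarith)
  have g' : t * (1 / 2 * (mA u y t * mA v y t)) ≤ 1 / 8 * mA v y t := by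
    refine (mul_le_mul_of_nonneg_left g ht.le).trans (by linarith)
  nlinarith

/-- The integrated form of `Sol.log_growth`, from the scale at which `t * u y ^ 2 = 1` up to `S`. -/
lemma Sol.prod_growth {u v : Euc n → ℝ} (h : Sol u v) (y : Euc n) {S : ℝ} (hS : 0 < S) :
    u y ^ 2 * v y ^ 2 * (S * u y ^ 2) ^ (1 / 8 : ℝ) ≤ mA u y S * mA v y S := by
  have hu := h.up y
  have hv := h.vp y
  have hbase : u y ^ 2 * v y ^ 2 ≤ mA u y S * mA v y S :=
    mul_le_mul (h.sq_le_mA y hS) (h.symm.sq_le_mA y hS) (by positivity) (mA_nonneg _ _ _)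
  rcases le_or_gt (S * u y ^ 2) 1 with h1 | h1
  · refine le_trans (mul_le_of_le_one_right (by positivity) ?_) hbase
    exact Real.rpow_le_one (by positivity) h1 (by norm_num)
  set t0 := (u y ^ 2)⁻¹ with ht0
  have ht0' : 0 < t0 := by positivity
  have htS : t0 ≤ S := by
    rw [ht0, inv_le_iff_one_le_mul₀ (by positivity)]; linarith
  have hmono : MonotoneOn (fun t => mA u y t * mA v y t * t ^ (-(1 / 8) : ℝ)) (Icc t0 S) := by
    have hd : ∀ t, t0 ≤ t → HasDerivAt (fun t => mA u y t * mA v y t * t ^ (-(1 / 8) : ℝ))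
        (((mD u y t + mP u v y t) * mA v y t + mA u y t * (mD v y t + mP v u y t))
          * t ^ (-(1 / 8) : ℝ) + mA u y t * mA v y t * (-(1 / 8) * t ^ (-(1 / 8) - 1 : ℝ))) t := by
      intro t ht
      have htp := ht0'.trans_le ht
      exact ((h.hasDerivAt_mA y htp).mul (h.symm.hasDerivAt_mA y htp)).mul
        (Real.hasDerivAt_rpow_const (Or.inl htp.ne'))
    refine monotoneOn_of_deriv_nonneg (convex_Icc _ _)
      (fun t ht => (hd t ht.1).continuousAt.continuousWithinAt) ?_ ?_
    · rw [interior_Icc]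
      exact fun t ht => (hd t ht.1.le).differentiableAt.differentiableWithinAt
    · rw [interior_Icc]
      intro t ht
      have htp := ht0'.trans ht.1
      rw [(hd t ht.1.le).deriv, mP_comm v u]
      have h1t : 1 ≤ t * mA u y t := by
        have := h.sq_le_mA y htp
        calc (1 : ℝ) = t0 * u y ^ 2 := by rw [ht0]; field_simp
          _ ≤ t * mA u y t := mul_le_mul ht.1.le this (by positivity) htp.le
      have hl := h.log_growth y htp h1t
      rw [Real.rpow_sub_one htp.ne']
      have hr : 0 < t ^ (-(1 / 8) : ℝ) := Real.rpow_pos_of_pos htp _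
      have : 0 ≤ (t * ((mD u y t + mP u v y t) * mA v y t + mA u y t * (mD v y t + mP u v y t))
        - 1 / 8 * (mA u y t * mA v y t)) * (t ^ (-(1 / 8) : ℝ) / t) := by
        have : 0 < t ^ (-(1 / 8) : ℝ) / t := by positivity
        exact mul_nonneg (by linarith) this.le
      refine this.trans (le_of_eq ?_)
      field_simp
      ring
  have hm := hmono ⟨le_rfl, htS⟩ ⟨htS, le_rfl⟩ htS
  simp only [] at hm
  have hb : u y ^ 2 * v y ^ 2 ≤ mA u y t0 * mA v y t0 :=
    mul_le_mul (h.sq_le_mA y ht0') (h.symm.sq_le_mA y ht0') (by positivity) (mA_nonneg _ _ _)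
  have hr0 : 0 < t0 ^ (-(1 / 8) : ℝ) := Real.rpow_pos_of_pos ht0' _
  have e : (S * u y ^ 2) ^ (1 / 8 : ℝ) = S ^ (1 / 8 : ℝ) * t0 ^ (-(1 / 8) : ℝ) := by
    rw [ht0, Real.mul_rpow hS.le (by positivity), Real.inv_rpow (by positivity),
      ← Real.rpow_neg (by positivity)]
    simp
  have eS : S ^ (1 / 8 : ℝ) * S ^ (-(1 / 8) : ℝ) = 1 := by
    rw [← Real.rpow_add hS]; simp
  have hS8 : 0 < S ^ (1 / 8 : ℝ) := Real.rpow_pos_of_pos hS _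
  rw [e]
  calc u y ^ 2 * v y ^ 2 * (S ^ (1 / 8 : ℝ) * t0 ^ (-(1 / 8) : ℝ))
      ≤ mA u y t0 * mA v y t0 * (S ^ (1 / 8 : ℝ) * t0 ^ (-(1 / 8) : ℝ)) := by gcongr
    _ = S ^ (1 / 8 : ℝ) * (mA u y t0 * mA v y t0 * t0 ^ (-(1 / 8) : ℝ)) := by ring
    _ ≤ S ^ (1 / 8 : ℝ) * (mA u y S * mA v y S * S ^ (-(1 / 8) : ℝ)) := by gcongr
    _ = mA u y S * mA v y S * (S ^ (1 / 8 : ℝ) * S ^ (-(1 / 8) : ℝ)) := by ring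
    _ = _ := by rw [eS, mul_one]

/-! ### Smooth truncation -/

/-- A smooth nondecreasing function vanishing below `K` and equal to `r` up to an error `2 * K`. -/
def alp (K r : ℝ) : ℝ := ∫ x in (0 : ℝ)..r, Real.smoothTransition (x / K - 1)

lemma continuous_alp_integrand (K : ℝ) : Continuous fun x => Real.smoothTransition (x / K - 1) :=
  Real.smoothTransition.continuous.comp (by fun_prop)

lemma hasDerivAt_alp (K r : ℝ) : HasDerivAt (alp K) (Real.smoothTransition (r / K - 1)) r :=
  (continuous_alp_integrand K).integral_hasStrictDerivAt 0 r |>.hasDerivAt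

lemma contDiff_alp (K : ℝ) : ContDiff ℝ (⊤ : ℕ∞) (alp K) := by
  rw [contDiff_infty_iff_deriv]
  refine ⟨fun r => (hasDerivAt_alp K r).differentiableAt, ?_⟩
  have : deriv (alp K) = fun r => Real.smoothTransition (r / K - 1) :=
    funext fun r => (hasDerivAt_alp K r).deriv
  rw [this]
  exact Real.smoothTransition.contDiff.comp (by fun_prop)

lemma alp_deriv_eq_zero {K r : ℝ} (hK : 0 < K) (hr : r ≤ K) :
    Real.smoothTransition (r / K - 1) = 0 :=
  Real.smoothTransition.zero_of_nonpos (by rw [sub_nonpos, div_le_one hK]; exact hr)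

lemma alp_eq_zero {K r : ℝ} (hK : 0 < K) (hr : r ≤ K) : alp K r = 0 := by
  unfold alp
  have : ∀ x ∈ uIcc 0 r, Real.smoothTransition (x / K - 1) = 0 := fun x hx =>
    alp_deriv_eq_zero hK (by
      have := hx.2
      exact this.trans (max_le hK.le hr))
  rw [intervalIntegral.integral_congr this]; simp

lemma alp_nonneg {K r : ℝ} (hr : 0 ≤ r) : 0 ≤ alp K r :=
  intervalIntegral.integral_nonneg hr fun x _ => Real.smoothTransition.nonneg _

lemma alp_le {K r : ℝ} (hr : 0 ≤ r) : alp K r ≤ r := by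
  unfold alp
  have := intervalIntegral.integral_mono_on hr ((continuous_alp_integrand K).intervalIntegrable 0 r)
    (continuous_const.intervalIntegrable (μ := volume) (u := fun _ : ℝ => (1 : ℝ)) 0 r) fun x _ => Real.smoothTransition.le_one _
  simpa using this

lemma alp_ge {K r : ℝ} (hK : 0 < K) (hr : 0 ≤ r) : r - 2 * K ≤ alp K r := by
  rcases le_total r (2 * K) with h | h
  · linarith [alp_nonneg (K := K) hr]
  · have hi := fun a b => (continuous_alp_integrand K).intervalIntegrable (μ := volume) a b
    have h1 : alp K r = alp K (2 * K) + ∫ x in (2 * K)..r, Real.smoothTransition (x / K - 1) :=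
      (intervalIntegral.integral_add_adjacent_intervals (hi _ _) (hi _ _)).symm
    have h2 : ∫ x in (2 * K)..r, Real.smoothTransition (x / K - 1) = r - 2 * K := by
      rw [intervalIntegral.integral_congr (g := fun _ => (1 : ℝ))]
      · simp
      · intro x hx
        rw [uIcc_of_le h] at hx
        refine Real.smoothTransition.one_of_one_le ?_
        rw [le_sub_iff_add_le, le_div_iff₀ hK]; linarith [hx.1]
    linarith [alp_nonneg (K := K) (r := 2 * K) (by positivity)]

/-- The truncated function `α_K ∘ u`. -/
def tr (K : ℝ) (u : Euc n → ℝ) (y : Euc n) : ℝ := alp K (u y)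

lemma contDiff_tr {u : Euc n → ℝ} (hu : ContDiff ℝ (⊤ : ℕ∞) u) (K : ℝ) :
    ContDiff ℝ (⊤ : ℕ∞) (tr K u) := (contDiff_alp K).comp hu

lemma pd_tr {u : Euc n → ℝ} (hu : ContDiff ℝ (⊤ : ℕ∞) u) (K : ℝ) (i : Fin n) (y : Euc n) :
    pd i (tr K u) y = Real.smoothTransition (u y / K - 1) * pd i u y := by
  have h := (hasDerivAt_alp K (u y)).hasFDerivAt.comp y
    (hu.differentiable (by simp) y).hasFDerivAt
  unfold pd
  have e : fderiv ℝ (tr K u) y = _ := h.fderiv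
  rw [e]
  simp [mul_comm]

lemma gsq_tr_le {u : Euc n → ℝ} (hu : ContDiff ℝ (⊤ : ℕ∞) u) (K : ℝ) (y : Euc n) :
    gsq (tr K u) y ≤ gsq u y := by
  refine Finset.sum_le_sum fun i _ => ?_
  rw [pd_tr hu, mul_pow]
  exact mul_le_of_le_one_left (sq_nonneg _)
    (pow_le_one₀ (Real.smoothTransition.nonneg _) (Real.smoothTransition.le_one _))

/-! ### Asymptotic disjointness of the truncated components -/

lemma gk_two {s : ℝ} (hs : 0 < s) (z : Euc n) :
    gk s z = √2 ^ n * Real.exp (-‖z‖ ^ 2 / (4 * s)) * gk (2 * s) z := by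
  unfold gk
  have e1 : √(2 * Real.pi * (2 * s)) = √2 * √(2 * Real.pi * s) := by
    rw [← Real.sqrt_mul (by norm_num)]; ring_nf
  have e2 : Real.exp (-‖z‖ ^ 2 / (2 * s)) =
      Real.exp (-‖z‖ ^ 2 / (4 * s)) * Real.exp (-‖z‖ ^ 2 / (2 * (2 * s))) := by
    rw [← Real.exp_add]; congr 1; field_simp; ring
  have h2 : (√2 : ℝ) ≠ 0 := by positivity
  rw [e1, e2, mul_inv, mul_pow]
  have : (√2 : ℝ) ^ n * (√2)⁻¹ ^ n = 1 := by rw [← mul_pow, mul_inv_cancel₀ h2, one_pow]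
  calc _ = (√2 ^ n * (√2)⁻¹ ^ n) * ((√(2 * Real.pi * s))⁻¹ ^ n *
        (Real.exp (-‖z‖ ^ 2 / (4 * s)) * Real.exp (-‖z‖ ^ 2 / (2 * (2 * s))))) := by rw [this, one_mul]
    _ = _ := by ring

/-- A nonnegative function supported far away from the centre has a small mean. -/
lemma concentrate {F : Euc n → ℝ} (hF : ∀ y, 0 ≤ F y) (hi : GInt F) (x : Euc n) {s θ : ℝ}
    (hs : 0 < s) (hθ : ∀ y, F y ≠ 0 → Real.exp (-‖y - x‖ ^ 2 / (4 * s)) ≤ θ) :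
    ∫ y, F y ∂(gm x s) ≤ √2 ^ n * θ * ∫ y, F y ∂(gm x (2 * s)) := by
  rw [integral_gm, integral_gm, ← integral_const_mul]
  refine integral_mono (integrable_gm_iff.mp (hi x s hs))
    ((integrable_gm_iff.mp (hi x (2 * s) (by positivity))).const_mul _) fun y => ?_
  by_cases h0 : F y = 0
  · simp [h0]
  · have := hθ y h0
    simp only
    rw [gk_two hs, mul_assoc, mul_assoc]
    rw [mul_assoc]
    have h3 := mul_nonneg (gk_nonneg (2 * s) (y - x)) (hF y)
    gcongr

/-- Two components cannot both be large except far away from the centre. -/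
lemma Sol.far_aux {u v : Euc n → ℝ} (h : Sol u v) (x : Euc n) {s θ : ℝ} (hs : 0 < s) (hθ0 : 0 < θ)
    (hθ : θ * (2 * 4 ^ n) ≤ 1) (h1 : 1 ≤ θ ^ 80 * (s * mH u v x s)) {y : Euc n}
    (hu : θ * √(mA u x (4 * s)) < u y) (hv : θ * √(mA v x (4 * s)) < v y)
    (hle : mA v x (4 * s) ≤ mA u x (4 * s)) :
    Real.exp (-‖y - x‖ ^ 2 / (4 * s)) ≤ θ := by
  have hs4 : s < 4 * s := by linarith
  have b1 : mA u y s ≤ 2 ^ n * Real.exp (‖y - x‖ ^ 2 / (6 * s)) * mA u x (4 * s) := by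
    have := integral_gm_le hs hs4 x y (fun z => sq_nonneg (u z)) (h.pg.sq.gint x (4 * s) (by positivity))
    have e : √(4 * s / s) = 2 := by
      rw [mul_div_assoc, div_self hs.ne', mul_one]; rw [show (4 : ℝ) = 2 ^ 2 by norm_num]; simp
    rw [e, show 2 * (4 * s - s) = 6 * s by ring] at this
    exact this
  have b2 : mA v y s ≤ 2 ^ n * Real.exp (‖y - x‖ ^ 2 / (6 * s)) * mA v x (4 * s) := by
    have := integral_gm_le hs hs4 x y (fun z => sq_nonneg (v z))
      (h.symm.pg.sq.gint x (4 * s) (by positivity))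
    have e : √(4 * s / s) = 2 := by
      rw [mul_div_assoc, div_self hs.ne', mul_one]; rw [show (4 : ℝ) = 2 ^ 2 by norm_num]; simp
    rw [e, show 2 * (4 * s - s) = 6 * s by ring] at this
    exact this
  have hA := h.mA_pos x (s := 4 * s) (by positivity)
  have hB := h.symm.mA_pos x (s := 4 * s) (by positivity)
  have hp := h.prod_growth y hs
  have hH : mH u v x s ≤ 2 * mA u x (4 * s) := by
    have := h.mH_mono x hs hs4.le
    unfold mH at this ⊢; linarith
  set A := mA u x (4 * s)
  set B := mA v x (4 * s)
  set E := Real.exp (‖y - x‖ ^ 2 / (6 * s)) with hE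
  have hE0 : 0 < E := Real.exp_pos _
  have hu2 : θ ^ 2 * A ≤ u y ^ 2 := by
    have := pow_le_pow_left₀ (by positivity) hu.le 2
    rwa [mul_pow, Real.sq_sqrt hA.le] at this
  have hv2 : θ ^ 2 * B ≤ v y ^ 2 := by
    have := pow_le_pow_left₀ (by positivity) hv.le 2
    rwa [mul_pow, Real.sq_sqrt hB.le] at this
  set X := (s * (θ ^ 2 * A)) ^ (1 / 8 : ℝ) with hX
  have hX8 : X ^ 8 = s * (θ ^ 2 * A) := by
    rw [hX, ← Real.rpow_natCast, ← Real.rpow_mul (by positivity)]; norm_num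
  have hX0 : 0 ≤ X := by positivity
  have hXle : X ≤ (s * u y ^ 2) ^ (1 / 8 : ℝ) := by
    apply Real.rpow_le_rpow (by positivity) _ (by norm_num)
    gcongr
  have k1 : (θ ^ 2 * A) * (θ ^ 2 * B) * X ≤ (2 ^ n * E * A) * (2 ^ n * E * B) := by
    calc _ ≤ u y ^ 2 * v y ^ 2 * (s * u y ^ 2) ^ (1 / 8 : ℝ) := by gcongr
      _ ≤ mA u y s * mA v y s := hp
      _ ≤ _ := mul_le_mul b1 b2 (mA_nonneg _ _ _) (by positivity)
  have k2 : θ ^ 4 * X ≤ 4 ^ n * E ^ 2 := by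
    have e : (4 : ℝ) ^ n = 2 ^ n * 2 ^ n := by rw [← mul_pow]; norm_num
    have : (A * B) * (θ ^ 4 * X) ≤ (A * B) * (4 ^ n * E ^ 2) := by
      rw [e]; nlinarith
    exact le_of_mul_le_mul_left this (by positivity)
  have k3 : θ ^ 32 * (s * (θ ^ 2 * A)) ≤ (4 ^ n) ^ 8 * E ^ 16 := by
    have := pow_le_pow_left₀ (by positivity) k2 8
    rw [mul_pow, mul_pow, hX8] at this
    calc _ = (θ ^ 4) ^ 8 * (s * (θ ^ 2 * A)) := by ring
      _ ≤ _ := this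
      _ = _ := by ring
  have k4 : 1 ≤ θ ^ 46 * (2 * (4 ^ n) ^ 8 * E ^ 16) := by
    calc 1 ≤ θ ^ 80 * (s * mH u v x s) := h1
      _ ≤ θ ^ 80 * (s * (2 * A)) := by gcongr
      _ = θ ^ 46 * (2 * (θ ^ 32 * (s * (θ ^ 2 * A)))) := by ring
      _ ≤ θ ^ 46 * (2 * ((4 ^ n) ^ 8 * E ^ 16)) := by gcongr
      _ = _ := by ring
  have k5 : θ ^ 8 * (2 * (4 ^ n) ^ 8) ≤ 1 := by
    calc θ ^ 8 * (2 * (4 ^ n) ^ 8) ≤ θ ^ 8 * (2 ^ 8 * (4 ^ n) ^ 8) := by gcongr; norm_num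
      _ = (θ * (2 * 4 ^ n)) ^ 8 := by ring
      _ ≤ 1 := pow_le_one₀ (by positivity) hθ
  have k6 : 1 ≤ θ ^ 38 * E ^ 16 := by
    calc 1 ≤ θ ^ 46 * (2 * (4 ^ n) ^ 8 * E ^ 16) := k4
      _ = (θ ^ 8 * (2 * (4 ^ n) ^ 8)) * (θ ^ 38 * E ^ 16) := by ring
      _ ≤ 1 * (θ ^ 38 * E ^ 16) := by gcongr
      _ = _ := one_mul _
  set g := Real.exp (-‖y - x‖ ^ 2 / (4 * s)) with hg
  have k7 : E ^ 16 * g ^ 38 ≤ 1 := by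
    rw [hE, hg, ← Real.exp_nat_mul, ← Real.exp_nat_mul, ← Real.exp_add]
    apply Real.exp_le_one_iff.mpr
    have e : ((16 : ℕ) : ℝ) * (‖y - x‖ ^ 2 / (6 * s)) + ((38 : ℕ) : ℝ) * (-‖y - x‖ ^ 2 / (4 * s))
      = - (41 / 6 * (‖y - x‖ ^ 2 / s)) := by push_cast; field_simp; ring
    rw [e]
    have : 0 ≤ ‖y - x‖ ^ 2 / s := by positivity
    linarith
  have k8 : g ^ 38 ≤ θ ^ 38 := by
    have hg0 : 0 < g := Real.exp_pos _
    calc g ^ 38 = g ^ 38 * 1 := (mul_one _).symm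
      _ ≤ g ^ 38 * (θ ^ 38 * E ^ 16) := by gcongr
      _ = θ ^ 38 * (E ^ 16 * g ^ 38) := by ring
      _ ≤ θ ^ 38 * 1 := by gcongr
      _ = _ := mul_one _
  exact (pow_le_pow_iff_left₀ (Real.exp_pos _).le hθ0.le (by norm_num)).mp k8

/-- A point at which both components exceed the fraction `θ` of their root mean squares lies far
from the centre: otherwise `Sol.prod_growth` at that point would contradict doubling. -/
lemma Sol.far {u v : Euc n → ℝ} (h : Sol u v) (x : Euc n) {s θ : ℝ} (hs : 0 < s) (hθ0 : 0 < θ)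
    (hθ : θ * (2 * 4 ^ n) ≤ 1) (h1 : 1 ≤ θ ^ 80 * (s * mH u v x s)) {y : Euc n}
    (hu : θ * √(mA u x (4 * s)) < u y) (hv : θ * √(mA v x (4 * s)) < v y) :
    Real.exp (-‖y - x‖ ^ 2 / (4 * s)) ≤ θ := by
  rcases le_total (mA v x (4 * s)) (mA u x (4 * s)) with hle | hle
  · exact h.far_aux x hs hθ0 hθ h1 hu hv hle
  · exact h.symm.far_aux x hs hθ0 hθ (by rwa [mH_comm]) hv hu hle

lemma tr_nonneg {u v : Euc n → ℝ} (h : Sol u v) (K : ℝ) (y : Euc n) : 0 ≤ tr K u y :=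
  alp_nonneg (h.up y).le

lemma tr_le {u v : Euc n → ℝ} (h : Sol u v) (K : ℝ) (y : Euc n) : tr K u y ≤ u y :=
  alp_le (h.up y).le

lemma tr_ge {u v : Euc n → ℝ} (h : Sol u v) {K : ℝ} (hK : 0 < K) (y : Euc n) :
    u y - 2 * K ≤ tr K u y :=
  alp_ge hK (h.up y).le

lemma tr_eq_zero {u : Euc n → ℝ} {K : ℝ} (hK : 0 < K) {y : Euc n} (hy : u y ≤ K) : tr K u y = 0 :=
  alp_eq_zero hK hy

lemma pd_tr_eq_zero {u : Euc n → ℝ} (hu : ContDiff ℝ (⊤ : ℕ∞) u) {K : ℝ} (hK : 0 < K) (i : Fin n)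
    {y : Euc n} (hy : u y ≤ K) : pd i (tr K u) y = 0 := by
  rw [pd_tr hu, alp_deriv_eq_zero hK hy, zero_mul]

lemma Sol.pg_tr {u v : Euc n → ℝ} (h : Sol u v) (K : ℝ) : PG (tr K u) := by
  obtain ⟨_, C, m, hC⟩ := h.pg
  refine ⟨(contDiff_tr h.cu K).continuous, C, m, fun y => le_trans ?_ (hC y)⟩
  rw [abs_of_nonneg (tr_nonneg h K y), abs_of_pos (h.up y)]
  exact tr_le h K y

lemma Sol.c1_tr {u v : Euc n → ℝ} (h : Sol u v) (K : ℝ) : ContDiff ℝ 1 (tr K u) :=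
  (contDiff_tr h.cu K).of_le (by simp)

lemma Sol.gint_gsq_tr {u v : Euc n → ℝ} (h : Sol u v) (K : ℝ) : GInt (gsq (tr K u)) :=
  h.gint_gsq.mono (continuous_gsq (h.c1_tr K)) fun y => by
    rw [abs_of_nonneg (gsq_nonneg _ _)]; exact gsq_tr_le h.cu K y

lemma gint_pd_of_gsq {f : Euc n → ℝ} (hf : ContDiff ℝ 1 f) (hg : GInt (gsq f)) (i : Fin n) :
    GInt (fun y => pd i f y ^ 2) :=
  hg.mono ((continuous_pd hf i).pow 2) fun y => by
    rw [abs_of_nonneg (sq_nonneg _)]; exact pd_sq_le_gsq f i y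

lemma continuous_dot {f g : Euc n → ℝ} (hf : ContDiff ℝ 1 f) (hg : ContDiff ℝ 1 g) :
    Continuous fun y => ∑ i, pd i f y * pd i g y :=
  continuous_finsetSum _ fun i _ => (continuous_pd hf i).mul (continuous_pd hg i)

lemma gint_dot {f g : Euc n → ℝ} (hf : ContDiff ℝ 1 f) (hg : ContDiff ℝ 1 g)
    (hf2 : GInt (gsq f)) (hg2 : GInt (gsq g)) : GInt fun y => ∑ i, pd i f y * pd i g y :=
  GInt.sum fun i _ => (gint_pd_of_gsq hf hf2 i).mul_of_sq (gint_pd_of_gsq hg hg2 i)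
    (continuous_pd hf i) (continuous_pd hg i)

lemma dot_sq_le (f g : Euc n → ℝ) (y : Euc n) :
    (∑ i, pd i f y * pd i g y) ^ 2 ≤ gsq f y * gsq g y :=
  Finset.sum_mul_sq_le_sq_mul_sq _ _ _

lemma int_abs_dot_le {f g : Euc n → ℝ} (hf : ContDiff ℝ 1 f) (hg : ContDiff ℝ 1 g)
    (hf2 : GInt (gsq f)) (hg2 : GInt (gsq g)) (x : Euc n) {s : ℝ} (hs : 0 < s) :
    (∫ y, |∑ i, pd i f y * pd i g y| ∂(gm x s)) ^ 2 ≤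
      (∫ y, gsq f y ∂(gm x s)) * ∫ y, gsq g y ∂(gm x s) := by
  have e1 : ∀ y, √(gsq f y) ^ 2 = gsq f y := fun y => Real.sq_sqrt (gsq_nonneg _ _)
  have e2 : ∀ y, √(gsq g y) ^ 2 = gsq g y := fun y => Real.sq_sqrt (gsq_nonneg _ _)
  have c1 := (continuous_gsq hf).sqrt
  have c2 := (continuous_gsq hg).sqrt
  have i1 : GInt fun y => √(gsq f y) ^ 2 := by simpa only [e1] using hf2
  have i2 : GInt fun y => √(gsq g y) ^ 2 := by simpa only [e2] using hg2
  have i3 := i1.mul_of_sq i2 c1 c2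
  have := cs_int (i1 x s hs) (i2 x s hs) (i3 x s hs)
  simp only [e1, e2] at this
  refine le_trans (pow_le_pow_left₀ (integral_nonneg fun y => abs_nonneg _) ?_ 2) this
  refine integral_mono ((gint_dot hf hg hf2 hg2).abs x s hs) (i3 x s hs) fun y => ?_
  simp only
  apply abs_le_of_sq_le_sq _ (by positivity)
  rw [mul_pow, e1, e2]
  exact dot_sq_le f g y

lemma Sol.mD_tr_le {u v : Euc n → ℝ} (h : Sol u v) (K : ℝ) (x : Euc n) {s : ℝ} (hs : 0 < s) :
    ∫ y, gsq (tr K u) y ∂(gm x s) ≤ mD u x s :=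
  integral_mono (h.gint_gsq_tr K x s hs) (h.gint_gsq x s hs) fun y => gsq_tr_le h.cu K y

lemma Sol.mA_tr_le {u v : Euc n → ℝ} (h : Sol u v) (K : ℝ) (x : Euc n) {s : ℝ} (hs : 0 < s) :
    ∫ y, tr K u y ^ 2 ∂(gm x s) ≤ mA u x s :=
  integral_mono ((h.pg_tr K).sq.gint x s hs) (h.pg.sq.gint x s hs) fun y =>
    pow_le_pow_left₀ (tr_nonneg h K y) (tr_le h K y) 2

lemma Sol.mA_tr_ge {u v : Euc n → ℝ} (h : Sol u v) {K : ℝ} (hK : 0 < K) (x : Euc n) {s : ℝ}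
    (hs : 0 < s) : mA u x s - 4 * K * mU u x s ≤ ∫ y, tr K u y ^ 2 ∂(gm x s) := by
  unfold mA mU
  rw [← integral_const_mul, ← integral_sub (h.pg.sq.gint x s hs) ((h.pg.gint x s hs).const_mul _)]
  refine integral_mono ((h.pg.sq.gint x s hs).sub ((h.pg.gint x s hs).const_mul _))
    ((h.pg_tr K).sq.gint x s hs) fun y => ?_
  have := tr_nonneg h K y
  have := tr_le h K y
  have := tr_ge h hK y
  have := h.up y
  simp only
  nlinarith

/-- The truncated components are almost orthogonal. -/
lemma Sol.dp {u v : Euc n → ℝ} (h : Sol u v) (x : Euc n) {s θ : ℝ} (hs : 0 < s) (hθ0 : 0 < θ)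
    (hθ : θ * (2 * 4 ^ n) ≤ 1) (h1 : 1 ≤ θ ^ 80 * (s * mH u v x s)) {Ku Kv M : ℝ}
    (hKu : Ku = θ * √(mA u x (4 * s))) (hKv : Kv = θ * √(mA v x (4 * s)))
    (hM : M = √(mA u x (4 * s) * mA v x (4 * s))) :
    ∫ y, tr Ku u y * tr Kv v y ∂(gm x s) ≤ 2 ^ n * θ * M ∧
    s * |∫ y, ∑ i, pd i (tr Ku u) y * pd i (tr Kv v) y ∂(gm x s)| ≤ 2 ^ n * θ * M := by
  have hs2 : 0 < 2 * s := by positivity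
  have hs4 : 0 < 4 * s := by positivity
  have hA := h.mA_pos x hs4
  have hB := h.symm.mA_pos x hs4
  have hM0 : 0 ≤ M := hM ▸ Real.sqrt_nonneg _
  have hM2 : M ^ 2 = mA u x (4 * s) * mA v x (4 * s) := by rw [hM, Real.sq_sqrt (by positivity)]
  have hKu0 : 0 < Ku := by rw [hKu]; positivity
  have hKv0 : 0 < Kv := by rw [hKv]; positivity
  have e2 : (√2 : ℝ) ^ n * √2 ^ n = 2 ^ n := by rw [← mul_pow]; norm_num
  have e2' : (√2 : ℝ) ^ n ≤ 2 ^ n := by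
    apply pow_le_pow_left₀ (by positivity)
    rw [Real.sqrt_le_left (by norm_num)]; norm_num
  have hfar : ∀ y, (u y ≤ Ku → False) → (v y ≤ Kv → False) →
      Real.exp (-‖y - x‖ ^ 2 / (4 * s)) ≤ θ := fun y h3 h4 =>
    h.far x hs hθ0 hθ h1 (hKu ▸ not_le.mp h3) (hKv ▸ not_le.mp h4)
  constructor
  · have iab : GInt fun y => tr Ku u y * tr Kv v y := ((h.pg_tr Ku).mul (h.symm.pg_tr Kv)).gint
    have c := concentrate (F := fun y => tr Ku u y * tr Kv v y)
      (fun y => mul_nonneg (tr_nonneg h _ y) (tr_nonneg h.symm _ y)) iab x hs (θ := θ)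
      (fun y hy => hfar y (fun h3 => hy (by simp [tr_eq_zero hKu0 h3]))
        (fun h3 => hy (by simp [tr_eq_zero hKv0 h3])))
    have c2 := cs_int ((h.pg_tr Ku).sq.gint x _ hs2) ((h.symm.pg_tr Kv).sq.gint x _ hs2) (iab x _ hs2)
    have c3 : (∫ y, tr Ku u y * tr Kv v y ∂(gm x (2 * s))) ^ 2 ≤ M ^ 2 := by
      rw [hM2]
      refine c2.trans (mul_le_mul ?_ ?_ (integral_nonneg fun _ => sq_nonneg _) hA.le)
      · exact (h.mA_tr_le Ku x hs2).trans (h.mA_mono x hs2 (by linarith))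
      · exact (h.symm.mA_tr_le Kv x hs2).trans (h.symm.mA_mono x hs2 (by linarith))
    have c4 := (abs_le_of_sq_le_sq' c3 hM0).2
    have c5 : 0 ≤ ∫ y, tr Ku u y * tr Kv v y ∂(gm x (2 * s)) :=
      integral_nonneg fun y => mul_nonneg (tr_nonneg h _ y) (tr_nonneg h.symm _ y)
    refine c.trans ?_
    gcongr
  · have cu := h.c1_tr Ku
    have cv := h.symm.c1_tr Kv
    have idot := gint_dot cu cv (h.gint_gsq_tr Ku) (h.symm.gint_gsq_tr Kv)
    have c := concentrate (F := fun y => |∑ i, pd i (tr Ku u) y * pd i (tr Kv v) y|)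
      (fun y => abs_nonneg _) idot.abs x hs (θ := θ)
      (fun y hy => hfar y (fun h3 => hy (by simp [pd_tr_eq_zero h.cu hKu0 _ h3]))
        (fun h3 => hy (by simp [pd_tr_eq_zero h.cv hKv0 _ h3])))
    have c2 := int_abs_dot_le cu cv (h.gint_gsq_tr Ku) (h.symm.gint_gsq_tr Kv) x hs2
    set J := ∫ y, |∑ i, pd i (tr Ku u) y * pd i (tr Kv v) y| ∂(gm x (2 * s)) with hJ
    have k1 : (2 * s) * mD u x (2 * s) ≤ √2 ^ n * mA u x (4 * s) := by
      have := h.cac x hs2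
      rw [show 2 * (2 * s) = 4 * s by ring] at this
      nlinarith [mP_nonneg u v x (2 * s)]
    have k2 : (2 * s) * mD v x (2 * s) ≤ √2 ^ n * mA v x (4 * s) := by
      have := h.symm.cac x hs2
      rw [show 2 * (2 * s) = 4 * s by ring] at this
      nlinarith [mP_nonneg v u x (2 * s)]
    have c3 : ((2 * s) * J) ^ 2 ≤ (√2 ^ n * M) ^ 2 := by
      rw [mul_pow (2 * s) J, mul_pow _ M, hM2]
      calc (2 * s) ^ 2 * J ^ 2 ≤ (2 * s) ^ 2 * (mD u x (2 * s) * mD v x (2 * s)) := by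
            gcongr
            refine c2.trans (mul_le_mul (h.mD_tr_le Ku x hs2) (h.symm.mD_tr_le Kv x hs2)
              (integral_nonneg fun _ => gsq_nonneg _ _) (mD_nonneg _ _ _))
        _ = ((2 * s) * mD u x (2 * s)) * ((2 * s) * mD v x (2 * s)) := by ring
        _ ≤ (√2 ^ n * mA u x (4 * s)) * (√2 ^ n * mA v x (4 * s)) :=
            mul_le_mul k1 k2 (mul_nonneg hs2.le (mD_nonneg _ _ _)) (by positivity)
        _ = _ := by ring
    have c4 := (abs_le_of_sq_le_sq' c3 (by positivity)).2
    have c5 : |∫ y, ∑ i, pd i (tr Ku u) y * pd i (tr Kv v) y ∂(gm x s)| ≤ √2 ^ n * θ * J :=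
      (abs_integral_le_integral_abs).trans c
    have hJ0 : 0 ≤ J := integral_nonneg fun _ => abs_nonneg _
    calc _ ≤ s * (√2 ^ n * θ * J) := by gcongr
      _ ≤ √2 ^ n * θ * (2 * s * J) := by
        have : 0 ≤ √2 ^ n * θ * (s * J) := by positivity
        nlinarith
      _ ≤ √2 ^ n * θ * (√2 ^ n * M) := by gcongr
      _ = (√2 ^ n * √2 ^ n) * θ * M := by ring
      _ = _ := by rw [e2]

lemma contDiff_comb {a b : Euc n → ℝ} {m : WithTop ℕ∞} (ha : ContDiff ℝ m a) (hb : ContDiff ℝ m b)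
    (α β : ℝ) : ContDiff ℝ m fun y => α * a y - β * b y :=
  (contDiff_const.mul ha).sub (contDiff_const.mul hb)

lemma pd_comb {a b : Euc n → ℝ} (ha : ContDiff ℝ 1 a) (hb : ContDiff ℝ 1 b) (α β : ℝ) (i : Fin n)
    (y : Euc n) : pd i (fun y => α * a y - β * b y) y = α * pd i a y - β * pd i b y := by
  have da := ha.differentiable (by simp) y
  have db := hb.differentiable (by simp) y
  rw [pd_sub i (by fun_prop) (by fun_prop), pd_mul i (by fun_prop) da, pd_mul i (by fun_prop) db,
    pd_const, pd_const]
  ring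

lemma gsq_comb {a b : Euc n → ℝ} (ha : ContDiff ℝ 1 a) (hb : ContDiff ℝ 1 b) (α β : ℝ)
    (y : Euc n) : gsq (fun y => α * a y - β * b y) y =
      α ^ 2 * gsq a y + β ^ 2 * gsq b y - 2 * α * β * ∑ i, pd i a y * pd i b y := by
  unfold gsq
  simp_rw [pd_comb ha hb, Finset.mul_sum]
  rw [← Finset.sum_add_distrib, ← Finset.sum_sub_distrib]
  exact Finset.sum_congr rfl fun i _ => by ring

lemma gint_gsq_comb {a b : Euc n → ℝ} (ha : ContDiff ℝ 1 a) (hb : ContDiff ℝ 1 b)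
    (ga : GInt (gsq a)) (gb : GInt (gsq b)) (α β : ℝ) :
    GInt (gsq fun y => α * a y - β * b y) := by
  have := ((ga.const_mul (α ^ 2)).add (gb.const_mul (β ^ 2))).sub
    ((gint_dot ha hb ga gb).const_mul (2 * α * β))
  refine this.abs.mono (continuous_gsq (contDiff_comb ha hb α β)) fun y => ?_
  rw [gsq_comb ha hb]

lemma int_gsq_comb {a b : Euc n → ℝ} (ha : ContDiff ℝ 1 a) (hb : ContDiff ℝ 1 b)
    (ga : GInt (gsq a)) (gb : GInt (gsq b)) (α β : ℝ) (x : Euc n) {s : ℝ} (hs : 0 < s) :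
    ∫ y, gsq (fun y => α * a y - β * b y) y ∂(gm x s) = α ^ 2 * (∫ y, gsq a y ∂(gm x s))
      + β ^ 2 * (∫ y, gsq b y ∂(gm x s))
      - 2 * α * β * ∫ y, ∑ i, pd i a y * pd i b y ∂(gm x s) := by
  simp_rw [gsq_comb ha hb]
  have i1 := ga.const_mul (α ^ 2)
  have i2 := gb.const_mul (β ^ 2)
  rw [integral_sub ((i1.add i2) x s hs) (((gint_dot ha hb ga gb).const_mul (2 * α * β)) x s hs),
    integral_add (i1 x s hs) (i2 x s hs), integral_const_mul, integral_const_mul,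
    integral_const_mul]

lemma int_sq_comb {a b : Euc n → ℝ} (ha : PG a) (hb : PG b) (α β : ℝ) (x : Euc n) {s : ℝ}
    (hs : 0 < s) :
    ∫ y, (α * a y - β * b y) ^ 2 ∂(gm x s) = α ^ 2 * (∫ y, a y ^ 2 ∂(gm x s))
      + β ^ 2 * (∫ y, b y ^ 2 ∂(gm x s)) - 2 * α * β * ∫ y, a y * b y ∂(gm x s) := by
  have e : ∀ y, (α * a y - β * b y) ^ 2 = α ^ 2 * a y ^ 2 + β ^ 2 * b y ^ 2
    - 2 * α * β * (a y * b y) := fun y => by ring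
  simp_rw [e]
  have i1 := ha.sq.gint.const_mul (α ^ 2)
  have i2 := hb.sq.gint.const_mul (β ^ 2)
  rw [integral_sub ((i1.add i2) x s hs) (((ha.mul hb).gint.const_mul (2 * α * β)) x s hs),
    integral_add (i1 x s hs) (i2 x s hs), integral_const_mul, integral_const_mul,
    integral_const_mul]

lemma int_comb {a b : Euc n → ℝ} (ha : GInt a) (hb : GInt b) (α β : ℝ) (x : Euc n) {s : ℝ}
    (hs : 0 < s) :
    ∫ y, (α * a y - β * b y) ∂(gm x s) = α * (∫ y, a y ∂(gm x s)) - β * ∫ y, b y ∂(gm x s) := by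
  rw [integral_sub ((ha x s hs).const_mul _) ((hb x s hs).const_mul _), integral_const_mul,
    integral_const_mul]

/-! ### Flatness at balanced points -/

lemma inner_sum (e y : Euc n) : ⟪e, y⟫ = ∑ i, e i * y i := by
  simp [PiLp.inner_apply, mul_comm]

lemma norm_sq_sum (e : Euc n) : ‖e‖ ^ 2 = ∑ i, e i ^ 2 := by
  simp [EuclideanSpace.norm_sq_eq]

lemma contDiff_aff (e x : Euc n) {m : WithTop ℕ∞} : ContDiff ℝ m fun y : Euc n => ⟪e, y - x⟫ :=
  contDiff_const.inner ℝ (contDiff_id.sub contDiff_const)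

lemma pd_aff (e x : Euc n) (i : Fin n) (y : Euc n) : pd i (fun y : Euc n => ⟪e, y - x⟫) y = e i := by
  have e1 : (fun y : Euc n => ⟪e, y - x⟫) = fun y => ∑ j, e j * (y j - x j) :=
    funext fun y => by rw [inner_sum]; simp
  have hd : ∀ j, DifferentiableAt ℝ (fun y : Euc n => y j - x j) y := fun j =>
    (contDiff_coord (m := 1) j x).differentiable (by simp) y
  rw [e1, pd_sum i fun j _ => (hd j).const_mul _]
  simp_rw [fun j => pd_mul i (differentiableAt_const (e j)) (hd j), pd_const, pd_coord]
  simp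

lemma pg_aff (e x : Euc n) : PG fun y : Euc n => ⟪e, y - x⟫ := by
  refine ⟨(contDiff_aff (m := 1) e x).continuous, ‖e‖ * (1 + ‖x‖), 1, fun y => ?_⟩
  have h1 := abs_real_inner_le_norm e (y - x)
  have h2 := norm_sub_le y x
  have h3 : ‖y - x‖ ≤ (1 + ‖x‖) * (1 + ‖y‖ ^ 2) := by
    nlinarith [norm_nonneg x, norm_nonneg y, sq_nonneg (‖y‖ - 1), mul_nonneg (norm_nonneg x) (sq_nonneg ‖y‖)]
  calc _ ≤ ‖e‖ * ‖y - x‖ := h1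
    _ ≤ ‖e‖ * ((1 + ‖x‖) * (1 + ‖y‖ ^ 2)) := by gcongr
    _ = _ := by ring

lemma gint_pd_one {f : Euc n → ℝ} (hf : ContDiff ℝ 1 f) (hg : GInt (gsq f)) (i : Fin n) :
    GInt (pd i f) := by
  have := (gint_pd_of_gsq hf hg i).mul_of_sq (g := fun _ => 1) (by simpa using gint_const 1)
    (continuous_pd hf i) continuous_const
  simpa using this

lemma int_aff (e x z : Euc n) {s : ℝ} (hs : 0 < s) : ∫ y, ⟪e, y - x⟫ ∂(gm z s) = ⟪e, z - x⟫ := by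
  have h0 : ∫ y, ⟪e, y - z⟫ ∂(gm z s) = 0 := by
    have := gauss_div (X := fun i _ => e i) (fun i => contDiff_const) (fun i => gint_const _)
      (by simp only [pd_const, Finset.sum_const_zero]; exact gint_const 0) z hs
    simp only [pd_const, Finset.sum_const_zero, integral_zero] at this
    have e1 : ∀ y : Euc n, ⟪e, y - z⟫ = ∑ i, (y i - z i) * e i := fun y => by
      rw [inner_sum]; exact Finset.sum_congr rfl fun i _ => by simp [mul_comm]
    simp_rw [e1]
    have := this.symm
    rwa [mul_eq_zero, or_iff_right (inv_ne_zero hs.ne')] at this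
  have e2 : ∀ y : Euc n, ⟪e, y - x⟫ = ⟪e, y - z⟫ + ⟪e, z - x⟫ := fun y => by
    rw [← inner_add_right]; congr 1; abel
  have := gm_prob z hs
  rw [funext e2, integral_add ((pg_aff e z).gint z s hs) (integrable_const _), h0]
  simp

lemma int_aff_sq (e x z : Euc n) {s : ℝ} (hs : 0 < s) :
    ∫ y, ⟪e, y - x⟫ ^ 2 ∂(gm z s) = ⟪e, z - x⟫ ^ 2 + s * ‖e‖ ^ 2 := by
  have h0 : ∫ y, ⟪e, y - z⟫ ^ 2 ∂(gm z s) = s * ‖e‖ ^ 2 := by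
    have hX : ∀ i, GInt fun y => e i * ⟪e, y - z⟫ := fun i => (pg_aff e z).gint.const_mul _
    have hp : ∀ i y, pd i (fun y => e i * ⟪e, y - z⟫) y = e i ^ 2 := fun i y => by
      rw [pd_mul i (by fun_prop) ((contDiff_aff (m := 1) e z).differentiable (by simp) y), pd_const,
        pd_aff]; ring
    have := gauss_div (X := fun i y => e i * ⟪e, y - z⟫)
      (fun i => contDiff_const.mul (contDiff_aff e z)) hX
      (by simp only [hp]; exact gint_const _) z hs
    simp only [hp] at this
    have hpr := gm_prob z hs
    rw [integral_const, ← norm_sq_sum] at this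
    simp only [probReal_univ, smul_eq_mul, one_mul] at this
    rw [this]
    have e1 : ∀ y : Euc n, ⟪e, y - z⟫ ^ 2 = ∑ i, (y i - z i) * (e i * ⟪e, y - z⟫) := fun y => by
      rw [sq]; nth_rw 1 [inner_sum]
      rw [Finset.sum_mul]; exact Finset.sum_congr rfl fun i _ => by simp; ring
    simp_rw [e1]
    rw [← mul_assoc, mul_inv_cancel₀ hs.ne', one_mul]
  have e2 : ∀ y : Euc n, ⟪e, y - x⟫ ^ 2 = ⟪e, y - z⟫ ^ 2 + 2 * ⟪e, z - x⟫ * ⟪e, y - z⟫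
      + ⟪e, z - x⟫ ^ 2 := fun y => by
    have : ⟪e, y - x⟫ = ⟪e, y - z⟫ + ⟪e, z - x⟫ := by
      rw [← inner_add_right]; congr 1; abel
    rw [this]; ring
  have := gm_prob z hs
  have i1 := (pg_aff e z).sq.gint
  have i2 := (pg_aff e z).gint.const_mul (2 * ⟪e, z - x⟫)
  rw [funext e2, integral_add ((i1.add i2) z s hs) (integrable_const _), integral_add (i1 z s hs) (i2 z s hs),
    h0, integral_const_mul, int_aff e z z hs]
  simp
  ring

/-- The dimensional constant in the flatness estimate. -/
def cF (n : ℕ) : ℝ := 2 ^ (n + 8)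

lemma cF_ge (n : ℕ) : 256 ≤ cF n := by
  unfold cF; rw [pow_add]
  have : (1 : ℝ) ≤ 2 ^ n := one_le_pow₀ (by norm_num)
  linarith

lemma cF_eq (n : ℕ) : cF n = 256 * 2 ^ n := by
  unfold cF; rw [pow_add]; ring

set_option maxHeartbeats 1600000 in
/-- At a balanced point the difference `u - v` is close to an affine function vanishing at the
centre, whose slope is determined by the second moment. -/
lemma Sol.flat {u v : Euc n → ℝ} (h : Sol u v) (x : Euc n) {s θ : ℝ} (hs : 0 < s) (hθ0 : 0 < θ)
    (hθ : θ * (2 * 4 ^ n) ≤ 1) (h1 : 1 ≤ θ ^ 80 * (s * mH u v x s)) (h0 : mU u x s = mU v x s) :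
    ∃ e : Euc n, ∫ y, (u y - v y - ⟪e, y - x⟫) ^ 2 ∂(gm x s) ≤ 5 * cF n * θ * mH u v x s ∧
      |s * ‖e‖ ^ 2 - mH u v x s| ≤ 3 * cF n * θ * mH u v x s := by
  have hs4 : 0 < 4 * s := by positivity
  have hpr := gm_prob x hs
  have hA := h.mA_pos x hs4
  have hB := h.symm.mA_pos x hs4
  have hH := h.mH_pos x hs
  have hH4 : mA u x (4 * s) + mA v x (4 * s) ≤ 16 * mH u v x s := by
    have := h.mH_doubling x hs (t := 4 * s) (by linarith)
    rw [mul_div_assoc, div_self hs.ne'] at this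
    unfold mH at this ⊢; linarith
  set Ku := θ * √(mA u x (4 * s)) with hKu
  set Kv := θ * √(mA v x (4 * s)) with hKv
  set M := √(mA u x (4 * s) * mA v x (4 * s)) with hM
  obtain ⟨d1, d2⟩ := h.dp x hs hθ0 hθ h1 hKu hKv hM
  have hKu0 : 0 < Ku := by positivity
  have hKv0 : 0 < Kv := by positivity
  have hM8 : M ≤ 8 * mH u v x s := by
    rw [hM, Real.sqrt_le_left (by positivity)]
    nlinarith [sq_nonneg (mA u x (4 * s) - mA v x (4 * s))]
  have hM0 : 0 ≤ M := Real.sqrt_nonneg _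
  have hN : (1 : ℝ) ≤ 2 ^ n := one_le_pow₀ (by norm_num)
  have hθ1 : θ ≤ 1 := by
    have : (1 : ℝ) ≤ 4 ^ n := one_le_pow₀ (by norm_num)
    nlinarith
  set a := tr Ku u
  set b := tr Kv v
  have ca : ContDiff ℝ 1 a := h.c1_tr Ku
  have cb : ContDiff ℝ 1 b := h.symm.c1_tr Kv
  have ga : GInt (gsq a) := h.gint_gsq_tr Ku
  have gb : GInt (gsq b) := h.symm.gint_gsq_tr Kv
  have pa : PG a := h.pg_tr Ku
  have pb : PG b := h.symm.pg_tr Kv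
  set f : Euc n → ℝ := fun y => 1 * a y - 1 * b y with hf
  have cf : ContDiff ℝ (⊤ : ℕ∞) f := contDiff_comb (contDiff_tr h.cu Ku) (contDiff_tr h.cv Kv) 1 1
  have cf1 : ContDiff ℝ 1 f := contDiff_comb ca cb 1 1
  have gf : GInt (gsq f) := gint_gsq_comb ca cb ga gb 1 1
  have pf : PG f := (pa.const_mul 1).sub (pb.const_mul 1)
  have E1 := int_gsq_comb ca cb ga gb 1 1 x hs
  have E2 := int_sq_comb pa pb 1 1 x hs
  have E3 := int_comb pa.gint pb.gint 1 1 x hs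
  have T1 := h.mD_tr_le Ku x hs
  have T2 := h.symm.mD_tr_le Kv x hs
  have T3 := h.mA_tr_ge hKu0 x hs
  have T4 := h.symm.mA_tr_ge hKv0 x hs
  set H := mH u v x s with hHdef
  have hHs : mA u x s + mA v x s = H := rfl
  have G1 : s * ∫ y, gsq f y ∂(gm x s) ≤ H + 16 * 2 ^ n * θ * H := by
    have en := h.energy_le x hs
    have d2' := neg_le_of_abs_le (le_refl |∫ y, ∑ i, pd i a y * pd i b y ∂(gm x s)|)
    rw [E1]
    have p1 := mP_nonneg u v x s
    have m1 : 2 ^ n * θ * M ≤ 2 ^ n * θ * (8 * H) := by gcongr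
    linarith [mul_le_mul_of_nonneg_left T1 hs.le, mul_le_mul_of_nonneg_left T2 hs.le,
      mul_le_mul_of_nonneg_left d2' hs.le, mul_nonneg hs.le p1]
  have sq1 : Ku * mU u x s ≤ θ * mA u x (4 * s) := by
    have l1 : mU u x s ≤ √(mA u x (4 * s)) := by
      apply Real.le_sqrt_of_sq_le
      exact (h.mU_sq_le x hs).trans (h.mA_mono x hs (by linarith))
    calc Ku * mU u x s ≤ Ku * √(mA u x (4 * s)) := by gcongr
      _ = θ * (√(mA u x (4 * s)) * √(mA u x (4 * s))) := by rw [hKu]; ring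
      _ = _ := by rw [Real.mul_self_sqrt hA.le]
  have sq2 : Kv * mU v x s ≤ θ * mA v x (4 * s) := by
    have l1 : mU v x s ≤ √(mA v x (4 * s)) := by
      apply Real.le_sqrt_of_sq_le
      exact (h.symm.mU_sq_le x hs).trans (h.symm.mA_mono x hs (by linarith))
    calc Kv * mU v x s ≤ Kv * √(mA v x (4 * s)) := by gcongr
      _ = θ * (√(mA v x (4 * s)) * √(mA v x (4 * s))) := by rw [hKv]; ring
      _ = _ := by rw [Real.mul_self_sqrt hB.le]
  have G2 : H - (64 + 16 * 2 ^ n) * θ * H ≤ ∫ y, f y ^ 2 ∂(gm x s) := by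
    rw [hf]
    simp only
    rw [E2]
    have m1 : 2 ^ n * θ * M ≤ 2 ^ n * θ * (8 * H) := by gcongr
    have m2 := mul_le_mul_of_nonneg_left hH4 hθ0.le
    linarith
  have hdiff : ∀ y, (u y - v y - f y) ^ 2 ≤ 64 * θ ^ 2 * H := fun y => by
    have a1 := tr_le h Ku y
    have a2 := tr_ge h hKu0 y
    have a3 := tr_le h.symm Kv y
    have a4 := tr_ge h.symm hKv0 y
    have e : u y - v y - f y = (u y - a y) - (v y - b y) := by simp only [hf]; ring
    rw [e]
    have k1 : Ku ^ 2 = θ ^ 2 * mA u x (4 * s) := by rw [hKu, mul_pow, Real.sq_sqrt hA.le]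
    have k2 : Kv ^ 2 = θ ^ 2 * mA v x (4 * s) := by rw [hKv, mul_pow, Real.sq_sqrt hB.le]
    have m2 := mul_le_mul_of_nonneg_left hH4 (sq_nonneg θ)
    change a y ≤ u y at a1
    change u y - 2 * Ku ≤ a y at a2
    change b y ≤ v y at a3
    change v y - 2 * Kv ≤ b y at a4
    nlinarith [mul_nonneg (sub_nonneg.mpr a1) (sub_nonneg.mpr a3), mul_pos hKu0 hKv0]
  have hmean : (∫ y, f y ∂(gm x s)) ^ 2 ≤ 64 * θ ^ 2 * H := by
    have pw : PG fun y => u y - v y - f y := (h.pg.sub h.symm.pg).sub pf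
    have e : ∫ y, (u y - v y - f y) ∂(gm x s) = - ∫ y, f y ∂(gm x s) := by
      rw [integral_sub ((h.pg.sub h.symm.pg).gint x s hs) (pf.gint x s hs),
        integral_sub (h.pg.gint x s hs) (h.symm.pg.gint x s hs)]
      unfold mU at h0
      rw [h0]; ring
    have c := sq_mean_le (pw.sq.gint x s hs) (pw.gint x s hs)
    rw [e, neg_sq] at c
    refine c.trans ?_
    calc _ ≤ ∫ _, 64 * θ ^ 2 * H ∂(gm x s) :=
          integral_mono (pw.sq.gint x s hs) (integrable_const _) hdiff
      _ = _ := by simp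
  have hθ2 : θ ^ 2 ≤ θ := by nlinarith
  have hθH : 0 ≤ θ * H := by positivity
  have hθ2H : θ ^ 2 * H ≤ θ * H := by gcongr
  have hNθH : θ * H ≤ 2 ^ n * (θ * H) := by nlinarith
  have gap := poincare_gap cf pf.sq.gint gf x hs
  have poi := poincare cf pf.sq.gint gf x hs
  have ssq := sum_sq_mean_le cf1 gf x hs
  set e : Euc n := WithLp.toLp 2 fun i => ∫ y, pd i f y ∂(gm x s) with he
  have hei : ∀ i, ∫ y, pd i f y ∂(gm x s) = e i := fun i => rfl
  simp_rw [hei] at gap poi ssq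
  rw [← norm_sq_sum] at poi ssq
  have hcF := cF_eq n
  refine ⟨e, ?_, ?_⟩
  · set g : Euc n → ℝ := fun y => 1 * f y - 1 * ⟪e, y - x⟫ with hg
    have ge : GInt (gsq fun y => ⟪e, y - x⟫) := by
      have : gsq (fun y => ⟪e, y - x⟫) = fun _ : Euc n => ‖e‖ ^ 2 := funext fun y => by
        unfold gsq; simp_rw [pd_aff]; rw [norm_sq_sum]
      rw [this]; exact gint_const _
    have pg' : PG g := (pf.const_mul 1).sub ((pg_aff e x).const_mul 1)
    have cg : ContDiff ℝ (⊤ : ℕ∞) g := contDiff_comb cf (contDiff_aff e x) 1 1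
    have gg : GInt (gsq g) := gint_gsq_comb cf1 (contDiff_aff e x) gf ge 1 1
    have hgs : ∀ y, gsq g y = ∑ i, (pd i f y - e i) ^ 2 := fun y => by
      unfold gsq
      exact Finset.sum_congr rfl fun i _ => by
        rw [hg, pd_comb cf1 (contDiff_aff e x), pd_aff]; ring
    have pb := poincare_basic cg pg'.sq.gint gg x hs
    simp_rw [hgs] at pb
    have hgm : ∫ y, g y ∂(gm x s) = ∫ y, f y ∂(gm x s) := by
      have := int_comb pf.gint (pg_aff e x).gint 1 1 x hs
      rw [int_aff e x x hs] at this
      rw [hg]; simpa using this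
    rw [hgm] at pb
    have hg2 : ∫ y, g y ^ 2 ∂(gm x s) ≤ (128 + 32 * 2 ^ n) * θ * H * 2 + 192 * θ ^ 2 * H := by
      linarith
    have pw : PG fun y => u y - v y - ⟪e, y - x⟫ := (h.pg.sub h.symm.pg).sub (pg_aff e x)
    calc ∫ y, (u y - v y - ⟪e, y - x⟫) ^ 2 ∂(gm x s)
        ≤ ∫ y, (2 * g y ^ 2 + 128 * θ ^ 2 * H) ∂(gm x s) := by
          refine integral_mono (pw.sq.gint x s hs) (((pg'.sq.gint.const_mul 2).add
            (gint_const (128 * θ ^ 2 * H))) x s hs) fun y => ?_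
          have := hdiff y
          simp only [hg, one_mul]
          nlinarith [sq_nonneg (u y - v y - f y - (f y - ⟪e, y - x⟫))]
      _ = 2 * (∫ y, g y ^ 2 ∂(gm x s)) + 128 * θ ^ 2 * H := by
          rw [integral_add ((pg'.sq.gint.const_mul 2) x s hs) (integrable_const _),
            integral_const_mul]
          simp
      _ ≤ _ := by rw [hcF]; linarith
  · rw [abs_le, hcF]
    constructor
    · linarith
    · have := mul_le_mul_of_nonneg_left ssq hs.le
      linarith

/-! ### Neither component is negligible at infinity -/

/-- A reverse Hölder inequality, from the sub-mean-value property. -/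
lemma Sol.mA_le_mU {u v : Euc n → ℝ} (h : Sol u v) (x : Euc n) {s : ℝ} (hs : 0 < s) :
    mA u x (s / 8) ≤ 4 ^ n * mU u x s ^ 2 := by
  have hs8 : 0 < s / 8 := by positivity
  have hU := h.mU_pos x hs
  have h1 : ∀ y, u y ≤ √2 ^ n * Real.exp (‖y - x‖ ^ 2 / s) * mU u x s := fun y => by
    have k1 := h.le_mU y (s := s / 2) (by positivity)
    have k2 := integral_gm_le (s' := s / 2) (by positivity) (by linarith) x y (fun z => (h.up z).le)
      (h.pg.gint x s hs)
    have e1 : s / (s / 2) = 2 := by field_simp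
    have e2 : 2 * (s - s / 2) = s := by ring
    rw [e1, e2] at k2
    exact k1.trans k2
  have hg2 := fun z : Euc n => gk_two hs8 z
  have e3 : 4 * (s / 8) = s / 2 := by ring
  have e4 : 2 * (s / 8) = s / 4 := by ring
  rw [e3, e4] at hg2
  have e2 : (√2 : ℝ) ^ n * √2 ^ n = 2 ^ n := by rw [← mul_pow]; norm_num
  have e2' : (√2 : ℝ) ^ n ≤ 2 ^ n := by
    apply pow_le_pow_left₀ (by positivity)
    rw [Real.sqrt_le_left (by norm_num)]; norm_num
  have e5 : (4 : ℝ) ^ n = 2 ^ n * 2 ^ n := by rw [← mul_pow]; norm_num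
  have key : ∀ y, gk (s / 8) (y - x) * u y ^ 2 ≤ gk (s / 4) (y - x) * (4 ^ n * mU u x s ^ 2) := by
    intro y
    have k := pow_le_pow_left₀ (h.up y).le (h1 y) 2
    have hE : Real.exp (-‖y - x‖ ^ 2 / (s / 2)) * Real.exp (‖y - x‖ ^ 2 / s) ^ 2 = 1 := by
      rw [← Real.exp_nat_mul, ← Real.exp_add, Real.exp_eq_one_iff]; push_cast; field_simp; ring
    have hk := gk_nonneg (s / 4) (y - x)
    calc _ ≤ gk (s / 8) (y - x) * (√2 ^ n * Real.exp (‖y - x‖ ^ 2 / s) * mU u x s) ^ 2 := by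
          have := gk_nonneg (s / 8) (y - x)
          gcongr
      _ = (Real.exp (-‖y - x‖ ^ 2 / (s / 2)) * Real.exp (‖y - x‖ ^ 2 / s) ^ 2) *
          (√2 ^ n * (√2 ^ n * √2 ^ n)) * (gk (s / 4) (y - x) * mU u x s ^ 2) := by rw [hg2]; ring
      _ = √2 ^ n * 2 ^ n * (gk (s / 4) (y - x) * mU u x s ^ 2) := by rw [hE, e2]; ring
      _ ≤ 2 ^ n * 2 ^ n * (gk (s / 4) (y - x) * mU u x s ^ 2) := by gcongr
      _ = _ := by rw [e5]; ring
  have hs4 : 0 < s / 4 := by positivity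
  have hp := gm_prob x hs4
  have := integral_mono (integrable_gm_iff.mp (h.pg.sq.gint x _ hs8))
    (integrable_gm_iff.mp (integrable_const (μ := gm x (s / 4)) (4 ^ n * mU u x s ^ 2))) key
  rw [← integral_gm, ← integral_gm] at this
  simpa [mA] using this

set_option maxHeartbeats 1600000 in
/-- If `v` is the minor component, the Poincaré inequality forces its second moment to grow almost
at least linearly. -/
lemma Sol.minor_growth {u v : Euc n → ℝ} (h : Sol u v) (x : Euc n) {s θ : ℝ} (hs : 0 < s)
    (hθ0 : 0 < θ) (hθ : θ * (2 * 4 ^ n) ≤ 1) (h1 : 1 ≤ θ ^ 80 * (s * mH u v x s)) {c : ℝ}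
    (hc : 0 < c) (hcθ : 16 * θ ≤ c) (hU : c ^ 2 * mH u v x s ≤ mU u x s ^ 2)
    (hm : mA v x s ≤ c ^ 2 / 8 * mH u v x s) :
    -(2 * (4 + 2 * 2 ^ n) * (64 / c ^ 2 + 1) * θ * mA v x (4 * s)) ≤ s * mD v x s - mA v x s := by
  have hs4 : 0 < 4 * s := by positivity
  have hpr := gm_prob x hs
  have hA := h.mA_pos x hs4
  have hB := h.symm.mA_pos x hs4
  have hH := h.mH_pos x hs
  have hH4 : mA u x (4 * s) + mA v x (4 * s) ≤ 16 * mH u v x s := by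
    have := h.mH_doubling x hs (t := 4 * s) (by linarith)
    rw [mul_div_assoc, div_self hs.ne'] at this
    unfold mH at this ⊢; linarith
  set Ku := θ * √(mA u x (4 * s)) with hKu
  set Kv := θ * √(mA v x (4 * s)) with hKv
  set M := √(mA u x (4 * s) * mA v x (4 * s)) with hM
  obtain ⟨d1, d2⟩ := h.dp x hs hθ0 hθ h1 hKu hKv hM
  have hKu0 : 0 < Ku := by positivity
  have hKv0 : 0 < Kv := by positivity
  have hM0 : 0 ≤ M := Real.sqrt_nonneg _
  have hM2 : M ^ 2 = mA u x (4 * s) * mA v x (4 * s) := by rw [hM, Real.sq_sqrt (by positivity)]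
  set a := tr Ku u with ha
  set b := tr Kv v with hb
  have ca : ContDiff ℝ 1 a := h.c1_tr Ku
  have cb : ContDiff ℝ 1 b := h.symm.c1_tr Kv
  have ga : GInt (gsq a) := h.gint_gsq_tr Ku
  have gb : GInt (gsq b) := h.symm.gint_gsq_tr Kv
  have pa : PG a := h.pg_tr Ku
  have pb : PG b := h.symm.pg_tr Kv
  set α := ∫ y, b y ∂(gm x s) with hα
  set β := ∫ y, a y ∂(gm x s) with hβ
  have hα0 : 0 ≤ α := integral_nonneg fun y => tr_nonneg h.symm Kv y
  have hβ0 : 0 ≤ β := integral_nonneg fun y => tr_nonneg h Ku y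
  have cf : ContDiff ℝ (⊤ : ℕ∞) fun y => α * a y - β * b y :=
    contDiff_comb (contDiff_tr h.cu Ku) (contDiff_tr h.cv Kv) α β
  have gf : GInt (gsq fun y => α * a y - β * b y) := gint_gsq_comb ca cb ga gb α β
  have pf : PG fun y => α * a y - β * b y := (pa.const_mul α).sub (pb.const_mul β)
  have poi := poincare_basic cf pf.sq.gint gf x hs
  rw [int_gsq_comb ca cb ga gb α β x hs, int_sq_comb pa pb α β x hs,
    int_comb pa.gint pb.gint α β x hs, ← hα, ← hβ, show α * β - β * α = 0 by ring] at poi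
  have T1 := h.mD_tr_le Ku x hs
  have T2 := h.symm.mD_tr_le Kv x hs
  have T3 := h.mA_tr_ge hKu0 x hs
  have T4 := h.symm.mA_tr_ge hKv0 x hs
  have T5 := h.symm.mA_tr_le Kv x hs
  have sq1 : Ku * mU u x s ≤ θ * mA u x (4 * s) := by
    have l1 : mU u x s ≤ √(mA u x (4 * s)) := by
      apply Real.le_sqrt_of_sq_le
      exact (h.mU_sq_le x hs).trans (h.mA_mono x hs (by linarith))
    calc Ku * mU u x s ≤ Ku * √(mA u x (4 * s)) := by gcongr
      _ = θ * (√(mA u x (4 * s)) * √(mA u x (4 * s))) := by rw [hKu]; ring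
      _ = _ := by rw [Real.mul_self_sqrt hA.le]
  have sq2 : Kv * mU v x s ≤ θ * mA v x (4 * s) := by
    have l1 : mU v x s ≤ √(mA v x (4 * s)) := by
      apply Real.le_sqrt_of_sq_le
      exact (h.symm.mU_sq_le x hs).trans (h.symm.mA_mono x hs (by linarith))
    calc Kv * mU v x s ≤ Kv * √(mA v x (4 * s)) := by gcongr
      _ = θ * (√(mA v x (4 * s)) * √(mA v x (4 * s))) := by rw [hKv]; ring
      _ = _ := by rw [Real.mul_self_sqrt hB.le]
  have hen := h.energy_le x hs
  have hPn := mP_nonneg u v x s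
  have hβU : mU u x s - 2 * Ku ≤ β := by
    rw [hβ]
    unfold mU
    have : (∫ y, u y ∂(gm x s)) - 2 * Ku = ∫ y, (u y - 2 * Ku) ∂(gm x s) := by
      rw [integral_sub (h.pg.gint x s hs) (integrable_const _)]; simp
    rw [this]
    exact integral_mono ((h.pg.gint x s hs).sub (integrable_const _)) (pa.gint x s hs)
      fun y => tr_ge h hKu0 y
  have hαA : α ^ 2 ≤ mA v x s := (sq_mean_le (pb.sq.gint x s hs) (pb.gint x s hs)).trans T5
  set H := mH u v x s with hHdef
  have hHs : mA u x s + mA v x s = H := rfl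
  have hβ2 : c ^ 2 / 4 * H ≤ β ^ 2 := by
    have q0 := Real.sqrt_nonneg H
    have q1 : c * √H ≤ mU u x s := by
      apply abs_le_of_sq_le_sq' _ (h.mU_pos x hs).le |>.2
      rw [mul_pow, Real.sq_sqrt hH.le]; exact hU
    have q2 : Ku ≤ θ * (4 * √H) := by
      rw [hKu]; gcongr
      rw [Real.sqrt_le_left (by positivity), mul_pow, Real.sq_sqrt hH.le]; linarith
    have q3 : c / 2 * √H ≤ β := by
      have := mul_le_mul_of_nonneg_right hcθ q0
      nlinarith
    have := pow_le_pow_left₀ (by positivity) q3 2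
    rw [mul_pow, Real.sq_sqrt hH.le] at this
    linarith
  have hαβ : α ^ 2 ≤ β ^ 2 / 2 := by linarith
  set N : ℝ := 2 ^ n with hN
  have hN0 : 0 < N := by positivity
  have hAv := mA_nonneg v x s
  have hmono := h.symm.mA_mono x hs (t := 4 * s) (by linarith)
  set J := ∫ y, ∑ i, pd i a y * pd i b y ∂(gm x s)
  have d2' : -(s * J) ≤ N * θ * M := by
    have := neg_le_abs (s * J)
    rw [abs_mul, abs_of_pos hs] at this
    exact this.trans d2
  have hαβ0 : 0 ≤ α * β := by positivity
  -- Poincaré inequality for the balanced combination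
  have P1 : α ^ 2 * (s * mD u x s - mA u x s) + β ^ 2 * (s * mD v x s - mA v x s) ≥
      -(4 + 2 * N) * θ * (α ^ 2 * mA u x (4 * s) + β ^ 2 * mA v x (4 * s)) := by
    have a1 := mul_le_mul_of_nonneg_left (mul_le_mul_of_nonneg_left T1 hs.le) (sq_nonneg α)
    have a2 := mul_le_mul_of_nonneg_left (mul_le_mul_of_nonneg_left T2 hs.le) (sq_nonneg β)
    have a3 := mul_le_mul_of_nonneg_left T3 (sq_nonneg α)
    have a4 := mul_le_mul_of_nonneg_left T4 (sq_nonneg β)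
    have a5 := mul_le_mul_of_nonneg_left sq1 (sq_nonneg α)
    have a6 := mul_le_mul_of_nonneg_left sq2 (sq_nonneg β)
    have a7 := mul_le_mul_of_nonneg_left d1 hαβ0
    have a8 := mul_le_mul_of_nonneg_left d2' hαβ0
    have a9 : 2 * (α * β) * M ≤ α ^ 2 * mA u x (4 * s) + β ^ 2 * mA v x (4 * s) := by
      apply abs_le_of_sq_le_sq' _ (by positivity) |>.2
      calc (2 * (α * β) * M) ^ 2 = 4 * (α ^ 2 * mA u x (4 * s)) * (β ^ 2 * mA v x (4 * s)) := by
            rw [mul_pow, hM2]; ring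
        _ ≤ _ := four_mul_le_sq_add _ _
    have a10 := mul_le_mul_of_nonneg_left a9 (by positivity : 0 ≤ 2 * (N * θ))
    linarith
  set X := s * mD v x s - mA v x s with hX
  have P2 : (β ^ 2 - α ^ 2) * X ≥
      -(4 + 2 * N) * θ * (α ^ 2 * mA u x (4 * s) + β ^ 2 * mA v x (4 * s)) := by
    have : s * mD u x s - mA u x s ≤ -X := by
      rw [hX]; linarith [mul_nonneg hs.le hPn]
    have := mul_le_mul_of_nonneg_left this (sq_nonneg α)
    linarith
  have P3 : α ^ 2 * mA u x (4 * s) + β ^ 2 * mA v x (4 * s) ≤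
      β ^ 2 * ((64 / c ^ 2 + 1) * mA v x (4 * s)) := by
    have r1 : mA u x (4 * s) ≤ 64 / c ^ 2 * β ^ 2 := by
      have : H ≤ 4 / c ^ 2 * β ^ 2 := by
        rw [div_mul_eq_mul_div, le_div_iff₀ (by positivity)]; linarith
      calc mA u x (4 * s) ≤ 16 * H := by linarith
        _ ≤ 16 * (4 / c ^ 2 * β ^ 2) := by gcongr
        _ = _ := by ring
    have r2 : α ^ 2 ≤ mA v x (4 * s) := hαA.trans hmono
    have r3 : α ^ 2 * mA u x (4 * s) ≤ mA v x (4 * s) * (64 / c ^ 2 * β ^ 2) :=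
      mul_le_mul r2 r1 hA.le hB.le
    linarith
  by_cases hXn : 0 ≤ X
  · refine le_trans ?_ hXn
    rw [neg_nonpos]; positivity
  · push Not at hXn
    have hβpos : 0 < β ^ 2 := lt_of_lt_of_le (by positivity) hβ2
    have P4 : β ^ 2 * (X / 2) ≥ β ^ 2 * (-((4 + 2 * N) * θ * ((64 / c ^ 2 + 1) * mA v x (4 * s)))) := by
      have := mul_le_mul_of_nonneg_left P3 (by positivity : 0 ≤ (4 + 2 * N) * θ)
      nlinarith
    have := le_of_mul_le_mul_left P4 hβpos
    linarith

/-- If `v` is the minor component at all large scales, then `mA v 0 s / s` is almost nondecreasing,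
so it stays bounded below. -/
lemma Sol.minor_linear {u v : Euc n → ℝ} (h : Sol u v) {s₁ c : ℝ} (hs₁ : 0 < s₁) (hc : 0 < c)
    (hc2 : c ^ 2 * (128 * 4 ^ n) = 1)
    (hm : ∀ s, s₁ ≤ s → mA v 0 s ≤ c ^ 2 / 8 * mH u v 0 s) :
    ∃ m > 0, ∃ S > 0, ∀ s, S ≤ s → m * s ≤ mA v 0 s := by
  set η := mH u v 0 1 with hη
  have hη0 : 0 < η := h.mH_pos 0 one_pos
  set K₀ : ℝ := 2 * (4 + 2 * 2 ^ n) * (64 / c ^ 2 + 1) with hK₀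
  have hK₀0 : 0 < K₀ := by positivity
  set ε : ℝ := 1 / 80 with hε
  set K : ℝ := 4 * K₀ * η ^ (-ε) with hK
  have hK0 : 0 < K := by positivity
  have ht : Tendsto (fun s : ℝ => s ^ (-ε)) atTop (𝓝 0) := tendsto_rpow_neg_atTop (by norm_num)
  set δ := min (min (1 / (2 * 4 ^ n)) (c / 16) / η ^ (-ε)) (1 / (320 * K)) with hδ
  have hδ0 : 0 < δ := by positivity
  obtain ⟨S₀, hS₀⟩ := Filter.eventually_atTop.mp (ht.eventually (gt_mem_nhds hδ0))
  set S := max (max S₀ 1) (8 * s₁) with hS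
  have hS1 : 1 ≤ S := (le_max_right _ _).trans (le_max_left _ _)
  have hSs : 8 * s₁ ≤ S := le_max_right _ _
  have hsmall : ∀ s, S ≤ s → s ^ (-ε) < δ := fun s hs =>
    hS₀ s (((le_max_left _ _).trans (le_max_left _ _)).trans hs)
  have hpow : ∀ s : ℝ, 0 < s → s ^ (-ε - 1) * s = s ^ (-ε) := fun s hs => by
    rw [← Real.rpow_add_one hs.ne']; congr 1; ring
  have hX : ∀ s, S ≤ s → -(K₀ * (η ^ (-ε) * s ^ (-ε)) * mA v 0 (4 * s)) ≤
      s * mD v 0 s - mA v 0 s := by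
    intro s hs
    have hs1 : 1 ≤ s := hS1.trans hs
    have hs0 : 0 < s := by linarith
    set θ := η ^ (-ε) * s ^ (-ε) with hθ
    have hθ0 : 0 < θ := by positivity
    have hθs : θ ≤ min (1 / (2 * 4 ^ n)) (c / 16) := by
      have := ((hsmall s hs).trans_le (min_le_left _ _)).le
      rw [le_div_iff₀ (by positivity)] at this
      rw [hθ]; linarith
    have hHη : η ≤ mH u v 0 s := h.mH_mono 0 one_pos hs1
    have hθ80 : θ ^ 80 * (s * η) = 1 := by
      rw [hθ, ← Real.mul_rpow hη0.le hs0.le, ← Real.rpow_natCast,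
        ← Real.rpow_mul (by positivity)]
      rw [show -ε * ((80 : ℕ) : ℝ) = -1 by rw [hε]; norm_num, Real.rpow_neg_one]
      field_simp
    have hU : c ^ 2 * mH u v 0 s ≤ mU u 0 s ^ 2 := by
      have k1 := h.mA_le_mU 0 hs0
      have hs8 : 0 < s / 8 := by positivity
      have k2 := h.mH_doubling 0 hs8 (t := s) (by linarith)
      have k3 := hm (s / 8) (by linarith)
      have k4 : c ^ 2 / 8 ≤ 1 / 2 := by
        have : (1 : ℝ) ≤ 4 ^ n := one_le_pow₀ (by norm_num)
        nlinarith [sq_nonneg c]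
      have k5 := h.mH_pos 0 hs8
      have k6 : s / (s / 8) = 8 := by field_simp
      rw [k6] at k2
      have k7 : mH u v 0 (s / 8) ≤ 2 * mA u 0 (s / 8) := by
        have : mH u v 0 (s / 8) = mA u 0 (s / 8) + mA v 0 (s / 8) := rfl
        nlinarith
      calc c ^ 2 * mH u v 0 s ≤ c ^ 2 * (128 * (4 ^ n * mU u 0 s ^ 2)) := by
            gcongr; linarith
        _ = (c ^ 2 * (128 * 4 ^ n)) * mU u 0 s ^ 2 := by ring
        _ = _ := by rw [hc2, one_mul]
    have := h.minor_growth 0 hs0 hθ0 (by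
        have := hθs.trans (min_le_left _ _)
        rw [le_div_iff₀ (by positivity)] at this; exact this)
      (by rw [← hθ80]; gcongr) hc (by linarith [hθs.trans (min_le_right _ _)]) hU
      (hm s (by linarith))
    exact this
  set g : ℝ → ℝ := fun s => mA v 0 s / s with hg
  have gpos : ∀ s, 0 < s → 0 < g s := fun s hs => div_pos (h.symm.mA_pos 0 hs) hs
  obtain ⟨B, hB0, hB⟩ := h.symm.mA_growth
  have gbdd : ∀ s, S ≤ s → g s ≤ 2 * B := fun s hs => by
    have hs0 : 0 < s := by linarith
    have := hB 0 s hs0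
    simp only [hg]
    rw [div_le_iff₀ hs0]
    simp at this
    nlinarith
  have hbdd : BddAbove (g '' Ici S) := ⟨2 * B, by rintro _ ⟨s, hs, rfl⟩; exact gbdd s hs⟩
  have hne : (g '' Ici S).Nonempty := ⟨g S, S, self_mem_Ici, rfl⟩
  set m := sSup (g '' Ici S) with hmdef
  have gle : ∀ s, S ≤ s → g s ≤ m := fun s hs => le_csSup hbdd ⟨s, hs, rfl⟩
  have hm0 : 0 < m := (gpos S (by linarith)).trans_le (gle S le_rfl)
  obtain ⟨_, ⟨s', hs', rfl⟩, hlt⟩ := exists_lt_of_lt_csSup hne (show 3 / 4 * m < m by linarith)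
  have hs' : S ≤ s' := hs'
  set φ : ℝ → ℝ := fun s => g s - 80 * K * m * s ^ (-ε) with hφ
  have dφ : ∀ s, S ≤ s → HasDerivAt φ (((mD v 0 s + mP v u 0 s) * s - mA v 0 s * 1) / s ^ 2
      - 80 * K * m * (-ε * s ^ (-ε - 1))) s := fun s hs => by
    have hs0 : 0 < s := by linarith
    exact ((h.symm.hasDerivAt_mA 0 hs0).div (hasDerivAt_id s) hs0.ne').sub
      ((Real.hasDerivAt_rpow_const (Or.inl hs0.ne')).const_mul _)
  have mono : MonotoneOn φ (Ici S) := by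
    apply monotoneOn_of_deriv_nonneg (convex_Ici S)
    · exact fun s hs => (dφ s hs).continuousAt.continuousWithinAt
    · exact fun s hs => (dφ s (interior_subset hs)).differentiableAt.differentiableWithinAt
    · intro s hs
      have hs : S ≤ s := interior_subset hs
      have hs0 : 0 < s := by linarith
      rw [(dφ s hs).deriv]
      have k1 := hX s hs
      have k2 : mA v 0 (4 * s) ≤ m * (4 * s) := by
        have := gle (4 * s) (by linarith)
        simp only [hg] at this
        rwa [div_le_iff₀ (by positivity)] at this
      have k3 := mP_nonneg v u 0 s
      have k4 : 0 ≤ K₀ * (η ^ (-ε) * s ^ (-ε)) := by positivity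
      have k5 := mul_le_mul_of_nonneg_left k2 k4
      have k6 : -(K * m * s ^ (-ε - 1)) ≤ ((mD v 0 s + mP v u 0 s) * s - mA v 0 s * 1) / s ^ 2 := by
        rw [le_div_iff₀ (by positivity)]
        have e : -(K * m * s ^ (-ε - 1)) * s ^ 2 = -(K₀ * (η ^ (-ε) * s ^ (-ε)) * (m * (4 * s))) := by
          rw [hK, ← hpow s hs0]; ring
        rw [e]
        nlinarith [mul_nonneg k3 hs0.le]
      have e2 : 80 * K * m * (-ε * s ^ (-ε - 1)) = -(K * m * s ^ (-ε - 1)) := by rw [hε]; ring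
      rw [e2]; linarith
  refine ⟨m / 2, by positivity, s', by linarith, fun s hs => ?_⟩
  have k := mono hs' (hs'.trans hs) hs
  simp only [hφ] at k
  have k2 : 80 * K * m * s' ^ (-ε) ≤ m / 4 := by
    have := ((hsmall s' hs').trans_le (min_le_right _ _)).le
    rw [le_div_iff₀ (by positivity)] at this
    nlinarith
  have hs0 : 0 < s := by linarith
  have k3 : 0 ≤ 80 * K * m * s ^ (-ε) := by positivity
  have k4 : m / 2 ≤ g s := by linarith
  simp only [hg] at k4
  rwa [le_div_iff₀ hs0] at k4

/-- Along arbitrarily large scales both components carry a fixed fraction of the mass. -/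
lemma Sol.both {u v : Euc n → ℝ} (h : Sol u v) : ∃ c > 0, ∀ S : ℝ, ∃ s, S ≤ s ∧ 0 < s ∧
    c * mH u v 0 s ≤ mA u 0 s ∧ c * mH u v 0 s ≤ mA v 0 s := by
  by_contra hcon
  push Not at hcon
  have hneg : ∀ c > 0, ∃ S, ∀ s, S ≤ s → 0 < s →
      mA u 0 s < c * mH u v 0 s ∨ mA v 0 s < c * mH u v 0 s := by
    intro c hc
    obtain ⟨S, hS⟩ := hcon c hc
    refine ⟨S, fun s hs hs0 => ?_⟩
    by_cases hh : c * mH u v 0 s ≤ mA u 0 s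
    · exact Or.inr (hS s hs hs0 hh)
    · exact Or.inl (not_le.mp hh)
  set c : ℝ := √(1 / (128 * 4 ^ n)) with hc
  have hc0 : 0 < c := by positivity
  have hc2 : c ^ 2 * (128 * 4 ^ n) = 1 := by
    rw [hc, Real.sq_sqrt (by positivity)]; field_simp
  have hc8 : c ^ 2 / 8 ≤ 1 / 2 := by
    have : (1 : ℝ) ≤ 4 ^ n := one_le_pow₀ (by norm_num)
    nlinarith [sq_nonneg c]
  obtain ⟨S, hS⟩ := hneg (c ^ 2 / 8) (by positivity)
  set S₁ := max S 1
  have hS₁ : 0 < S₁ := lt_of_lt_of_le one_pos (le_max_right _ _)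
  have contA : ContinuousOn (mA u 0) (Ici S₁) := fun s hs =>
    (h.hasDerivAt_mA 0 (hS₁.trans_le hs)).continuousAt.continuousWithinAt
  have contB : ContinuousOn (mA v 0) (Ici S₁) := fun s hs =>
    (h.symm.hasDerivAt_mA 0 (hS₁.trans_le hs)).continuousAt.continuousWithinAt
  -- one fixed component is minor at all large scales
  have hdich : (∀ s, S₁ ≤ s → mA u 0 s < c ^ 2 / 8 * mH u v 0 s) ∨
      (∀ s, S₁ ≤ s → mA v 0 s < c ^ 2 / 8 * mH u v 0 s) := by
    by_contra hno
    push Not at hno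
    obtain ⟨⟨s, hs, hsu⟩, ⟨t, ht, htv⟩⟩ := hno
    have hs1 := (hS s ((le_max_left _ _).trans hs) (hS₁.trans_le hs)).resolve_left (not_lt.mpr hsu)
    have ht1 := (hS t ((le_max_left _ _).trans ht) (hS₁.trans_le ht)).resolve_right (not_lt.mpr htv)
    obtain ⟨r, hr, hr0⟩ := isPreconnected_Ici.intermediate_value (a := s) (b := t) (s := Ici S₁)
      hs ht (contB.sub contA) (show (0 : ℝ) ∈ Icc _ _ by
        have p1 := h.mH_pos 0 (hS₁.trans_le hs)
        have p2 := h.mH_pos 0 (hS₁.trans_le ht)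
        unfold mH at *
        constructor
        · simp only [Pi.sub_apply]; linarith
        · simp only [Pi.sub_apply]; linarith)
    have hr' : mA v 0 r - mA u 0 r = 0 := hr0
    have hrp := h.mH_pos 0 (hS₁.trans_le hr)
    rcases hS r ((le_max_left _ _).trans hr) (hS₁.trans_le hr) with k | k
    · unfold mH at *; nlinarith
    · unfold mH at *; nlinarith
  have main : ∀ {u v : Euc n → ℝ} (_ : Sol u v), (∀ c > 0, ∃ S, ∀ s, S ≤ s → 0 < s →
      mA u 0 s < c * mH u v 0 s ∨ mA v 0 s < c * mH u v 0 s) →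
      ¬ (∀ s, S₁ ≤ s → mA v 0 s < c ^ 2 / 8 * mH u v 0 s) := by
    intro u v h hneg hmin
    obtain ⟨m, hm0, T, hT0, hT⟩ := h.minor_linear hS₁ hc0 hc2 fun s hs => (hmin s hs).le
    obtain ⟨B, hB0, hB⟩ := h.mA_growth
    obtain ⟨B', hB'0, hB'⟩ := h.symm.mA_growth
    obtain ⟨S₂, hS₂⟩ := hneg (min (c ^ 2 / 8) (m / (2 * (B + B')))) (by positivity)
    set s := max (max S₁ T) (max S₂ 1)
    have a1 : S₁ ≤ s := (le_max_left _ _).trans (le_max_left _ _)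
    have a2 : T ≤ s := (le_max_right _ _).trans (le_max_left _ _)
    have a3 : S₂ ≤ s := (le_max_left _ _).trans (le_max_right _ _)
    have a4 : 1 ≤ s := (le_max_right _ _).trans (le_max_right _ _)
    have hs0 : 0 < s := by linarith
    have hH := h.mH_pos 0 hs0
    rcases hS₂ s a3 hs0 with k | k
    · have k1 := k.trans_le (mul_le_mul_of_nonneg_right (min_le_left _ _) hH.le)
      have k2 := hmin s a1
      have : mH u v 0 s = mA u 0 s + mA v 0 s := rfl
      nlinarith
    · have k1 := k.trans_le (mul_le_mul_of_nonneg_right (min_le_right _ _) hH.le)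
      have k2 := hT s a2
      have b1 := hB 0 s hs0
      have b2 := hB' 0 s hs0
      have k3 : mH u v 0 s ≤ 2 * (B + B') * s := by
        have : mH u v 0 s = mA u 0 s + mA v 0 s := rfl
        simp at b1 b2
        nlinarith
      have k4 : m / (2 * (B + B')) * mH u v 0 s ≤ m / (2 * (B + B')) * (2 * (B + B') * s) := by
        gcongr
      have k5 : m / (2 * (B + B')) * (2 * (B + B') * s) = m * s := by field_simp
      linarith
  rcases hdich with hd | hd
  · refine main h.symm (fun c hc => ?_) (fun s hs => by rw [mH_comm]; exact hd s hs)
    obtain ⟨S, hS⟩ := hneg c hc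
    exact ⟨S, fun s hs hs0 => by rw [mH_comm v u]; exact (hS s hs hs0).symm⟩
  · exact main h hneg hd

/-! ### Centres at which the two means agree -/

/-- A component attains its root mean square at a point of a fixed dilated ball. -/
lemma Sol.big_point {u v : Euc n → ℝ} (h : Sol u v) (x : Euc n) {s c Λ : ℝ} (hs : 0 < s)
    (hΛ : 0 < Λ) (hc : √2 ^ n * Real.exp (-(Λ ^ 2 / 4)) * 8 < c)
    (hA : c * mH u v x s ≤ mA u x s) :
    ∃ y, ‖y - x‖ ≤ Λ * √s ∧ mA u x s / 2 ≤ u y ^ 2 := by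
  by_contra! hcon
  have hp := gm_prob x hs
  have hq : 0 < √s := Real.sqrt_pos.mpr hs
  set A := mA u x s with hAd
  have hA0 : 0 < A := h.mA_pos x hs
  set b := √2 ^ n * Real.exp (-(Λ ^ 2 / 4)) with hb
  have hb0 : 0 < b := by positivity
  have h2s : 0 < 2 * s := by positivity
  have i1 : Integrable (fun y => gk s (y - x) * u y ^ 2) :=
    integrable_gm_iff.mp (h.pg.sq.gint x s hs)
  have i2 : Integrable (fun y => gk (2 * s) (y - x) * u y ^ 2) :=
    integrable_gm_iff.mp (h.pg.sq.gint x (2 * s) h2s)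
  have i3 : Integrable (fun y => gk s (y - x) * (A / 2)) :=
    integrable_gm_iff.mp (gint_const (A / 2) x s hs)
  have key : ∀ y, gk s (y - x) * u y ^ 2 ≤ gk s (y - x) * (A / 2)
      + b * (gk (2 * s) (y - x) * u y ^ 2) := by
    intro y
    have g1 := gk_nonneg s (y - x)
    have g2 := gk_nonneg (2 * s) (y - x)
    rcases le_or_gt ‖y - x‖ (Λ * √s) with hy | hy
    · have := mul_le_mul_of_nonneg_left (hcon y hy).le g1
      have : 0 ≤ b * (gk (2 * s) (y - x) * u y ^ 2) := by positivity
      linarith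
    · have : gk s (y - x) ≤ b * gk (2 * s) (y - x) := by
        rw [gk_two hs, hb]
        gcongr
        rw [neg_div, neg_le_neg_iff, div_le_div_iff₀ (by positivity) (by positivity)]
        have : (Λ * √s) ^ 2 ≤ ‖y - x‖ ^ 2 := by gcongr
        rw [mul_pow, Real.sq_sqrt hs.le] at this
        nlinarith
      have := mul_le_mul_of_nonneg_right this (sq_nonneg (u y))
      have : 0 ≤ gk s (y - x) * (A / 2) := by positivity
      linarith
  have hint := integral_mono i1 (i3.add (i2.const_mul b)) key
  simp only [Pi.add_apply] at hint
  rw [integral_add i3 (i2.const_mul b), integral_const_mul, ← integral_gm, ← integral_gm x (2 * s),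
    ← integral_gm x s fun _ => A / 2] at hint
  simp only [integral_const, probReal_univ, one_smul] at hint
  change A ≤ A / 2 + b * mA u x (2 * s) at hint
  have hd := h.mH_doubling x hs (t := 2 * s) (by linarith)
  rw [show 2 * s / s = 2 by field_simp] at hd
  have hH := h.mH_pos x hs
  have : mA u x (2 * s) ≤ mH u v x (2 * s) := by
    have := mA_nonneg v x (2 * s); unfold mH; linarith
  have k1 := mul_le_mul_of_nonneg_left (this.trans hd) hb0.le
  have k2 := mul_lt_mul_of_pos_right hc hH
  linarith

/-- A scale at which the second moment is nearly stationary. -/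
lemma Sol.slow_scale {u v : Euc n → ℝ} (h : Sol u v) (y : Euc n) {s c L : ℝ} (hs : 0 < s)
    (hL : 0 < L)
    (hM : mA u y s < Real.exp (c * L) * mA u y (s * Real.exp (-L))) :
    ∃ t, s * Real.exp (-L) ≤ t ∧ t ≤ s ∧ t * (mD u y t + mP u v y t) ≤ c * mA u y t := by
  by_contra! hcon
  set s₁ := s * Real.exp (-L) with hs₁
  have hs₁0 : 0 < s₁ := by positivity
  have hle : s₁ ≤ s := mul_le_of_le_one_right hs.le (Real.exp_le_one_iff.mpr (by linarith))
  have hd : ∀ t ∈ Icc s₁ s, HasDerivAt (fun t => Real.log (mA u y t) - c * Real.log t)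
      ((mD u y t + mP u v y t) / mA u y t - c * t⁻¹) t := by
    intro t ht
    have ht0 : 0 < t := hs₁0.trans_le ht.1
    exact ((h.hasDerivAt_mA y ht0).log (h.mA_pos y ht0).ne').sub
      ((Real.hasDerivAt_log ht0.ne').const_mul c)
  have hmono : MonotoneOn (fun t => Real.log (mA u y t) - c * Real.log t) (Icc s₁ s) := by
    apply monotoneOn_of_deriv_nonneg (convex_Icc _ _)
    · exact fun t ht => (hd t ht).continuousAt.continuousWithinAt
    · exact fun t ht => (hd t (interior_subset ht)).differentiableAt.differentiableWithinAt
    · intro t ht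
      have ht := interior_subset ht
      have ht0 : 0 < t := hs₁0.trans_le ht.1
      rw [(hd t ht).deriv]
      have k := hcon t ht.1 ht.2
      have hA := h.mA_pos y ht0
      rw [sub_nonneg, le_div_iff₀ hA, mul_right_comm, ← div_eq_mul_inv, div_le_iff₀ ht0]
      linarith
  have k := hmono ⟨le_rfl, hle⟩ ⟨hle, le_rfl⟩ hle
  simp only [] at k
  have e : Real.log s₁ = Real.log s - L := by
    rw [hs₁, Real.log_mul hs.ne' (by positivity), Real.log_exp]; ring
  have k2 := Real.log_lt_log (h.mA_pos y hs) hM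
  rw [Real.log_mul (by positivity) (h.mA_pos y hs₁0).ne', Real.log_exp] at k2
  rw [e] at k
  linarith

/-- Where the second moment of `v` is stationary and not too small, the mean of `v` dominates. -/
lemma Sol.mU_lt {u v : Euc n → ℝ} (h : Sol u v) (y : Euc n) {t c : ℝ} (ht : 0 < t) (hc0 : 0 < c)
    (hc : c ≤ 1 / 2) (h1 : t * (mD v y t + mP v u y t) ≤ c * mA v y t)
    (h2 : 8 * c * (1 / t + mA u y t) < mA v y t) : mU u y t < mU v y t := by
  have hp := gm_prob y ht
  have hA := h.mA_pos y ht
  have hB := h.symm.mA_pos y ht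
  have hU := h.mU_pos y ht
  have hV := h.symm.mU_pos y ht
  have iuv : GInt (fun y => u y * v y) := (h.pg.mul h.symm.pg).gint
  have iuv2 : GInt (fun y => (u y * v y) ^ 2) := (h.pg.mul h.symm.pg).sq.gint
  have hcov := cov_sq_le (h.pg.sq.gint y t ht) (h.pg.gint y t ht) (h.symm.pg.sq.gint y t ht)
    (h.symm.pg.gint y t ht) (iuv y t ht)
  change ((∫ y, u y * v y ∂(gm y t)) - mU u y t * mU v y t) ^ 2 ≤
    (mA u y t - mU u y t ^ 2) * (mA v y t - mU v y t ^ 2) at hcov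
  have hP : (∫ y, u y * v y ∂(gm y t)) ^ 2 ≤ mP v u y t := by
    refine (sq_mean_le (iuv2 y t ht) (iuv y t ht)).trans (le_of_eq ?_)
    unfold mP
    exact integral_congr_ae (Eventually.of_forall fun z => by simp only; ring)
  set I := ∫ y, u y * v y ∂(gm y t)
  have v2 := h.symm.var_le y ht
  have hU2 := h.mU_sq_le y ht
  have hV2 := h.symm.mU_sq_le y ht
  have hD := mul_nonneg ht.le (mD_nonneg v y t)
  have hPn := mul_nonneg ht.le (mP_nonneg v u y t)
  set A := mA u y t
  set B := mA v y t
  set U := mU u y t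
  set V := mU v y t
  have k1 : t * mD v y t ≤ c * B := by linarith
  have k2 : t * mP v u y t ≤ c * B := by linarith
  have k3 : mP v u y t ≤ c * B * (1 / t) := by
    rw [mul_one_div, le_div_iff₀ ht]; linarith
  have k4 : (A - U ^ 2) * (B - V ^ 2) ≤ A * (c * B) := by
    apply mul_le_mul <;> nlinarith
  have k5 : (U * V) ^ 2 ≤ 2 * (c * B * (1 / t)) + 2 * (A * (c * B)) := by
    nlinarith [sq_nonneg (I - U * V + I)]
  have k6 : B / 2 ≤ V ^ 2 := by nlinarith
  have k7 : (U * V) ^ 2 < (B / 2) ^ 2 := by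
    have := mul_lt_mul_of_pos_right h2 hB
    nlinarith
  have k8 : U * V < B / 2 := lt_of_pow_lt_pow_left₀ 2 (by positivity) k7
  by_contra! hle
  nlinarith

/-- Moving the centre by a bounded multiple of the scale changes the total mass by a bounded
factor. -/
lemma Sol.mH_shift {u v : Euc n → ℝ} (h : Sol u v) (x y : Euc n) {s Λ : ℝ} (hs : 0 < s)
    (hΛ : 0 ≤ Λ) (hy : ‖y - x‖ ≤ Λ * √s) :
    mH u v y s ≤ 16 * 2 ^ n * Real.exp (Λ ^ 2) * mH u v x s := by
  have h4 : s < 4 * s := by linarith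
  have k1 := integral_gm_le hs h4 x y (fun z => sq_nonneg (u z)) (h.pg.sq.gint x _ (by positivity))
  have k2 := integral_gm_le hs h4 x y (fun z => sq_nonneg (v z))
    (h.symm.pg.sq.gint x _ (by positivity))
  change mA u y s ≤ _ * mA u x (4 * s) at k1
  change mA v y s ≤ _ * mA v x (4 * s) at k2
  have e : √(4 * s / s) = 2 := by
    rw [show 4 * s / s = 2 ^ 2 by field_simp; norm_num]; simp
  rw [e] at k1 k2
  have hd := h.mH_doubling x hs h4.le
  rw [show 4 * s / s = 4 by field_simp] at hd
  have hexp : Real.exp (‖y - x‖ ^ 2 / (2 * (4 * s - s))) ≤ Real.exp (Λ ^ 2) := by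
    gcongr
    rw [div_le_iff₀ (by linarith)]
    have : ‖y - x‖ ^ 2 ≤ (Λ * √s) ^ 2 := by gcongr
    rw [mul_pow, Real.sq_sqrt hs.le] at this
    nlinarith [mul_nonneg (sq_nonneg Λ) hs.le]
  have hH4 := h.mH_pos x (s := 4 * s) (by positivity)
  calc mH u v y s = mA u y s + mA v y s := rfl
    _ ≤ 2 ^ n * Real.exp (‖y - x‖ ^ 2 / (2 * (4 * s - s))) * mH u v x (4 * s) := by
        unfold mH; linarith
    _ ≤ 2 ^ n * Real.exp (Λ ^ 2) * (4 ^ 2 * mH u v x s) := by gcongr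
    _ = _ := by ring

/-- If `v` carries a fixed fraction of the mass, then at a nearby centre and a comparable scale the
mean of `v` exceeds that of `u`. -/
lemma Sol.sign_point (c : ℝ) (hc : 0 < c) : ∃ Λ > 0, ∃ L > 0, ∃ κ > 0,
    ∀ {u v : Euc n → ℝ} (_ : Sol u v) (s : ℝ), 0 < s → κ ≤ s * mH u v 0 s →
      c * mH u v 0 s ≤ mA v 0 s →
      ∃ y t, ‖y‖ ≤ Λ * √s ∧ s * Real.exp (-L) ≤ t ∧ t ≤ s ∧ mU u y t < mU v y t := by
  set X : ℝ := √2 ^ n * 8 / c with hX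
  have hX0 : 0 < X := by positivity
  set Λ := 2 * √X with hΛ
  have hΛ0 : 0 < Λ := by positivity
  have hΛ4 : Λ ^ 2 / 4 = X := by rw [hΛ, mul_pow, Real.sq_sqrt hX0.le]; ring
  have hcΛ : √2 ^ n * Real.exp (-(Λ ^ 2 / 4)) * 8 < c := by
    rw [hΛ4, Real.exp_neg]
    have h1 : X < Real.exp X := by linarith [Real.add_one_le_exp X]
    rw [mul_right_comm, ← div_eq_mul_inv, div_lt_iff₀ (by positivity)]
    calc √2 ^ n * 8 = c * X := by rw [hX]; field_simp
      _ < c * Real.exp X := by gcongr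
  set C : ℝ := 16 * 2 ^ n * Real.exp (Λ ^ 2) with hC
  have hC0 : 0 < C := by positivity
  set c₁ : ℝ := min (1 / 2) (c / (32 * (1 + C))) with hc₁
  have hc₁0 : 0 < c₁ := by positivity
  set L := 2 * C / c / c₁ with hL
  have hL0 : 0 < L := by positivity
  refine ⟨Λ, hΛ0, L, hL0, Real.exp L, by positivity, fun {u v} h s hs hκ hA => ?_⟩
  obtain ⟨y, hy, hy2⟩ := h.symm.big_point 0 hs hΛ0 hcΛ (by rwa [mH_comm])
  have hsh := h.mH_shift 0 y hs hΛ0.le hy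
  have hH := h.mH_pos 0 hs
  have hHy := h.mH_pos y hs
  have hse : 0 < s * Real.exp (-L) := by positivity
  have hlow := h.symm.sq_le_mA y hse
  obtain ⟨t, ht1, ht2, ht3⟩ := h.symm.slow_scale y hs hL0 (c := c₁) (by
    have h1 : mA v y s ≤ C * mH u v 0 s := by
      have := mA_nonneg u y s
      unfold mH at hsh ⊢; linarith
    have h2 : 2 * C / c < Real.exp (c₁ * L) := by
      rw [hL, mul_div_cancel₀ _ hc₁0.ne']
      linarith [Real.add_one_le_exp (2 * C / c)]
    have h3 : c / 2 * mH u v 0 s ≤ mA v y (s * Real.exp (-L)) := by linarith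
    calc mA v y s ≤ C * mH u v 0 s := h1
      _ = 2 * C / c * (c / 2 * mH u v 0 s) := by field_simp
      _ < Real.exp (c₁ * L) * (c / 2 * mH u v 0 s) := by gcongr
      _ ≤ _ := by gcongr)
  have ht0 : 0 < t := hse.trans_le ht1
  refine ⟨y, t, by simpa using hy, ht1, ht2, h.mU_lt y ht0 hc₁0 (min_le_left _ _) ht3 ?_⟩
  have hAu : mA u y t ≤ C * mH u v 0 s := by
    have h1 := h.mA_mono y ht0 ht2
    have := mA_nonneg v y s
    unfold mH at hsh ⊢; linarith
  have h1t : 1 / t ≤ mH u v 0 s := by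
    rw [div_le_iff₀ ht0]
    have e1 : Real.exp (-L) * Real.exp L = 1 := by rw [← Real.exp_add]; simp
    calc 1 = Real.exp (-L) * Real.exp L := e1.symm
      _ ≤ Real.exp (-L) * (s * mH u v 0 s) := by gcongr
      _ = mH u v 0 s * (s * Real.exp (-L)) := by ring
      _ ≤ _ := by gcongr
  have hB : c / 2 * mH u v 0 s ≤ mA v y t := by
    have := h.symm.sq_le_mA y ht0; linarith
  refine lt_of_lt_of_le ?_ hB
  have k : c₁ * (32 * (1 + C)) ≤ c := by
    rw [← le_div_iff₀ (by positivity)]; exact min_le_right _ _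
  calc 8 * c₁ * (1 / t + mA u y t) ≤ 8 * c₁ * (mH u v 0 s + C * mH u v 0 s) := by gcongr
    _ = c₁ * (32 * (1 + C)) / 4 * mH u v 0 s := by ring
    _ ≤ c / 4 * mH u v 0 s := by gcongr
    _ < _ := by gcongr; norm_num

lemma mU_eq_scale (u : Euc n → ℝ) (x : Euc n) {s : ℝ} (hs : 0 < s) :
    mU u x s = ∫ ξ, u (x + √s • ξ) ∂(gm 0 1) := integral_gm_scale x hs u

/-- Balanced centres exist at arbitrarily large scales, at a distance from the origin comparable
to the root of the scale. -/
lemma Sol.balanced {u v : Euc n → ℝ} (h : Sol u v) : ∃ Cs > 0, ∀ S : ℝ, ∃ z s,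
    S ≤ s ∧ 0 < s ∧ ‖z‖ ≤ Cs * √s ∧ mU u z s = mU v z s := by
  obtain ⟨c, hc, hboth⟩ := h.both
  obtain ⟨Λ, hΛ, L, hL, κ, hκ, hsp⟩ := Sol.sign_point (n := n) c hc
  refine ⟨Λ * √(Real.exp L), by positivity, fun S => ?_⟩
  have hη := h.mH_pos 0 one_pos
  obtain ⟨s, hs, hs0, hA, hB⟩ := hboth (max (max (S * Real.exp L) 1) (κ / mH u v 0 1))
  have hs1 : 1 ≤ s := ((le_max_right _ _).trans (le_max_left _ _)).trans hs
  have hs2 : S * Real.exp L ≤ s := ((le_max_left _ _).trans (le_max_left _ _)).trans hs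
  have hs3 : κ ≤ s * mH u v 0 1 := by
    rw [← div_le_iff₀ hη]; exact (le_max_right _ _).trans hs
  have hκs : κ ≤ s * mH u v 0 s := hs3.trans (by gcongr; exact h.mH_mono 0 one_pos hs1)
  obtain ⟨y₁, t₁, hy₁, ha₁, hb₁, hlt₁⟩ := hsp h s hs0 hκs hB
  obtain ⟨y₂, t₂, hy₂, ha₂, hb₂, hlt₂⟩ := hsp h.symm s hs0 (by rwa [mH_comm])
    (by rwa [mH_comm])
  have hse : 0 < s * Real.exp (-L) := by positivity
  have hconv : Convex ℝ (closedBall (0 : Euc n) (Λ * √s) ×ˢ Icc (s * Real.exp (-L)) s) :=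
    (convex_closedBall _ _).prod (convex_Icc _ _)
  have hcont := ((continuous_gE h.pg).sub (continuous_gE h.symm.pg)).continuousOn
    (s := closedBall (0 : Euc n) (Λ * √s) ×ˢ Icc (s * Real.exp (-L)) s)
  obtain ⟨⟨z, t⟩, ⟨hz, ht⟩, h0⟩ := hconv.isPreconnected.intermediate_value (a := (y₁, t₁))
    (b := (y₂, t₂)) ⟨by simpa using hy₁, ha₁, hb₁⟩ ⟨by simpa using hy₂, ha₂, hb₂⟩ hcont
    (show (0 : ℝ) ∈ Icc _ _ by
      constructor
      · simp only [Pi.sub_apply]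
        rw [← mU_eq_scale u y₁ (hse.trans_le ha₁), ← mU_eq_scale v y₁ (hse.trans_le ha₁)]
        linarith
      · simp only [Pi.sub_apply]
        rw [← mU_eq_scale u y₂ (hse.trans_le ha₂), ← mU_eq_scale v y₂ (hse.trans_le ha₂)]
        linarith)
  simp only [Pi.sub_apply] at h0 ht hz
  have ht0 : 0 < t := hse.trans_le ht.1
  rw [← mU_eq_scale u z ht0, ← mU_eq_scale v z ht0] at h0
  have hst : s ≤ t * Real.exp L := by
    have := mul_le_mul_of_nonneg_right ht.1 (Real.exp_pos L).le
    rwa [mul_assoc, ← Real.exp_add, neg_add_cancel, Real.exp_zero, mul_one] at this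
  refine ⟨z, t, ?_, ht0, ?_, by linarith⟩
  · have := hs2.trans hst
    exact le_of_mul_le_mul_right this (Real.exp_pos L)
  · have hz' : ‖z‖ ≤ Λ * √s := by simpa using hz
    refine hz'.trans ?_
    rw [mul_assoc, ← Real.sqrt_mul (by positivity)]
    gcongr
    linarith

/-! ### Clearing out the minor component away from the interface -/

/-- The mean of `u` exceeds its central value by at most a multiple of the second moment of `v`. -/
lemma Sol.mU_le_center {u v : Euc n → ℝ} (h : Sol u v) (y : Euc n) {T : ℝ} (hT : 0 < T) :
    mU u y T ≤ u y + 1 / 2 * (√T * mA v y T) := by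
  set a := (√T)⁻¹ with ha
  have hq : 0 < √T := Real.sqrt_pos.mpr hT
  have ha0 : 0 < a := by positivity
  set A := mA v y T with hA
  have hA0 : 0 < A := h.symm.mA_pos y hT
  have hd : ∀ t ∈ Ioc 0 T, HasDerivAt (fun t => mU u y t - a / 4 * A * t - 1 / (4 * a) * mA v y t)
      (1 / 2 * (∫ z, u z * v z ^ 2 ∂(gm y t)) - a / 4 * A * 1
        - 1 / (4 * a) * (mD v y t + mP v u y t)) t := fun t ht =>
    ((h.hasDerivAt_mU y ht.1).sub ((hasDerivAt_id t).const_mul _)).sub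
      ((h.symm.hasDerivAt_mA y ht.1).const_mul _)
  have hanti : AntitoneOn (fun t => mU u y t - a / 4 * A * t - 1 / (4 * a) * mA v y t)
      (Ioc 0 T) := by
    apply antitoneOn_of_deriv_nonpos (convex_Ioc _ _)
    · exact fun t ht => (hd t ht).continuousAt.continuousWithinAt
    · exact fun t ht => (hd t (interior_subset ht)).differentiableAt.differentiableWithinAt
    · intro t ht
      have ht := interior_subset ht
      rw [(hd t ht).deriv]
      have k1 : ∫ z, u z * v z ^ 2 ∂(gm y t) ≤ ∫ z, (a / 2 * v z ^ 2
          + 1 / (2 * a) * (v z ^ 2 * u z ^ 2)) ∂(gm y t) := by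
        refine integral_mono (h.pg_lap.gint y t ht.1) (((h.symm.pg.sq.gint y t ht.1).const_mul _).add
          ((h.symm.pgP.gint y t ht.1).const_mul _)) fun z => ?_
        have e : a / 2 * v z ^ 2 + 1 / (2 * a) * (v z ^ 2 * u z ^ 2) - u z * v z ^ 2 =
          1 / (2 * a) * (v z ^ 2 * (u z - a) ^ 2) := by field_simp; ring
        have : 0 ≤ 1 / (2 * a) * (v z ^ 2 * (u z - a) ^ 2) := by positivity
        simp only []
        linarith
      rw [integral_add ((h.symm.pg.sq.gint y t ht.1).const_mul _)
        ((h.symm.pgP.gint y t ht.1).const_mul _), integral_const_mul, integral_const_mul] at k1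
      change _ ≤ a / 2 * mA v y t + 1 / (2 * a) * mP v u y t at k1
      have k2 := h.symm.mA_mono y ht.1 ht.2
      have k3 : 0 ≤ 1 / (4 * a) * mD v y t := mul_nonneg (by positivity) (mD_nonneg _ _ _)
      have k4 : a / 4 * mA v y t ≤ a / 4 * A := by gcongr
      have e : 1 / (2 * a) = 2 * (1 / (4 * a)) := by field_simp; norm_num
      rw [e] at k1
      linarith
  have hall : ∀ t ∈ Ioc 0 T, mU u y T - 1 / 2 * (√T * A) ≤ mU u y t := by
    intro t ht
    have k := hanti ht ⟨hT, le_rfl⟩ ht.2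
    simp only [] at k
    have e1 : a / 4 * A * T = 1 / 4 * (√T * A) := by
      rw [ha]; field_simp
      linear_combination (-1) * Real.sq_sqrt hT.le
    have e2 : 1 / (4 * a) * A = 1 / 4 * (√T * A) := by rw [ha]; field_simp
    have k3 : 0 ≤ a / 4 * A * t := mul_nonneg (by positivity) ht.1.le
    have k4 : 0 ≤ 1 / (4 * a) * mA v y t := mul_nonneg (by positivity) (mA_nonneg _ _ _)
    rw [e1, e2] at k
    linarith
  have hlim : Tendsto (fun t => mU u y t) (𝓝[>] 0) (𝓝 (u y)) := by
    have hp := gm_prob (0 : Euc n) one_pos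
    have hc : Continuous fun t : ℝ => ∫ ξ, u (y + √t • ξ) ∂(gm 0 1) :=
      (continuous_gE h.pg).comp (by fun_prop : Continuous fun t : ℝ => (y, t))
    have := (hc.tendsto 0).mono_left (nhdsWithin_le_nhds (s := Ioi 0))
    simp only [Real.sqrt_zero, zero_smul, add_zero, integral_const, probReal_univ, one_smul] at this
    refine this.congr' ?_
    filter_upwards [self_mem_nhdsWithin] with t ht
    exact (mU_eq_scale u y ht).symm
  have := ge_of_tendsto hlim (b := mU u y T - 1 / 2 * (√T * A)) (by
    filter_upwards [Ioc_mem_nhdsGT hT] with t ht using hall t ht)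
  linarith

/-- One step of the decay of `v` at a point `y` near which `u - v` is close to `a ≥ ρ`. -/
lemma Sol.decay_step {u v : Euc n → ℝ} (h : Sol u v) (y : Euc n) {t ρ a : ℝ} (ht : 0 < t)
    (hρ : 0 < ρ) (ha : ρ ≤ a) :
    mA v y (t / 4) ≤ 4 / ρ ^ 2 * (4 ^ n * (∫ z, (u z - v z - a) ^ 2 ∂(gm y (t / 2)))
      + 4 * √2 ^ n / t) * mA v y t := by
  have ht4 : 0 < t / 4 := by positivity
  have ht2 : 0 < t / 2 := by positivity
  have ht8 : 0 < t / 8 := by positivity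
  have pgw : PG fun z => u z - v z - a := (h.pg.sub h.symm.pg).sub ⟨continuous_const, |a|, 0, by simp⟩
  set A := mA v y t with hA
  have hA0 : 0 < A := h.symm.mA_pos y ht
  have i1 := integrable_gm_iff.mp (h.symm.pg.sq.gint y (t / 4) ht4)
  have i2 := integrable_gm_iff.mp (pgw.sq.gint y (t / 2) ht2)
  have i3 := integrable_gm_iff.mp (h.symm.pgP.gint y (t / 4) ht4)
  have key : ∀ z, gk (t / 4) (z - y) * v z ^ 2 ≤
      4 ^ n * A * (4 / ρ ^ 2) * (gk (t / 2) (z - y) * (u z - v z - a) ^ 2)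
      + 4 / ρ ^ 2 * (gk (t / 4) (z - y) * (v z ^ 2 * u z ^ 2)) := by
    intro z
    have g1 := gk_nonneg (t / 4) (z - y)
    have g2 := gk_nonneg (t / 2) (z - y)
    have hu := h.up z
    have hv := h.vp z
    rcases lt_or_ge (u z) (ρ / 2) with hz | hz
    · have p1 : v z ^ 2 ≤ √8 ^ n * Real.exp (‖z - y‖ ^ 2 / (2 * (t - t / 8))) * A := by
        refine (h.symm.sq_le_mA z ht8).trans ?_
        have := integral_gm_le ht8 (show t / 8 < t by linarith) y z (fun z => sq_nonneg (v z))
          (h.symm.pg.sq.gint y t ht)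
        rwa [show t / (t / 8) = 8 by field_simp] at this
      have p2 : gk (t / 4) (z - y) = √2 ^ n * Real.exp (-‖z - y‖ ^ 2 / t) * gk (t / 2) (z - y) := by
        rw [gk_two ht4, show 4 * (t / 4) = t by ring, show 2 * (t / 4) = t / 2 by ring]
      have p3 : gk (t / 4) (z - y) * v z ^ 2 ≤ 4 ^ n * A * gk (t / 2) (z - y) := by
        calc gk (t / 4) (z - y) * v z ^ 2 ≤ gk (t / 4) (z - y) *
              (√8 ^ n * Real.exp (‖z - y‖ ^ 2 / (2 * (t - t / 8))) * A) := by gcongr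
          _ = (√2 * √8) ^ n * A * gk (t / 2) (z - y) *
              (Real.exp (-‖z - y‖ ^ 2 / t) * Real.exp (‖z - y‖ ^ 2 / (2 * (t - t / 8)))) := by
              rw [p2, mul_pow]; ring
          _ ≤ (√2 * √8) ^ n * A * gk (t / 2) (z - y) * 1 := by
              gcongr
              rw [← Real.exp_add, Real.exp_le_one_iff]
              have : ‖z - y‖ ^ 2 / (2 * (t - t / 8)) ≤ ‖z - y‖ ^ 2 / t := by
                gcongr; linarith
              rw [neg_div]; linarith
          _ = _ := by
              rw [← Real.sqrt_mul (by norm_num), show (2 : ℝ) * 8 = 4 ^ 2 by norm_num,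
                Real.sqrt_sq (by norm_num), mul_one]
      have p4 : 1 ≤ 4 / ρ ^ 2 * (u z - v z - a) ^ 2 := by
        rw [div_mul_eq_mul_div, le_div_iff₀ (by positivity)]
        nlinarith
      have p5 : 0 ≤ 4 / ρ ^ 2 * (gk (t / 4) (z - y) * (v z ^ 2 * u z ^ 2)) := by positivity
      have p6 : 4 ^ n * A * gk (t / 2) (z - y) * 1 ≤
          4 ^ n * A * gk (t / 2) (z - y) * (4 / ρ ^ 2 * (u z - v z - a) ^ 2) := by gcongr
      linarith
    · have p4 : 1 ≤ 4 / ρ ^ 2 * u z ^ 2 := by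
        rw [div_mul_eq_mul_div, le_div_iff₀ (by positivity)]
        nlinarith
      have p5 : 0 ≤ 4 ^ n * A * (4 / ρ ^ 2) * (gk (t / 2) (z - y) * (u z - v z - a) ^ 2) := by
        positivity
      have p6 : gk (t / 4) (z - y) * v z ^ 2 * 1 ≤
          gk (t / 4) (z - y) * v z ^ 2 * (4 / ρ ^ 2 * u z ^ 2) := by gcongr
      linarith
  have hint := integral_mono i1 ((i2.const_mul _).add (i3.const_mul _)) key
  simp only [Pi.add_apply] at hint
  rw [integral_add (i2.const_mul _) (i3.const_mul _), integral_const_mul, integral_const_mul,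
    ← integral_gm y (t / 4) fun z => v z ^ 2, ← integral_gm y (t / 2), ← integral_gm y (t / 4)]
    at hint
  change mA v y (t / 4) ≤ _ + 4 / ρ ^ 2 * mP v u y (t / 4) at hint
  have hcac := h.symm.cac y ht4
  have hmono := h.symm.mA_mono y (s := 2 * (t / 4)) (t := t) (by positivity) (by linarith)
  have hD := mD_nonneg v y (t / 4)
  have k1 : mP v u y (t / 4) ≤ 4 * √2 ^ n / t * A := by
    have k2 : t / 4 * mP v u y (t / 4) ≤ √2 ^ n * A := by
      have : √2 ^ n * mA v y (2 * (t / 4)) ≤ √2 ^ n * A := by gcongr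
      have := mul_nonneg ht4.le hD
      linarith
    rw [div_mul_eq_mul_div, le_div_iff₀ ht]
    linarith
  have k3 : 4 / ρ ^ 2 * mP v u y (t / 4) ≤ 4 / ρ ^ 2 * (4 * √2 ^ n / t * A) := by gcongr
  linarith

/-- The distance in mean square of `u - v` to its affine approximation, seen from a nearby centre
at a smaller scale. -/
lemma Sol.flat_shift {u v : Euc n → ℝ} (h : Sol u v) (z y e : Euc n) {s t Λ X : ℝ} (ht : 0 < t)
    (hts : t ≤ s / 2) (hy : ‖y - z‖ ≤ Λ * √s)
    (hf : ∫ x, (u x - v x - ⟪e, x - z⟫) ^ 2 ∂(gm z s) ≤ X) :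
    ∫ x, (u x - v x - ⟪e, x - z⟫) ^ 2 ∂(gm y t) ≤ √(s / t) ^ n * Real.exp (Λ ^ 2) * X := by
  have hs : 0 < s := by linarith
  have pgw : PG fun x => u x - v x - ⟪e, x - z⟫ := (h.pg.sub h.symm.pg).sub (pg_aff e z)
  have k := integral_gm_le ht (show t < s by linarith) z y
    (fun x => sq_nonneg (u x - v x - ⟪e, x - z⟫)) (pgw.sq.gint z s hs)
  have h0 : 0 ≤ ∫ x, (u x - v x - ⟪e, x - z⟫) ^ 2 ∂(gm z s) := integral_nonneg fun _ => sq_nonneg _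
  refine k.trans ?_
  gcongr
  rw [div_le_iff₀ (by linarith)]
  have : ‖y - z‖ ^ 2 ≤ (Λ * √s) ^ 2 := by gcongr
  rw [mul_pow, Real.sq_sqrt hs.le] at this
  nlinarith [sq_nonneg Λ]

/-- As `Sol.flat_shift`, with the affine function replaced by its value at the new centre. -/
lemma Sol.flat_const {u v : Euc n → ℝ} (h : Sol u v) (z y e : Euc n) {s t Λ X : ℝ} (ht : 0 < t)
    (hts : t ≤ s / 2) (hy : ‖y - z‖ ≤ Λ * √s)
    (hf : ∫ x, (u x - v x - ⟪e, x - z⟫) ^ 2 ∂(gm z s) ≤ X) :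
    ∫ x, (u x - v x - ⟪e, y - z⟫) ^ 2 ∂(gm y t) ≤
      2 * (√(s / t) ^ n * Real.exp (Λ ^ 2) * X) + 2 * (t * ‖e‖ ^ 2) := by
  have k := h.flat_shift z y e ht hts hy hf
  have pgw : PG fun x => u x - v x - ⟪e, x - z⟫ := (h.pg.sub h.symm.pg).sub (pg_aff e z)
  have pgc : PG fun x => u x - v x - ⟪e, y - z⟫ :=
    (h.pg.sub h.symm.pg).sub ⟨continuous_const, |⟪e, y - z⟫|, 0, by simp⟩
  have i1 := (pgw.sq.gint y t ht).const_mul 2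
  have i2 := ((pg_aff e y).sq.gint y t ht).const_mul 2
  have k2 := int_aff_sq e y y ht
  have k3 : ∫ x, (u x - v x - ⟪e, y - z⟫) ^ 2 ∂(gm y t) ≤
      ∫ x, (2 * (u x - v x - ⟪e, x - z⟫) ^ 2 + 2 * ⟪e, x - y⟫ ^ 2) ∂(gm y t) := by
    refine integral_mono (pgc.sq.gint y t ht) (i1.add i2) fun x => ?_
    have e1 : ⟪e, x - z⟫ = ⟪e, x - y⟫ + ⟪e, y - z⟫ := by
      rw [← inner_add_right]; congr 1; abel
    simp only []
    rw [e1]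
    nlinarith [sq_nonneg (u x - v x - (⟪e, x - y⟫ + ⟪e, y - z⟫) - ⟪e, x - y⟫)]
  rw [integral_add i1 i2, integral_const_mul, integral_const_mul, k2] at k3
  simp only [sub_self, inner_zero_right] at k3
  linarith

set_option maxHeartbeats 1600000 in
/-- Clearing out: at points where the affine approximation is not small, the minor component is
tiny. -/
lemma Sol.clear (hn : 1 ≤ n) (Λ : ℝ) (hΛ : 0 ≤ Λ) : ∃ τ₁ > 0, τ₁ ≤ 1 / 2 ∧
    ∀ {u v : Euc n → ℝ} (_ : Sol u v) (z y e : Euc n) (s τ : ℝ), 0 < s → 0 < τ → τ ≤ τ₁ →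
      τ ^ (640 * n) * (s * mH u v z s) = 1 →
      ∫ x, (u x - v x - ⟪e, x - z⟫) ^ 2 ∂(gm z s) ≤ 5 * cF n * τ ^ (8 * n) * mH u v z s →
      s * ‖e‖ ^ 2 ≤ 2 * mH u v z s → ‖y - z‖ ≤ Λ * √s → τ * √(mH u v z s) ≤ ⟪e, y - z⟫ →
      v y ^ 2 ≤ 1 / s ∧ v y < u y := by
  set m : ℕ := 1280 * n + 10 with hm
  have hcF : (256 : ℝ) ≤ cF n := cF_ge n
  set K₁ : ℝ := (2 ^ (m + 1)) ^ n * Real.exp (Λ ^ 2) * (5 * cF n) with hK₁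
  have hK₁0 : 0 < K₁ := by positivity
  set K₂ : ℝ := 4 * 4 ^ n * (2 * K₁ + 2) + 16 * 2 ^ n * 4 ^ m with hK₂
  have hK₂0 : 0 < K₂ := by positivity
  set C : ℝ := 16 * 2 ^ n * Real.exp (Λ ^ 2) with hC
  have hC0 : 0 < C := by positivity
  refine ⟨min (1 / 2) (1 / (K₂ + C)), by positivity, min_le_left _ _,
    fun {u v} h z y e s τ hs hτ hτ₁ hκ hf he hy hℓ => ?_⟩
  have hτ2 : τ ≤ 1 / 2 := hτ₁.trans (min_le_left _ _)
  have hτK : τ * (K₂ + C) ≤ 1 := by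
    rw [← le_div_iff₀ (by positivity)]; exact hτ₁.trans (min_le_right _ _)
  rw [mul_add] at hτK
  have hτK₂ : τ * K₂ ≤ 1 := by linarith [mul_pos hτ hC0]
  have hτC : τ * C ≤ 1 := by linarith [mul_pos hτ hK₂0]
  set H := mH u v z s with hH
  have hH0 : 0 < H := h.mH_pos z hs
  set t : ℕ → ℝ := fun j => τ ^ 4 * s / 4 ^ j with ht
  have ht0 : ∀ j, 0 < t j := fun j => by positivity
  have hτ4 : τ ^ 4 ≤ 1 := pow_le_one₀ hτ.le (by linarith)
  have hts : ∀ j, t j ≤ s := fun j => by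
    simp only [ht]
    rw [div_le_iff₀ (by positivity)]
    have : (1 : ℝ) ≤ 4 ^ j := one_le_pow₀ (by norm_num)
    have : s * 1 ≤ s * 4 ^ j := by gcongr
    have : τ ^ 4 * s ≤ 1 * s := by gcongr
    linarith
  set a := ⟪e, y - z⟫ with ha
  have hE : ∀ j ≤ m, ∫ x, (u x - v x - a) ^ 2 ∂(gm y (t j / 2)) ≤ (2 * K₁ + 2) * τ ^ 4 * H := by
    intro j hj
    have htj := ht0 j
    have k := h.flat_const z y e (half_pos htj) (by linarith [hts j]) hy hf
    have k1 : √(s / (t j / 2)) ≤ 2 ^ (m + 1) / τ ^ 2 := by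
      rw [Real.sqrt_le_iff]
      refine ⟨by positivity, ?_⟩
      have e1 : s / (t j / 2) = 2 * 4 ^ j / τ ^ 4 := by simp only [ht]; field_simp
      rw [e1, div_pow, ← pow_mul, ← pow_mul]
      norm_num only
      gcongr
      have e2 : (2 : ℝ) ^ ((m + 1) * 2) = 4 * 4 ^ m := by
        rw [mul_comm, pow_mul]; norm_num [pow_succ]; ring
      rw [e2]
      have : (4 : ℝ) ^ j ≤ 4 ^ m := pow_le_pow_right₀ (by norm_num) hj
      linarith [pow_pos (show (0:ℝ) < 4 by norm_num) m]
    have k2 : √(s / (t j / 2)) ^ n * Real.exp (Λ ^ 2) * (5 * cF n * τ ^ (8 * n) * H) ≤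
        K₁ * τ ^ 4 * H := by
      calc _ ≤ (2 ^ (m + 1) / τ ^ 2) ^ n * Real.exp (Λ ^ 2) * (5 * cF n * τ ^ (8 * n) * H) := by
            gcongr
        _ = K₁ * τ ^ (6 * n) * H := by
            rw [hK₁, div_pow]
            have : τ ^ (8 * n) = (τ ^ 2) ^ n * τ ^ (6 * n) := by
              rw [← pow_mul, ← pow_add]; congr 1; ring
            rw [this]; field_simp
        _ ≤ K₁ * τ ^ 4 * H := by
            gcongr K₁ * ?_ * H
            exact pow_le_pow_of_le_one hτ.le (by linarith) (by omega)
    have k3 : t j / 2 * ‖e‖ ^ 2 ≤ τ ^ 4 * H := by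
      have : t j ≤ τ ^ 4 * s := by
        simp only [ht]
        exact div_le_self (by positivity) (one_le_pow₀ (by norm_num))
      have k4 : t j / 2 * ‖e‖ ^ 2 ≤ τ ^ 4 * s / 2 * ‖e‖ ^ 2 := by gcongr
      have k5 : τ ^ 4 * (s * ‖e‖ ^ 2) ≤ τ ^ 4 * (2 * H) := by gcongr
      linarith
    linarith
  have hq : 0 < √H := Real.sqrt_pos.mpr hH0
  set ρ := τ * √H with hρ
  have hρ0 : 0 < ρ := by positivity
  have hρ2 : ρ ^ 2 = τ ^ 2 * H := by rw [hρ, mul_pow, Real.sq_sqrt hH0.le]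
  have hstep : ∀ j ≤ m, mA v y (t (j + 1)) ≤ τ * mA v y (t j) := by
    intro j hj
    have htj := ht0 j
    have k := h.decay_step y htj hρ0 hℓ
    have e1 : t (j + 1) = t j / 4 := by simp only [ht, pow_succ]; field_simp
    rw [e1]
    refine k.trans ?_
    have hA := mA_nonneg v y (t j)
    gcongr
    have k1 : 4 / ρ ^ 2 * (4 ^ n * ∫ x, (u x - v x - a) ^ 2 ∂(gm y (t j / 2))) ≤
        4 * 4 ^ n * (2 * K₁ + 2) * τ ^ 2 := by
      calc _ ≤ 4 / ρ ^ 2 * (4 ^ n * ((2 * K₁ + 2) * τ ^ 4 * H)) := by gcongr; exact hE j hj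
        _ = _ := by rw [hρ2]; field_simp
    have k2 : 4 / ρ ^ 2 * (4 * √2 ^ n / t j) ≤ 16 * 2 ^ n * 4 ^ m * τ ^ 2 := by
      have e2 : 4 / ρ ^ 2 * (4 * √2 ^ n / t j) = 16 * √2 ^ n * 4 ^ j * (1 / (τ ^ 6 * (s * H))) := by
        rw [hρ2]; simp only [ht]; field_simp; norm_num
      have e3 : 1 / (τ ^ 6 * (s * H)) ≤ τ ^ 2 := by
        rw [div_le_iff₀ (by positivity), ← hκ]
        have : τ ^ (640 * n) ≤ τ ^ 8 :=
          pow_le_pow_of_le_one hτ.le (by linarith) (by omega)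
        calc τ ^ (640 * n) * (s * H) ≤ τ ^ 8 * (s * H) := by gcongr
          _ = _ := by ring
      rw [e2]
      have : √2 ≤ 2 := by rw [Real.sqrt_le_iff]; norm_num
      gcongr
      norm_num
    have k3 : K₂ * τ ^ 2 ≤ τ := by
      calc K₂ * τ ^ 2 = τ * (τ * K₂) := by ring
        _ ≤ τ * 1 := by gcongr
        _ = τ := mul_one _
    have e4 : K₂ * τ ^ 2 = 4 * 4 ^ n * (2 * K₁ + 2) * τ ^ 2 + 16 * 2 ^ n * 4 ^ m * τ ^ 2 := by
      rw [hK₂]; ring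
    rw [mul_add]
    linarith
  have hiter : ∀ j ≤ m, mA v y (t j) ≤ τ ^ j * mA v y (t 0) := by
    intro j
    induction j with
    | zero => intro _; simp
    | succ j ih =>
      intro hj
      have k1 := ih (by omega)
      have k2 := hstep j (by omega)
      calc _ ≤ τ * mA v y (t j) := k2
        _ ≤ τ * (τ ^ j * mA v y (t 0)) := by gcongr
        _ = _ := by ring
  have hA0 : mA v y (t 0) ≤ C * H := by
    have k1 := h.mH_shift z y hs hΛ hy
    have k2 := h.symm.mA_mono y (ht0 0) (hts 0)
    have k3 := mA_nonneg u y s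
    unfold mH at k1
    rw [hC, hH]; unfold mH; linarith
  have hAm : mA v y (t m) ≤ τ ^ (1280 * n + 9) * H := by
    calc _ ≤ τ ^ m * (C * H) := (hiter m le_rfl).trans (by gcongr)
      _ = τ ^ (1280 * n + 9) * H * (τ * C) := by rw [hm]; ring
      _ ≤ _ := mul_le_of_le_one_right (by positivity) hτC
  set T := t m / 2 with hT
  have hT0 : 0 < T := half_pos (ht0 m)
  have hTs : T ≤ s := by linarith [hts m, ht0 m]
  have hAT : mA v y T ≤ τ ^ (1280 * n + 9) * H :=
    (h.symm.mA_mono y hT0 (by linarith [ht0 m])).trans hAm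
  have hτ1 : τ ^ (640 * n) ≤ 1 := pow_le_one₀ hτ.le (by linarith)
  refine ⟨?_, ?_⟩
  · rw [le_div_iff₀ hs]
    calc v y ^ 2 * s ≤ τ ^ (1280 * n + 9) * H * s := by
          gcongr; exact (h.symm.sq_le_mA y hT0).trans hAT
      _ = τ ^ (640 * n) * τ ^ 9 * (τ ^ (640 * n) * (s * H)) := by ring
      _ ≤ 1 * 1 * 1 := by rw [hκ]; gcongr; exact pow_le_one₀ hτ.le (by linarith)
      _ = 1 := by norm_num
  · have hp := gm_prob y hT0
    have pgc : PG fun x => u x - v x - a :=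
      (h.pg.sub h.symm.pg).sub ⟨continuous_const, |a|, 0, by simp⟩
    have k1 := (sq_mean_le (pgc.sq.gint y T hT0) (pgc.gint y T hT0)).trans (hE m le_rfl)
    have k2 : ∫ x, (u x - v x - a) ∂(gm y T) = mU u y T - mU v y T - a := by
      have i1 := h.pg.gint y T hT0
      have i2 := h.symm.pg.gint y T hT0
      have i3 : Integrable (fun x => u x - v x) (gm y T) := i1.sub i2
      rw [integral_sub i3 (integrable_const a), integral_sub i1 i2]
      simp [mU]
    rw [k2] at k1
    have k3 : (2 * K₁ + 2) * τ ^ 4 * H ≤ (ρ / 2) ^ 2 := by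
      rw [div_pow, hρ2]
      have h4 : (1 : ℝ) ≤ 4 ^ n := one_le_pow₀ (by norm_num)
      have p1 : 4 * (2 * K₁ + 2) ≤ K₂ := by
        have : 4 * 1 * (2 * K₁ + 2) ≤ 4 * 4 ^ n * (2 * K₁ + 2) := by gcongr
        have : 0 ≤ 16 * (2:ℝ) ^ n * 4 ^ m := by positivity
        linarith
      have p2 : 4 * (2 * K₁ + 2) * τ ≤ 1 := by
        have : 4 * (2 * K₁ + 2) * τ ≤ K₂ * τ := by gcongr
        linarith
      have p3 : 4 * (2 * K₁ + 2) * τ * (τ ^ 3 * H) ≤ 1 * (τ ^ 3 * H) := by gcongr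
      have p4 : τ ^ 3 * H ≤ τ ^ 2 * H := by
        gcongr ?_ * H
        exact pow_le_pow_of_le_one hτ.le (by linarith) (by norm_num)
      linarith
    have k4 := (abs_le_of_sq_le_sq' (k1.trans k3) (by positivity)).1
    have k5 := h.mU_le_center y hT0
    have k6 := h.symm.le_mU y hT0
    have k7 : √T * mA v y T ≤ √s * (τ ^ (1280 * n + 9) * H) := by
      have := mA_nonneg v y T
      gcongr
    have k8 : √s * (τ ^ (1280 * n + 9) * H) < ρ := by
      set g := √s * √H with hg
      have hg0 : 0 < g := by have := Real.sqrt_pos.mpr hs; positivity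
      have hg2 : τ ^ (640 * n) * g ^ 2 = 1 := by
        rw [hg, mul_pow, Real.sq_sqrt hs.le, Real.sq_sqrt hH0.le, hκ]
      have hg1 : 1 ≤ g := by
        have : 1 ≤ g ^ 2 := by
          rw [← hg2]; exact mul_le_of_le_one_left (sq_nonneg g) hτ1
        exact (one_le_sq_iff₀ hg0.le).mp this
      have hgg : g ≤ g ^ 2 := le_self_pow₀ hg1 (by norm_num)
      calc √s * (τ ^ (1280 * n + 9) * H) = τ ^ (1280 * n + 9) * √H * g := by
            rw [hg]; nth_rewrite 1 [← Real.sq_sqrt hH0.le]; ring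
        _ ≤ τ ^ (1280 * n + 9) * √H * g ^ 2 := by gcongr
        _ = τ ^ (640 * n) * τ ^ 8 * (τ * √H) * (τ ^ (640 * n) * g ^ 2) := by ring
        _ ≤ 1 * τ ^ 8 * (τ * √H) * 1 := by rw [hg2]; gcongr
        _ < 1 * 1 * (τ * √H) * 1 := by
            gcongr
            exact pow_lt_one₀ hτ.le (by linarith) (by norm_num)
        _ = ρ := by rw [hρ]; ring
    linarith

/-! ### Passing from one balanced centre to the next scale -/

/-- The point `y` is off the interface, and the minor component there is at most `r ^ (-1/2)`. -/
def Cleared (u v : Euc n → ℝ) (y : Euc n) (r : ℝ) : Prop := min (u y) (v y) ^ 2 ≤ 1 / r ∧ u y ≠ v y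

/-- The second moment of `u - v` differs from `mH` by the cross term `2 * E[u v]`, which the energy
bound controls. -/
lemma Sol.mH_sub {u v : Euc n → ℝ} (h : Sol u v) (x : Euc n) {t : ℝ} (ht : 0 < t) :
    ∫ y, (u y - v y) ^ 2 ∂(gm x t) ≤ mH u v x t ∧
    (mH u v x t - ∫ y, (u y - v y) ^ 2 ∂(gm x t)) ^ 2 ≤ 4 * (mH u v x t / t) := by
  have hp := gm_prob x ht
  have i1 := h.pg.sq.gint x t ht
  have i2 := h.symm.pg.sq.gint x t ht
  have i3 := ((h.pg.mul h.symm.pg).gint x t ht)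
  have i4 := ((h.pg.mul h.symm.pg).sq.gint x t ht)
  have e1 : ∫ y, (u y - v y) ^ 2 ∂(gm x t) = mH u v x t - 2 * ∫ y, u y * v y ∂(gm x t) := by
    have : ∀ y, (u y - v y) ^ 2 = (u y ^ 2 + v y ^ 2) - 2 * (u y * v y) := fun y => by ring
    have i5 : Integrable (fun y => u y ^ 2 + v y ^ 2) (gm x t) := i1.add i2
    rw [funext this, integral_sub i5 (i3.const_mul 2), integral_add i1 i2,
      integral_const_mul]
    rfl
  have h0 : 0 ≤ ∫ y, u y * v y ∂(gm x t) :=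
    integral_nonneg fun y => mul_nonneg (h.up y).le (h.vp y).le
  have h1 : (∫ y, u y * v y ∂(gm x t)) ^ 2 ≤ mP u v x t := by
    refine (sq_mean_le i4 i3).trans (le_of_eq ?_)
    unfold mP
    exact integral_congr_ae (Eventually.of_forall fun z => by simp only; ring)
  have h2 : mP u v x t ≤ mH u v x t / t := by
    rw [le_div_iff₀ ht]
    have := h.energy_le x ht
    have := mul_nonneg ht.le (mD_nonneg u x t)
    have := mul_nonneg ht.le (mD_nonneg v x t)
    linarith
  rw [e1]
  constructor
  · linarith
  · calc _ = 4 * (∫ y, u y * v y ∂(gm x t)) ^ 2 := by ring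
      _ ≤ _ := by linarith

lemma int_young {μ : Measure (Euc n)} {f g : Euc n → ℝ} {a : ℝ} (ha : 0 < a)
    (hf : Integrable (fun y => f y ^ 2) μ) (hg : Integrable (fun y => g y ^ 2) μ)
    (hfg : Integrable (fun y => (f y - g y) ^ 2) μ) :
    ∫ y, f y ^ 2 ∂μ ≤ (1 + a) * ∫ y, g y ^ 2 ∂μ + (1 + 1 / a) * ∫ y, (f y - g y) ^ 2 ∂μ := by
  rw [← integral_const_mul, ← integral_const_mul, ← integral_add (hg.const_mul _)
    (hfg.const_mul _)]
  refine integral_mono hf ((hg.const_mul _).add (hfg.const_mul _)) fun y => ?_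
  have : 0 ≤ 1 / a * (a * g y - (f y - g y)) ^ 2 := by positivity
  have e : 1 / a * (a * g y - (f y - g y)) ^ 2 =
    a * g y ^ 2 - 2 * (g y * (f y - g y)) + 1 / a * (f y - g y) ^ 2 := by field_simp; ring
  simp only [Pi.add_apply]
  linarith

set_option maxHeartbeats 1600000 in
/-- The mass at a balanced centre near the approximate interface, one scale down. -/
lemma Sol.mass_step (Λ : ℝ) (hΛ : 0 ≤ Λ) : ∃ K > 0,
    ∀ {u v : Euc n → ℝ} (_ : Sol u v) (z p e : Euc n) (s τ Q : ℝ), 0 < s → 0 < τ → τ ≤ 1 →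
      1 ≤ Q → τ ^ 8 * (s * mH u v z s) ≥ 1 →
      ∫ x, (u x - v x - ⟪e, x - z⟫) ^ 2 ∂(gm p (s / 4)) ≤ Q * τ ^ 8 * mH u v z s →
      |s * ‖e‖ ^ 2 - mH u v z s| ≤ Q * τ ^ 8 * mH u v z s → ‖p - z‖ ≤ Λ * √s →
      mU u p (s / 4) = mU v p (s / 4) →
      |4 * mH u v p (s / 4) - mH u v z s| ≤ K * Q * τ ^ 4 * mH u v z s := by
  set C : ℝ := 16 * 2 ^ n * Real.exp (Λ ^ 2) with hC
  have hC1 : 1 ≤ C := by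
    have h1 : (1 : ℝ) ≤ 2 ^ n := one_le_pow₀ (by norm_num)
    have h2 : 1 ≤ Real.exp (Λ ^ 2) := Real.one_le_exp (sq_nonneg _)
    calc (1 : ℝ) ≤ 16 * 1 * 1 := by norm_num
      _ ≤ _ := by rw [hC]; gcongr
  refine ⟨20 * C + 40, by positivity, fun {u v} h z p e s τ Q hs hτ hτ1 hQ hκ hQf he hp hb => ?_⟩
  have hs4 : 0 < s / 4 := by positivity
  have hpr := gm_prob p hs4
  set H := mH u v z s with hH
  have hH0 : 0 < H := h.mH_pos z hs
  set H' := mH u v p (s / 4) with hH'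
  have hH'0 : 0 < H' := h.mH_pos p hs4
  have hH'C : H' ≤ C * H :=
    (h.mH_mono p hs4 (by linarith)).trans (h.mH_shift z p hs hΛ hp)
  have pgw : PG fun x => u x - v x := h.pg.sub h.symm.pg
  have pgl : PG fun x => ⟪e, x - z⟫ := pg_aff e z
  have pgd : PG fun x => u x - v x - ⟪e, x - z⟫ := pgw.sub pgl
  have pgd' : PG fun x => ⟪e, x - z⟫ - (u x - v x) := pgl.sub pgw
  have hesw : ∀ x, (⟪e, x - z⟫ - (u x - v x)) ^ 2 = (u x - v x - ⟪e, x - z⟫) ^ 2 := fun x => by ring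
  have y1 := int_young (pow_pos hτ 4) (pgw.sq.gint p _ hs4) (pgl.sq.gint p _ hs4)
    (pgd.sq.gint p _ hs4)
  have y2 := int_young (pow_pos hτ 4) (pgl.sq.gint p _ hs4) (pgw.sq.gint p _ hs4)
    (pgd'.sq.gint p _ hs4)
  rw [funext hesw] at y2
  have ym := sq_mean_le (pgd.sq.gint p _ hs4) (pgd.gint p _ hs4)
  have em : ∫ x, (u x - v x - ⟪e, x - z⟫) ∂(gm p (s / 4)) = -⟪e, p - z⟫ := by
    rw [integral_sub (pgw.gint p _ hs4) (pgl.gint p _ hs4),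
      integral_sub (h.pg.gint p _ hs4) (h.symm.pg.gint p _ hs4), int_aff e z p hs4]
    change mU u p (s / 4) - mU v p (s / 4) - _ = _
    rw [hb]; ring
  rw [em, neg_sq] at ym
  rw [int_aff_sq e z p hs4] at y1 y2
  obtain ⟨w1, w2⟩ := h.mH_sub p hs4
  set W := ∫ x, (u x - v x) ^ 2 ∂(gm p (s / 4)) with hW
  set D := ∫ x, (u x - v x - ⟪e, x - z⟫) ^ 2 ∂(gm p (s / 4)) with hD
  set a := ⟪e, p - z⟫ with ha
  set E := ‖e‖ ^ 2 with hE
  have hD0 : 0 ≤ D := integral_nonneg fun _ => sq_nonneg _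
  have hW0 : 0 ≤ W := integral_nonneg fun _ => sq_nonneg _
  set δ := τ ^ 4 with hδ
  have hδ0 : 0 < δ := by positivity
  have hδ1 : δ ≤ 1 := pow_le_one₀ hτ.le hτ1
  have hδ8 : τ ^ 8 = δ * δ := by rw [hδ]; ring
  rw [hδ8] at hQf he hκ
  have q1 : (1 + 1 / δ) * D ≤ 2 * (Q * δ * H) := by
    calc (1 + 1 / δ) * D ≤ (1 / δ + 1 / δ) * (Q * (δ * δ) * H) := by
          gcongr
          rw [le_div_iff₀ hδ0]; linarith
      _ = _ := by field_simp; norm_num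
  have q2 : D ≤ Q * δ * H := by
    refine hQf.trans ?_
    have : δ * δ ≤ δ := mul_le_of_le_one_left hδ0.le hδ1
    gcongr
  have q3 : Q * (δ * δ) * H ≤ Q * δ * H := by
    have : δ * δ ≤ δ := mul_le_of_le_one_left hδ0.le hδ1
    gcongr
  have q4 := (abs_le.mp (he.trans q3))
  have q5 : δ * H ≤ Q * δ * H := by
    have : 1 * (δ * H) ≤ Q * (δ * H) := by gcongr
    linarith
  have q6 : a ^ 2 ≤ Q * δ * H := ym.trans q2
  have q7 : (H' - W) ^ 2 ≤ (4 * C * δ * H) ^ 2 := by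
    have k1 : H' / (s / 4) ≤ 4 * C * (δ * δ) * H ^ 2 := by
      rw [div_le_iff₀ hs4]
      calc H' ≤ C * H * 1 := by linarith
        _ ≤ C * H * (δ * δ * (s * H)) := by gcongr
        _ = _ := by ring
    calc _ ≤ 4 * (4 * C * (δ * δ) * H ^ 2) := by linarith
      _ = 1 * (16 * C * (δ * δ) * H ^ 2) := by ring
      _ ≤ C * (16 * C * (δ * δ) * H ^ 2) := by gcongr
      _ = _ := by ring
  have q8 := (abs_le_of_sq_le_sq' q7 (by positivity)).2
  have qC : 4 * C * δ * H ≤ 4 * C * (Q * δ * H) := by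
    have : 4 * C * (δ * H) ≤ 4 * C * (Q * δ * H) := by gcongr
    linarith
  have q9 : δ * W ≤ C * (Q * δ * H) := by
    calc δ * W ≤ δ * (C * H) := by gcongr; linarith
      _ = C * (δ * H) := by ring
      _ ≤ _ := by gcongr
  set Y := Q * δ * H with hY
  have hY0 : 0 ≤ Y := by positivity
  have hL : a ^ 2 + s / 4 * E ≤ H / 4 + 2 * Y := by linarith
  have q10 : δ * (a ^ 2 + s / 4 * E) ≤ 3 * Y := by
    have : δ * (a ^ 2 + s / 4 * E) ≤ δ * (H / 4 + 2 * Y) := by gcongr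
    have : δ * Y ≤ Y := mul_le_of_le_one_left hY0 hδ1
    linarith
  have q11 : 0 ≤ a ^ 2 := sq_nonneg a
  have q12 : 0 ≤ C * Y := by positivity
  have eK : (20 * C + 40) * Q * δ * H = 20 * (C * Y) + 40 * Y := by rw [hY]; ring
  rw [eK, abs_le]
  constructor <;> linarith

set_option maxHeartbeats 1600000 in
/-- From a balanced centre near `y`: either `y` is cleared, or there is a balanced centre near `y`
at a quarter of the scale, with almost the same normalized mass. -/
lemma Sol.chain_step (hn : 1 ≤ n) (Λ : ℝ) (hΛ : 0 ≤ Λ) : ∃ τ₁ > 0, ∃ K > 0,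
    ∀ {u v : Euc n → ℝ} (_ : Sol u v) (z y : Euc n) (s τ : ℝ), 0 < s → 0 < τ → τ ≤ τ₁ →
      τ ^ (640 * n) * (s * mH u v z s) = 1 → mU u z s = mU v z s → ‖y - z‖ ≤ Λ * √s →
      Cleared u v y s ∨ ∃ z', ‖y - z'‖ ≤ √(s / 4) ∧ mU u z' (s / 4) = mU v z' (s / 4) ∧
        |4 * mH u v z' (s / 4) - mH u v z s| ≤ K * τ ^ 4 * mH u v z s := by
  obtain ⟨τ₀, hτ₀, hτ₀2, hclear⟩ := Sol.clear hn Λ hΛ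
  obtain ⟨K, hK, hmass⟩ := Sol.mass_step (n := n) (Λ + 1) (by positivity)
  have hcF : (256 : ℝ) ≤ cF n := cF_ge n
  set Q : ℝ := 2 ^ n * Real.exp ((Λ + 1) ^ 2) * (5 * cF n) with hQ
  have hQ3 : 3 * cF n ≤ Q := by
    have h1 : (1 : ℝ) ≤ 2 ^ n := one_le_pow₀ (by norm_num)
    have h2 : 1 ≤ Real.exp ((Λ + 1) ^ 2) := Real.one_le_exp (sq_nonneg _)
    calc 3 * cF n ≤ 1 * 1 * (5 * cF n) := by linarith
      _ ≤ _ := by rw [hQ]; gcongr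
  have hQ1 : 1 ≤ Q := by linarith
  refine ⟨min (min τ₀ (1 / 9)) (min (1 / (2 * 4 ^ n)) (1 / (2 * Q))), by positivity, K * Q,
    by positivity, fun {u v} h z y s τ hs hτ hτ₁ hκ hb hy => ?_⟩
  have t1 : τ ≤ τ₀ := hτ₁.trans ((min_le_left _ _).trans (min_le_left _ _))
  have t2 : τ ≤ 1 / 9 := hτ₁.trans ((min_le_left _ _).trans (min_le_right _ _))
  have t3 : τ * (2 * 4 ^ n) ≤ 1 := by
    rw [← le_div_iff₀ (by positivity)]
    exact hτ₁.trans ((min_le_right _ _).trans (min_le_left _ _))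
  have t4 : τ * (2 * Q) ≤ 1 := by
    rw [← le_div_iff₀ (by positivity)]
    exact hτ₁.trans ((min_le_right _ _).trans (min_le_right _ _))
  have tle : τ ≤ 1 := by linarith
  set H := mH u v z s with hH
  have hH0 : 0 < H := h.mH_pos z hs
  set θ := τ ^ (8 * n) with hθ
  have hθ0 : 0 < θ := by positivity
  have hθτ : θ ≤ τ := by
    calc θ ≤ τ ^ 1 := pow_le_pow_of_le_one hτ.le tle (by omega)
      _ = τ := pow_one τ
  have hθ8 : θ ≤ τ ^ 8 := pow_le_pow_of_le_one hτ.le tle (by omega)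
  obtain ⟨e, he1, he2⟩ := h.flat z hs hθ0
    (by have : θ * (2 * 4 ^ n) ≤ τ * (2 * 4 ^ n) := by gcongr
        linarith)
    (by rw [hθ, ← pow_mul, show 8 * n * 80 = 640 * n by ring, ← hH, hκ]) hb
  have he3 : |s * ‖e‖ ^ 2 - H| ≤ Q * τ ^ 8 * H := by
    refine he2.trans ?_
    gcongr
  have hQτ : Q * τ ^ 6 ≤ 1 / 2 := by
    have : τ ^ 6 ≤ τ := by
      calc τ ^ 6 ≤ τ ^ 1 := pow_le_pow_of_le_one hτ.le tle (by omega)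
        _ = τ := pow_one τ
    have : Q * τ ^ 6 ≤ Q * τ := by gcongr
    linarith
  have hQτ8 : Q * τ ^ 8 ≤ 1 / 2 := by
    have : τ ^ 8 ≤ τ ^ 6 := pow_le_pow_of_le_one hτ.le tle (by omega)
    have : Q * τ ^ 8 ≤ Q * τ ^ 6 := by gcongr
    linarith
  have he4 : Q * τ ^ 8 * H ≤ 1 / 2 * H := by gcongr
  obtain ⟨he5, he6⟩ := abs_le.mp he3
  have hse_hi : s * ‖e‖ ^ 2 ≤ 2 * H := by linarith
  have hse_lo : H / 2 ≤ s * ‖e‖ ^ 2 := by linarith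
  have hq : 0 < √H := Real.sqrt_pos.mpr hH0
  by_cases c1 : τ * √H ≤ ⟪e, y - z⟫
  · left
    obtain ⟨k1, k2⟩ := hclear h z y e s τ hs hτ t1 hκ he1 hse_hi hy c1
    refine ⟨?_, k2.ne'⟩
    rwa [min_eq_right k2.le]
  by_cases c2 : τ * √H ≤ -⟪e, y - z⟫
  · left
    have ec := mH_comm u v z s
    obtain ⟨k1, k2⟩ := hclear h.symm z y (-e) s τ hs hτ t1 (by rw [← ec]; exact hκ) (by
        rw [← ec]
        refine le_trans (le_of_eq ?_) he1
        refine integral_congr_ae (Eventually.of_forall fun x => ?_)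
        simp only [inner_neg_left]
        ring) (by rw [← ec, norm_neg]; exact hse_hi) hy
      (by rw [← ec, inner_neg_left]; exact c2)
    refine ⟨?_, k2.ne⟩
    rwa [min_eq_left k2.le]
  right
  push Not at c1 c2
  have hs4 : 0 < s / 4 := by positivity
  have hE0 : 0 < ‖e‖ ^ 2 := by
    by_contra! hle
    have : s * ‖e‖ ^ 2 ≤ 0 := mul_nonpos_of_nonneg_of_nonpos hs.le hle
    linarith
  have hE : 0 < ‖e‖ := by
    rcases (norm_nonneg e).eq_or_lt with h0 | h0
    · rw [← h0] at hE0; norm_num at hE0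
    · exact h0
  set lam := 3 * τ * √H / ‖e‖ ^ 2 with hlam
  have hlam0 : 0 < lam := by positivity
  have hlamE : lam * ‖e‖ ^ 2 = 3 * τ * √H := by rw [hlam]; field_simp
  have hdisp : lam * ‖e‖ ≤ √(s / 4) := by
    apply Real.le_sqrt_of_sq_le
    have e1 : (lam * ‖e‖) ^ 2 = 9 * τ ^ 2 * (H / ‖e‖ ^ 2) := by
      rw [hlam]; field_simp; rw [Real.sq_sqrt hH0.le]; ring
    have e2 : H / ‖e‖ ^ 2 ≤ 2 * s := by rw [div_le_iff₀ hE0]; linarith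
    have e3 : τ ^ 2 ≤ (1 / 9) ^ 2 := by gcongr
    calc (lam * ‖e‖) ^ 2 ≤ 9 * (1 / 9) ^ 2 * (2 * s) := by rw [e1]; gcongr
      _ ≤ s / 4 := by linarith
  have hnear : ∀ r, |r| ≤ lam → ‖y + r • e - y‖ ≤ √(s / 4) := by
    intro r hr
    rw [add_sub_cancel_left, norm_smul, Real.norm_eq_abs]
    exact (by gcongr : |r| * ‖e‖ ≤ lam * ‖e‖).trans hdisp
  have hfar : ∀ r, |r| ≤ lam → ‖y + r • e - z‖ ≤ (Λ + 1) * √s := by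
    intro r hr
    have k1 : √(s / 4) ≤ √s := Real.sqrt_le_sqrt (by linarith)
    calc ‖y + r • e - z‖ = ‖(y + r • e - y) + (y - z)‖ := by congr 1; abel
      _ ≤ ‖y + r • e - y‖ + ‖y - z‖ := norm_add_le _ _
      _ ≤ √s + Λ * √s := by linarith [hnear r hr]
      _ = _ := by ring
  have hD : ∀ r, |r| ≤ lam → ∫ x, (u x - v x - ⟪e, x - z⟫) ^ 2 ∂(gm (y + r • e) (s / 4)) ≤
      Q * τ ^ 8 * H := by
    intro r hr
    have k := h.flat_shift z (y + r • e) e hs4 (by linarith) (hfar r hr) he1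
    refine k.trans ?_
    have e1 : √(s / (s / 4)) = 2 := by
      rw [show s / (s / 4) = 2 ^ 2 by field_simp; norm_num]; simp
    rw [e1]
    calc _ = Q * θ * H := by rw [hQ]; ring
      _ ≤ _ := by gcongr
  have pgw : PG fun x => u x - v x := h.pg.sub h.symm.pg
  have pgl : PG fun x => ⟪e, x - z⟫ := pg_aff e z
  have hmean : ∀ r, |r| ≤ lam → |mU u (y + r • e) (s / 4) - mU v (y + r • e) (s / 4) -
      (⟪e, y - z⟫ + r * ‖e‖ ^ 2)| ≤ τ * √H := by
    intro r hr
    have hp := gm_prob (y + r • e) hs4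
    have k := (sq_mean_le ((pgw.sub pgl).sq.gint (y + r • e) _ hs4)
      ((pgw.sub pgl).gint (y + r • e) _ hs4)).trans (hD r hr)
    rw [integral_sub (pgw.gint _ _ hs4) (pgl.gint _ _ hs4),
      integral_sub (h.pg.gint _ _ hs4) (h.symm.pg.gint _ _ hs4), int_aff e z _ hs4] at k
    have e1 : ⟪e, y + r • e - z⟫ = ⟪e, y - z⟫ + r * ‖e‖ ^ 2 := by
      rw [show y + r • e - z = (y - z) + r • e by abel, inner_add_right, inner_smul_right,
        real_inner_self_eq_norm_sq]
    rw [e1] at k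
    apply abs_le_of_sq_le_sq (k.trans _) (by positivity)
    rw [mul_pow, Real.sq_sqrt hH0.le]
    calc Q * τ ^ 8 * H = Q * τ ^ 6 * (τ ^ 2 * H) := by ring
      _ ≤ 1 / 2 * (τ ^ 2 * H) := by gcongr
      _ ≤ τ ^ 2 * H := by linarith [mul_pos (pow_pos hτ 2) hH0]
  have hτq : 0 < τ * √H := by positivity
  have hcont : ContinuousOn (fun r : ℝ => mU u (y + r • e) (s / 4) - mU v (y + r • e) (s / 4))
      (Icc (-lam) lam) := by
    have c3 : Continuous fun r : ℝ => ((y + r • e, s / 4) : Euc n × ℝ) := by fun_prop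
    have c4 := ((continuous_gE h.pg).comp c3).sub ((continuous_gE h.symm.pg).comp c3)
    refine (c4.congr fun r => ?_).continuousOn
    rw [mU_eq_scale u _ hs4, mU_eq_scale v _ hs4]
    rfl
  obtain ⟨r, hr, hr0⟩ := intermediate_value_Icc (by linarith : -lam ≤ lam) hcont
    (show (0 : ℝ) ∈ Icc _ _ by
      have k1 := abs_le.mp (hmean (-lam) (by rw [abs_neg, abs_of_pos hlam0]))
      have k2 := abs_le.mp (hmean lam (by rw [abs_of_pos hlam0]))
      rw [neg_mul, hlamE] at k1
      rw [hlamE] at k2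
      constructor
      · linarith [k1.2]
      · linarith [k2.1])
  have hr' : |r| ≤ lam := abs_le.mpr hr
  have hbal : mU u (y + r • e) (s / 4) = mU v (y + r • e) (s / 4) := sub_eq_zero.mp hr0
  refine ⟨y + r • e, by rw [norm_sub_rev]; exact hnear r hr', hbal, ?_⟩
  refine hmass h z (y + r • e) e s τ Q hs hτ tle hQ1 ?_ (hD r hr') he3 (hfar r hr') hbal
  rw [← hκ, ge_iff_le]
  have : τ ^ (640 * n) ≤ τ ^ 8 := pow_le_pow_of_le_one hτ.le tle (by omega)
  gcongr ?_ * _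

/-! ### Iteration over scales -/

lemma Cleared.mono {u v : Euc n → ℝ} {y : Euc n} {r r' : ℝ} (h : Cleared u v y r) (hr' : 0 < r')
    (hrr : r' ≤ r) : Cleared u v y r' :=
  ⟨h.1.trans (one_div_le_one_div_of_le hr' hrr), h.2⟩

lemma exists_root {N : ℕ} (hN : N ≠ 0) {a : ℝ} (ha : 0 < a) : ∃ b > 0, b ^ N = a :=
  ⟨a ^ ((N : ℝ)⁻¹), Real.rpow_pos_of_pos ha _, Real.rpow_inv_natCast_pow ha.le hN⟩

set_option maxHeartbeats 1600000 in
/-- Iterating `Sol.chain_step` down from a balanced centre at scale `s`: since the relative errors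
in the normalized mass `mH / s` grow geometrically as the scale decreases, they are dominated by
the last one, and the normalized mass stays comparable to its initial value as long as
`(s / 4 ^ j) ^ 2 * h₀` stays above a fixed constant. -/
lemma Sol.chain (hn : 1 ≤ n) (Λ : ℝ) (hΛ : 1 ≤ Λ) : ∃ κ > 0,
    ∀ {u v : Euc n → ℝ} (_ : Sol u v) (z y : Euc n) (s h₀ : ℝ), 0 < s → h₀ = mH u v z s / s →
      mU u z s = mU v z s → ‖y - z‖ ≤ Λ * √s → ∀ j : ℕ, κ ≤ (s / 4 ^ j) ^ 2 * h₀ →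
      Cleared u v y (s / 4 ^ j) ∨ ∃ z', ‖y - z'‖ ≤ Λ * √(s / 4 ^ j) ∧
        mU u z' (s / 4 ^ j) = mU v z' (s / 4 ^ j) ∧
        h₀ / 2 ≤ mH u v z' (s / 4 ^ j) / (s / 4 ^ j) ∧
        mH u v z' (s / 4 ^ j) / (s / 4 ^ j) ≤ 2 * h₀ := by
  obtain ⟨τ₁, hτ₁, K, hK, hstep⟩ := Sol.chain_step hn Λ (by linarith)
  have hN : 640 * n ≠ 0 := by omega
  set N := 640 * n with hNdef
  obtain ⟨q, hq, hqN⟩ := exists_root hN (show (0 : ℝ) < 16 by norm_num)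
  have hq1 : 1 < q := by
    by_contra hc
    push Not at hc
    have := pow_le_one₀ (n := N) hq.le hc
    linarith
  have hq4 : 1 < q ^ 4 := one_lt_pow₀ hq1 (by norm_num)
  obtain ⟨M, hMdef⟩ : ∃ M, M = 2 * K / (q ^ 4 - 1) := ⟨_, rfl⟩
  have hMp : 0 < M := by rw [hMdef]; exact div_pos (by linarith) (by linarith)
  have hM : M * q ^ 4 = M + 2 * K := by
    have : M * (q ^ 4 - 1) = 2 * K := by
      rw [hMdef]; exact div_mul_cancel₀ _ (by linarith)
    linarith
  obtain ⟨γ, hγ, hγ4⟩ := exists_root (show 4 ≠ 0 by norm_num) (show 0 < 1 / (2 * M) by positivity)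
  set β := min τ₁ γ with hβ
  have hβ0 : 0 < β := lt_min hτ₁ hγ
  have hβM : M * β ^ 4 ≤ 1 / 2 := by
    calc M * β ^ 4 ≤ M * γ ^ 4 := by gcongr; exact min_le_right _ _
      _ = 1 / 2 := by rw [hγ4]; field_simp
  refine ⟨2 / β ^ N, by positivity, ?_⟩
  intro u v h z y s h₀ hs hh₀ hbal hy
  have hh0 : 0 < h₀ := by rw [hh₀]; exact div_pos (h.mH_pos z hs) hs
  -- `b j` is the size of the relative error at scale `s / 4 ^ j`
  obtain ⟨b₀, hb₀, hb₀N⟩ := exists_root hN (show 0 < 2 / (s ^ 2 * h₀) by positivity)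
  have hb : ∀ j : ℕ, (b₀ * q ^ j) ^ N * ((s / 4 ^ j) ^ 2 * h₀) = 2 := by
    intro j
    have e16 : ((4 : ℝ) ^ j) ^ 2 = 16 ^ j := by
      rw [← pow_mul, mul_comm, pow_mul]; norm_num
    rw [mul_pow, hb₀N, ← pow_mul, mul_comm j N, pow_mul, hqN, div_pow, e16]
    field_simp
  have hbβ : ∀ j : ℕ, 2 / β ^ N ≤ (s / 4 ^ j) ^ 2 * h₀ → b₀ * q ^ j ≤ β := by
    intro j hj
    have h1 := hb j
    have h2 : 2 ≤ (s / 4 ^ j) ^ 2 * h₀ * β ^ N := by rwa [div_le_iff₀ (by positivity)] at hj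
    have h3 : 0 < (s / 4 ^ j) ^ 2 * h₀ := by positivity
    have h4 : (b₀ * q ^ j) ^ N ≤ β ^ N := by
      refine le_of_mul_le_mul_right ?_ h3
      linarith
    exact le_of_pow_le_pow_left₀ hN hβ0.le h4
  have key : ∀ j : ℕ, 2 / β ^ N ≤ (s / 4 ^ j) ^ 2 * h₀ →
      Cleared u v y (s / 4 ^ j) ∨ ∃ z', ‖y - z'‖ ≤ Λ * √(s / 4 ^ j) ∧
        mU u z' (s / 4 ^ j) = mU v z' (s / 4 ^ j) ∧
        |mH u v z' (s / 4 ^ j) / (s / 4 ^ j) - h₀| ≤ M * (b₀ * q ^ j) ^ 4 * h₀ := by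
    intro j
    induction j with
    | zero =>
      intro _
      refine Or.inr ⟨z, by simpa using hy, by simpa using hbal, ?_⟩
      simp only [pow_zero, div_one]
      rw [← hh₀, sub_self, abs_zero]; positivity
    | succ j ih =>
      intro hj
      obtain ⟨t, ht⟩ : ∃ t, t = s / 4 ^ j := ⟨_, rfl⟩
      have ht0 : 0 < t := by rw [ht]; positivity
      have ht4 : s / 4 ^ (j + 1) = t / 4 := by rw [ht, pow_succ]; field_simp
      have hbt := hb j
      have hbb := hbβ j
      rw [ht4] at hj ⊢
      rw [← ht] at ih hbt hbb
      have hjt : 2 / β ^ N ≤ t ^ 2 * h₀ := hj.trans (by gcongr; linarith)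
      obtain ⟨b, hbdef⟩ : ∃ b, b = b₀ * q ^ j := ⟨_, rfl⟩
      have ebq : b₀ * q ^ (j + 1) = b * q := by rw [hbdef]; ring
      rw [ebq]
      rw [← hbdef] at ih hbt hbb
      have hb0 : 0 < b := by rw [hbdef]; positivity
      have hbβ' : b ≤ β := hbb hjt
      rcases ih hjt with hc | ⟨w, hw1, hw2, hw3⟩
      · exact Or.inl (hc.mono (by positivity) (by linarith))
      have hMb : M * b ^ 4 ≤ 1 / 2 := le_trans (by gcongr) hβM
      have hMb0 : 0 < M * b ^ 4 := by positivity
      obtain ⟨H, hH⟩ : ∃ H, H = mH u v w t := ⟨_, rfl⟩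
      have hH0 : 0 < H := by rw [hH]; exact h.mH_pos w ht0
      rw [← hH] at hw3
      have hw3' := abs_le.mp hw3
      have hMh : M * b ^ 4 * h₀ ≤ 1 / 2 * h₀ := by gcongr
      have hlo : h₀ / 2 ≤ H / t := by linarith [hw3'.1]
      have hhi : H / t ≤ 2 * h₀ := by linarith [hw3'.2]
      obtain ⟨τ, hτ, hτN⟩ := exists_root hN (show 0 < 1 / (t * H) by positivity)
      have hτb : τ ≤ b := by
        refine le_of_pow_le_pow_left₀ hN hb0.le ?_
        rw [hτN, div_le_iff₀ (by positivity)]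
        have e1 : t * H = t ^ 2 * (H / t) := by field_simp
        rw [e1]
        have : b ^ N * (t ^ 2 * (h₀ / 2)) ≤ b ^ N * (t ^ 2 * (H / t)) := by gcongr
        linarith
      have hτH : τ ^ N * (t * mH u v w t) = 1 := by
        rw [← hH, hτN]; field_simp
      rcases hstep h w y t τ ht0 hτ (hτb.trans (hbβ'.trans (min_le_left _ _))) hτH hw2 hw1 with
        hc | ⟨w', h1, h2, h3⟩
      · exact Or.inl (hc.mono (by positivity) (by linarith))
      refine Or.inr ⟨w', h1.trans (le_mul_of_one_le_left (Real.sqrt_nonneg _) hΛ), h2, ?_⟩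
      rw [← hH] at h3
      have e2 : mH u v w' (t / 4) / (t / 4) - h₀
          = (4 * mH u v w' (t / 4) - H) / t + (H / t - h₀) := by field_simp; ring
      rw [e2]
      have h4 : |(4 * mH u v w' (t / 4) - H) / t| ≤ 2 * K * b ^ 4 * h₀ := by
        rw [abs_div, abs_of_pos ht0, div_le_iff₀ ht0]
        have hτ4 : τ ^ 4 ≤ b ^ 4 := by gcongr
        calc _ ≤ K * τ ^ 4 * H := h3
          _ ≤ K * b ^ 4 * H := by gcongr
          _ = K * b ^ 4 * (H / t) * t := by field_simp
          _ ≤ K * b ^ 4 * (2 * h₀) * t := by gcongr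
          _ = _ := by ring
      calc _ ≤ |(4 * mH u v w' (t / 4) - H) / t| + |H / t - h₀| := abs_add_le _ _
        _ ≤ 2 * K * b ^ 4 * h₀ + M * b ^ 4 * h₀ := add_le_add h4 hw3
        _ = (M + 2 * K) * b ^ 4 * h₀ := by ring
        _ = M * (b * q) ^ 4 * h₀ := by rw [← hM]; ring
  intro j hj
  rcases key j hj with hc | ⟨w, h1, h2, h3⟩
  · exact Or.inl hc
  refine Or.inr ⟨w, h1, h2, ?_⟩
  have h4 : M * (b₀ * q ^ j) ^ 4 * h₀ ≤ 1 / 2 * h₀ := by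
    have : M * (b₀ * q ^ j) ^ 4 ≤ M * β ^ 4 := by gcongr; exact hbβ j hj
    have := this.trans hβM
    gcongr
  have h5 := abs_le.mp h3
  constructor
  · linarith [h5.1]
  · linarith [h5.2]

lemma Sol.sq_le_mH {u v : Euc n → ℝ} (h : Sol u v) (x : Euc n) {s : ℝ} (hs : 0 < s) :
    u x ^ 2 ≤ mH u v x s := by
  have h1 := h.sq_le_mA x hs
  have h2 : 0 ≤ mA v x s := mA_nonneg v x s
  have : mH u v x s = mA u x s + mA v x s := rfl
  linarith

/-- The normalized mass at the large balanced centres is bounded below as soon as there is an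
interface point `x₀`: descending from the balanced centre to the smallest admissible scale, the mass
there controls `u x₀`. -/
lemma Sol.low (hn : 1 ≤ n) {u v : Euc n → ℝ} (h : Sol u v) {x₀ : Euc n} (hx₀ : u x₀ = v x₀) (Cs : ℝ)
    (hCs : 0 < Cs) : ∃ hl > 0, ∃ S₁ : ℝ, ∀ z s, S₁ ≤ s → 0 < s → ‖z‖ ≤ Cs * √s →
      mU u z s = mU v z s → hl ≤ mH u v z s / s := by
  obtain ⟨κ, hκ, hchain⟩ := Sol.chain hn (Cs + 1) (by linarith)
  obtain ⟨C, hC⟩ : ∃ C, C = 16 * 2 ^ n * Real.exp ((Cs + 1) ^ 2) := ⟨_, rfl⟩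
  have hC0 : 0 < C := by rw [hC]; positivity
  have hux := h.up x₀
  have hη := h.mH_pos 0 one_pos
  refine ⟨u x₀ ^ 4 / (64 * C ^ 2 * κ), by positivity,
    max (max 1 (‖x₀‖ ^ 2)) (κ * C / mH u v 0 1), ?_⟩
  intro z s hS hs hz hbal
  have hs1 : 1 ≤ s := ((le_max_left _ _).trans (le_max_left _ _)).trans hS
  have hs2 : ‖x₀‖ ^ 2 ≤ s := ((le_max_right _ _).trans (le_max_left _ _)).trans hS
  have hs3 : κ * C / mH u v 0 1 ≤ s := (le_max_right _ _).trans hS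
  have hxs : ‖x₀‖ ≤ √s := Real.le_sqrt_of_sq_le hs2
  obtain ⟨h₀, hh₀⟩ : ∃ h₀, h₀ = mH u v z s / s := ⟨_, rfl⟩
  have hh0 : 0 < h₀ := by rw [hh₀]; exact div_pos (h.mH_pos z hs) hs
  have hd : ‖x₀ - z‖ ≤ (Cs + 1) * √s := by
    calc ‖x₀ - z‖ ≤ ‖x₀‖ + ‖z‖ := norm_sub_le _ _
      _ ≤ √s + Cs * √s := add_le_add hxs hz
      _ = _ := by ring
  have hd0 : ‖(0 : Euc n) - z‖ ≤ (Cs + 1) * √s := by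
    rw [zero_sub, norm_neg]
    exact hz.trans (by gcongr; linarith)
  have hsh := h.mH_shift z 0 hs (by linarith) hd0
  rw [← hC] at hsh
  have hmono := h.mH_mono 0 one_pos hs1
  have hκ0 : κ ≤ s ^ 2 * h₀ := by
    have e1 : s ^ 2 * h₀ = s * mH u v z s := by rw [hh₀]; field_simp
    rw [e1]
    have h1 : κ * C ≤ s * mH u v 0 1 := by rwa [div_le_iff₀ hη] at hs3
    have h2 : s * mH u v 0 1 ≤ s * (C * mH u v z s) := by gcongr; linarith
    have h3 : κ * C ≤ (s * mH u v z s) * C := by linarith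
    exact le_of_mul_le_mul_right h3 hC0
  obtain ⟨j, hj1, hj2⟩ := exists_nat_pow_near (show 1 ≤ s ^ 2 * h₀ / κ by
    rwa [one_le_div hκ]) (show (1 : ℝ) < 16 by norm_num)
  have e16 : ((4 : ℝ) ^ j) ^ 2 = 16 ^ j := by
    rw [← pow_mul, mul_comm, pow_mul]; norm_num
  have hlow : κ ≤ (s / 4 ^ j) ^ 2 * h₀ := by
    rw [div_pow, e16, div_mul_eq_mul_div, le_div_iff₀ (by positivity)]
    rw [le_div_iff₀ hκ] at hj1
    linarith
  have hup : (s / 4 ^ j) ^ 2 * h₀ ≤ 16 * κ := by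
    rw [div_pow, e16, div_mul_eq_mul_div, div_le_iff₀ (by positivity)]
    rw [div_lt_iff₀ hκ, pow_succ (16 : ℝ) j] at hj2
    linarith
  obtain ⟨t, ht⟩ : ∃ t, t = s / 4 ^ j := ⟨_, rfl⟩
  have ht0 : 0 < t := by rw [ht]; positivity
  have hch := hchain h z x₀ s h₀ hs hh₀ hbal hd j hlow
  rw [← ht] at hch hup
  rcases hch with hc | ⟨w, hw1, -, -, hw4⟩
  · exact absurd hx₀ hc.2
  have k1 := h.sq_le_mH x₀ ht0
  have k2 := h.mH_shift w x₀ ht0 (by linarith) hw1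
  rw [← hC] at k2
  rw [div_le_iff₀ ht0] at hw4
  have k3 : u x₀ ^ 2 ≤ C * (2 * h₀ * t) := k1.trans (k2.trans (by gcongr))
  rw [← hh₀, div_le_iff₀ (by positivity)]
  calc u x₀ ^ 4 = (u x₀ ^ 2) ^ 2 := by ring
    _ ≤ (C * (2 * h₀ * t)) ^ 2 := by gcongr
    _ = 4 * C ^ 2 * h₀ * (t ^ 2 * h₀) := by ring
    _ ≤ 4 * C ^ 2 * h₀ * (16 * κ) := by gcongr
    _ = _ := by ring

/-- Around every point, at every large scale up to a factor `4`, either the point is cleared or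
there is a nearby balanced centre of normalized mass comparable to one. -/
lemma Sol.good_scales (hn : 1 ≤ n) {u v : Euc n → ℝ} (h : Sol u v) {x₀ : Euc n}
    (hx₀ : u x₀ = v x₀) : ∃ Λ > 0, ∃ hlo > 0, ∃ hhi > 0, ∃ S₀ ≥ 1, ∀ y s, S₀ ≤ s →
      ∃ s', s ≤ s' ∧ s' ≤ 4 * s ∧ (Cleared u v y s' ∨ ∃ z', ‖y - z'‖ ≤ Λ * √s' ∧
        mU u z' s' = mU v z' s' ∧ hlo ≤ mH u v z' s' / s' ∧ mH u v z' s' / s' ≤ hhi) := by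
  obtain ⟨Cs, hCs, hbal⟩ := h.balanced
  obtain ⟨hl, hhl, S₁, hlow⟩ := h.low hn hx₀ Cs hCs
  obtain ⟨κ, hκ, hchain⟩ := Sol.chain hn (Cs + 1) (by linarith)
  obtain ⟨B₁, hB₁, hg₁⟩ := h.mA_growth
  obtain ⟨B₂, hB₂, hg₂⟩ := h.symm.mA_growth
  obtain ⟨B, hB⟩ : ∃ B, B = (B₁ + B₂) * (2 + Cs ^ 2) := ⟨_, rfl⟩
  have hB0 : 0 < B := by rw [hB]; positivity
  refine ⟨Cs + 1, by positivity, hl / 2, by positivity, 2 * B, by positivity, max 1 (κ / hl),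
    le_max_left _ _, ?_⟩
  intro y s hsS
  have hs1 : 1 ≤ s := (le_max_left _ _).trans hsS
  have hs2 : κ / hl ≤ s := (le_max_right _ _).trans hsS
  have hs0 : 0 < s := by linarith
  obtain ⟨z, r, hr, hr0, hz, hzb⟩ := hbal (max S₁ (max s (‖y‖ ^ 2)))
  have hr1 : S₁ ≤ r := (le_max_left _ _).trans hr
  have hr2 : s ≤ r := ((le_max_left _ _).trans (le_max_right _ _)).trans hr
  have hr3 : ‖y‖ ^ 2 ≤ r := ((le_max_right _ _).trans (le_max_right _ _)).trans hr
  have hyr : ‖y‖ ≤ √r := Real.le_sqrt_of_sq_le hr3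
  have hd : ‖y - z‖ ≤ (Cs + 1) * √r := by
    calc ‖y - z‖ ≤ ‖y‖ + ‖z‖ := norm_sub_le _ _
      _ ≤ √r + Cs * √r := add_le_add hyr hz
      _ = _ := by ring
  obtain ⟨h₀, hh₀⟩ : ∃ h₀, h₀ = mH u v z r / r := ⟨_, rfl⟩
  have hlo := hlow z r hr1 hr0 hz hzb
  rw [← hh₀] at hlo
  have hhi : h₀ ≤ B := by
    rw [hh₀, div_le_iff₀ hr0]
    have e : mH u v z r = mA u z r + mA v z r := rfl
    have hz2 : ‖z‖ ^ 2 ≤ Cs ^ 2 * r := by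
      calc ‖z‖ ^ 2 ≤ (Cs * √r) ^ 2 := by gcongr
        _ = Cs ^ 2 * r := by rw [mul_pow, Real.sq_sqrt hr0.le]
    calc mH u v z r ≤ (B₁ + B₂) * (1 + ‖z‖ ^ 2 + r) := by
          rw [e]; linarith [hg₁ z r hr0, hg₂ z r hr0]
      _ ≤ (B₁ + B₂) * (r + Cs ^ 2 * r + r) := by gcongr; linarith
      _ = B * r := by rw [hB]; ring
  obtain ⟨j, hj1, hj2⟩ := exists_nat_pow_near (show 1 ≤ r / s by rwa [one_le_div hs0])
    (show (1 : ℝ) < 4 by norm_num)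
  have ht1 : s ≤ r / 4 ^ j := by
    rw [le_div_iff₀ (by positivity)]; rw [le_div_iff₀ hs0] at hj1; linarith
  have ht2 : r / 4 ^ j ≤ 4 * s := by
    rw [div_le_iff₀ (by positivity)]; rw [div_lt_iff₀ hs0, pow_succ] at hj2; linarith
  refine ⟨r / 4 ^ j, ht1, ht2, ?_⟩
  have hκ' : κ ≤ (r / 4 ^ j) ^ 2 * h₀ := by
    have h1 : κ ≤ s * hl := by rwa [div_le_iff₀ hhl] at hs2
    calc κ ≤ s * hl := h1
      _ ≤ s ^ 2 * hl := by gcongr; exact le_self_pow₀ hs1 (by norm_num)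
      _ ≤ (r / 4 ^ j) ^ 2 * h₀ := by gcongr
  rcases hchain h z y r h₀ hr0 hh₀ hzb hd j hκ' with hc | ⟨w, h1, h2, h3, h4⟩
  · exact Or.inl hc
  · exact Or.inr ⟨w, h1, h2, by linarith, by linarith⟩

/-- The smaller component is bounded everywhere. -/
lemma Sol.min_le (hn : 1 ≤ n) {u v : Euc n → ℝ} (h : Sol u v) {x₀ : Euc n}
    (hx₀ : u x₀ = v x₀) : ∃ K > 0, ∀ y, min (u y) (v y) ≤ K := by
  obtain ⟨Λ, hΛ, hlo, hhlo, hhi, hhhi, S₀, hS₀, hg⟩ := h.good_scales hn hx₀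
  obtain ⟨C, hC⟩ : ∃ C, C = 16 * 2 ^ n * Real.exp (Λ ^ 2) := ⟨_, rfl⟩
  have hC0 : 0 < C := by rw [hC]; positivity
  have hS0 : 0 < S₀ := by linarith
  refine ⟨1 + C * (hhi * (4 * S₀)), by positivity, fun y => ?_⟩
  have hm : 0 < min (u y) (v y) := lt_min (h.up y) (h.vp y)
  have hpos : 0 < C * (hhi * (4 * S₀)) := by positivity
  suffices hsq : min (u y) (v y) ^ 2 ≤ 1 + C * (hhi * (4 * S₀)) by
    rcases le_total (min (u y) (v y)) 1 with h1 | h1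
    · linarith
    · exact (le_self_pow₀ h1 (by norm_num)).trans hsq
  obtain ⟨s', h1, h2, h3⟩ := hg y S₀ le_rfl
  have hs0 : 0 < s' := by linarith
  rcases h3 with hc | ⟨w, hw1, -, -, hw4⟩
  · have : 1 / s' ≤ 1 := by rw [div_le_one hs0]; linarith
    linarith [hc.1]
  · have k1 := h.sq_le_mH y hs0
    have k2 := h.mH_shift w y hs0 hΛ.le hw1
    rw [← hC] at k2
    rw [div_le_iff₀ hs0] at hw4
    have k3 : min (u y) (v y) ^ 2 ≤ u y ^ 2 := by gcongr; exact min_le_left _ _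
    have k4 : C * mH u v w s' ≤ C * (hhi * (4 * S₀)) := by
      gcongr; exact hw4.trans (by gcongr)
    linarith

/-! ### The excess at a balanced centre -/

set_option maxHeartbeats 1600000 in
/-- When the smaller component is bounded by `K`, the truncations of `u` and `v` at height `K` have
disjoint supports, and their difference `f` is nearly extremal in the Gaussian Poincaré inequality
at a balanced centre. Hence `∇u - ∇v` is close to the constant `e = E ∇f`. -/
lemma Sol.excess {u v : Euc n → ℝ} (h : Sol u v) {K : ℝ} (hK : 0 < K)
    (hmin : ∀ y, min (u y) (v y) ≤ K) (z : Euc n) {s : ℝ} (hs : 0 < s)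
    (hbal : mU u z s = mU v z s) : ∃ e : Fin n → ℝ,
      mH u v z s - 3 * (8 * K * √(mH u v z s) + 4 * K ^ 2) ≤ s * ∑ i, e i ^ 2 ∧
      s * ∫ y, ∑ i, (pd i u y - pd i v y - e i) ^ 2 ∂(gm z s)
        ≤ 8 * (8 * K * √(mH u v z s) + 4 * K ^ 2) := by
  have hp := gm_prob z hs
  obtain ⟨H, hH⟩ : ∃ H, H = mH u v z s := ⟨_, rfl⟩
  have hHA : H = mA u z s + mA v z s := hH
  rw [← hH]
  have hH0 : 0 ≤ H := by rw [hH]; exact (h.mH_pos z hs).le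
  obtain ⟨X, hX⟩ : ∃ X, X = 8 * K * √H + 4 * K ^ 2 := ⟨_, rfl⟩
  rw [← hX]
  have hcp := h.c1_tr K
  have hcr := h.symm.c1_tr K
  have hgp := h.gint_gsq_tr K
  have hgr := h.symm.gint_gsq_tr K
  have hzero : ∀ y, tr K u y * tr K v y = 0 := fun y => by
    rcases min_le_iff.mp (hmin y) with h1 | h1
    · rw [tr_eq_zero hK h1, zero_mul]
    · rw [tr_eq_zero hK h1, mul_zero]
  have hzero' : ∀ y, ∑ i, pd i (tr K u) y * pd i (tr K v) y = 0 := fun y =>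
    Finset.sum_eq_zero fun i _ => by
      rcases min_le_iff.mp (hmin y) with h1 | h1
      · rw [pd_tr_eq_zero h.cu hK i h1, zero_mul]
      · rw [pd_tr_eq_zero h.cv hK i h1, mul_zero]
  obtain ⟨f, hf⟩ : ∃ f : Euc n → ℝ, f = fun y => 1 * tr K u y - 1 * tr K v y := ⟨_, rfl⟩
  have hfc : ContDiff ℝ (⊤ : ℕ∞) f := by
    rw [hf]; exact contDiff_comb (contDiff_tr h.cu K) (contDiff_tr h.cv K) 1 1
  have hfc1 : ContDiff ℝ 1 f := hfc.of_le (by simp)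
  have hfg : GInt (gsq f) := by rw [hf]; exact gint_gsq_comb hcp hcr hgp hgr 1 1
  have hf2 : GInt (fun y => f y ^ 2) := by
    rw [hf]
    exact ((((h.pg_tr K).const_mul 1).sub ((h.symm.pg_tr K).const_mul 1)).sq).gint
  have i1 := int_sq_comb (h.pg_tr K) (h.symm.pg_tr K) 1 1 z hs
  have i2 := int_gsq_comb hcp hcr hgp hgr 1 1 z hs
  have i3 := int_comb (h.pg_tr K).gint (h.symm.pg_tr K).gint 1 1 z hs
  simp only [hzero, integral_zero] at i1
  simp only [hzero', integral_zero] at i2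
  have hpb := poincare_basic hfc hf2 hfg z hs
  have hpg := poincare_gap hfc hf2 hfg z hs
  have hgs := int_grad_sub hfc1 hfg z hs (fun i => ∫ y, pd i f y ∂(gm z s))
  simp_rw [← pow_two] at hgs
  obtain ⟨e, he⟩ : ∃ e : Fin n → ℝ, e = fun i => ∫ y, pd i f y ∂(gm z s) := ⟨_, rfl⟩
  have he' : ∀ i, ∫ y, pd i f y ∂(gm z s) = e i := fun i => by rw [he]
  simp only [he'] at hpg hgs
  have e1 : ∫ y, f y ^ 2 ∂(gm z s)
      = (∫ y, tr K u y ^ 2 ∂(gm z s)) + ∫ y, tr K v y ^ 2 ∂(gm z s) := by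
    rw [hf, i1]; ring
  have e2 : ∫ y, gsq f y ∂(gm z s)
      = (∫ y, gsq (tr K u) y ∂(gm z s)) + ∫ y, gsq (tr K v) y ∂(gm z s) := by
    rw [hf, i2]; ring
  have e3 : ∫ y, f y ∂(gm z s) = (∫ y, tr K u y ∂(gm z s)) - ∫ y, tr K v y ∂(gm z s) := by
    rw [hf, i3]; ring
  -- the mean of a truncation differs from that of the function by at most `2 * K`
  have mean : ∀ {a b : Euc n → ℝ} (_ : Sol a b), mU a z s - 2 * K ≤ ∫ y, tr K a y ∂(gm z s) ∧
      ∫ y, tr K a y ∂(gm z s) ≤ mU a z s := by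
    intro a b hab
    constructor
    · have k1 : ∫ y, (a y - 2 * K) ∂(gm z s) = mU a z s - 2 * K := by
        rw [integral_sub (hab.pg.gint z s hs) (integrable_const _)]
        simp [mU]
      rw [← k1]
      exact integral_mono ((hab.pg.gint z s hs).sub (integrable_const _))
        ((hab.pg_tr K).gint z s hs) fun y => tr_ge hab hK y
    · exact integral_mono ((hab.pg_tr K).gint z s hs) (hab.pg.gint z s hs) fun y => tr_le hab K y
  have m1 := mean h
  have m2 := mean h.symm
  have hm : (∫ y, f y ∂(gm z s)) ^ 2 ≤ 4 * K ^ 2 := by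
    have : |∫ y, f y ∂(gm z s)| ≤ 2 * K := by
      rw [e3, abs_le]; constructor <;> linarith [m1.1, m1.2, m2.1, m2.2]
    calc _ = |∫ y, f y ∂(gm z s)| ^ 2 := (sq_abs _).symm
      _ ≤ (2 * K) ^ 2 := by gcongr
      _ = _ := by ring
  have a1 := h.mA_tr_ge hK z hs
  have a2 := h.symm.mA_tr_ge hK z hs
  have mUle : ∀ {a b : Euc n → ℝ} (_ : Sol a b), mA a z s ≤ H → mU a z s ≤ √H := by
    intro a b hab hle
    exact Real.le_sqrt_of_sq_le ((sq_mean_le (hab.pg.sq.gint z s hs) (hab.pg.gint z s hs)).trans hle)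
  have hA0 : 0 ≤ mA u z s := mA_nonneg u z s
  have hA1 : 0 ≤ mA v z s := mA_nonneg v z s
  have b1 : K * mU u z s ≤ K * √H := by gcongr; exact mUle h (by linarith)
  have b2 : K * mU v z s ≤ K * √H := by gcongr; exact mUle h.symm (by linarith)
  have hen := h.energy_le z hs
  rw [← hH] at hen
  have hP : 0 ≤ s * mP u v z s := mul_nonneg hs.le (mP_nonneg u v z s)
  have d1 := h.mD_tr_le K z hs
  have d2 := h.symm.mD_tr_le K z hs
  obtain ⟨G, hG⟩ : ∃ G, G = ∫ y, gsq f y ∂(gm z s) := ⟨_, rfl⟩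
  obtain ⟨D, hD⟩ : ∃ D, D = mD u z s + mD v z s := ⟨_, rfl⟩
  obtain ⟨I, hI⟩ : ∃ I, I = ∫ y, ∑ i, (pd i f y - e i) ^ 2 ∂(gm z s) := ⟨_, rfl⟩
  rw [← hG] at hpb hpg hgs e2
  rw [← hI] at hpg hgs
  have hGD : G ≤ D := by linarith
  have hsD : s * D ≤ H := by
    rw [hD]; linarith
  have hsGD : s * G ≤ s * D := by gcongr
  have hvar : H - X ≤ (∫ y, f y ^ 2 ∂(gm z s)) - (∫ y, f y ∂(gm z s)) ^ 2 := by
    rw [e1, hX]; linarith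
  have hsI : s * I ≤ 2 * X := by linarith
  refine ⟨e, ?_, ?_⟩
  · have : s * ∑ i, e i ^ 2 = s * G - s * I := by rw [hgs]; ring
    rw [this]; linarith
  have hpf : ∀ i y, pd i f y = pd i (tr K u) y - pd i (tr K v) y := fun i y => by
    rw [hf, pd_comb hcp hcr]; ring
  have pt : ∀ y, ∑ i, (pd i u y - pd i v y - e i) ^ 2 ≤ 2 * (∑ i, (pd i f y - e i) ^ 2)
      + 4 * (gsq u y + gsq v y - (gsq (tr K u) y + gsq (tr K v) y)) := by
    intro y
    unfold gsq
    rw [← Finset.sum_add_distrib, ← Finset.sum_add_distrib, ← Finset.sum_sub_distrib,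
      Finset.mul_sum, Finset.mul_sum, ← Finset.sum_add_distrib]
    refine Finset.sum_le_sum fun i _ => ?_
    rw [hpf, pd_tr h.cu, pd_tr h.cv]
    obtain ⟨σ, hσ⟩ : ∃ σ, σ = Real.smoothTransition (u y / K - 1) := ⟨_, rfl⟩
    obtain ⟨ρ, hρ⟩ : ∃ ρ, ρ = Real.smoothTransition (v y / K - 1) := ⟨_, rfl⟩
    have s0 : 0 ≤ σ := by rw [hσ]; exact Real.smoothTransition.nonneg _
    have s1 : σ ≤ 1 := by rw [hσ]; exact Real.smoothTransition.le_one _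
    have r0 : 0 ≤ ρ := by rw [hρ]; exact Real.smoothTransition.nonneg _
    have r1 : ρ ≤ 1 := by rw [hρ]; exact Real.smoothTransition.le_one _
    rw [← hσ, ← hρ]
    generalize pd i u y = a
    generalize pd i v y = b
    generalize e i = c
    have t1 : 0 ≤ σ * (1 - σ) * a ^ 2 :=
      mul_nonneg (mul_nonneg s0 (by linarith)) (sq_nonneg _)
    have t2 : 0 ≤ ρ * (1 - ρ) * b ^ 2 :=
      mul_nonneg (mul_nonneg r0 (by linarith)) (sq_nonneg _)
    have t3 := sq_nonneg ((σ * a - ρ * b - c) - ((1 - σ) * a - (1 - ρ) * b))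
    have t4 := sq_nonneg ((1 - σ) * a + (1 - ρ) * b)
    nlinarith
  have gint_err : ∀ {a : Euc n → ℝ} (_ : GInt (gsq a)) (_ : ContDiff ℝ 1 a),
      GInt (fun y => ∑ i, (pd i a y - e i) ^ 2) := by
    intro a ga ca
    refine ((ga.const_mul 2).add (gint_const (2 * ∑ i, e i ^ 2))).mono
      (continuous_finsetSum _ fun i _ => ((continuous_pd ca i).sub continuous_const).pow 2)
      fun y => ?_
    rw [abs_of_nonneg (Finset.sum_nonneg fun i _ => sq_nonneg _)]
    simp only [gsq]
    rw [Finset.mul_sum, Finset.mul_sum, ← Finset.sum_add_distrib]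
    refine Finset.sum_le_sum fun i _ => ?_
    nlinarith [sq_nonneg (pd i a y + e i)]
  have hw1 : ContDiff ℝ 1 (fun y => 1 * u y - 1 * v y) := contDiff_comb h.c1 h.symm.c1 1 1
  have gw := gint_err (gint_gsq_comb h.c1 h.symm.c1 h.gint_gsq h.symm.gint_gsq 1 1) hw1
  have ew : ∀ y, ∑ i, (pd i (fun y => 1 * u y - 1 * v y) y - e i) ^ 2
      = ∑ i, (pd i u y - pd i v y - e i) ^ 2 := fun y =>
    Finset.sum_congr rfl fun i _ => by rw [pd_comb h.c1 h.symm.c1]; ring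
  rw [funext ew] at gw
  have gf := gint_err hfg hfc1
  have J1 : Integrable (fun y => ∑ i, (pd i f y - e i) ^ 2) (gm z s) := gf z s hs
  have J2 : Integrable (fun y => gsq u y + gsq v y) (gm z s) :=
    (h.gint_gsq z s hs).add (h.symm.gint_gsq z s hs)
  have J3 : Integrable (fun y => gsq (tr K u) y + gsq (tr K v) y) (gm z s) :=
    (hgp z s hs).add (hgr z s hs)
  have J4 : Integrable (fun y => gsq u y + gsq v y - (gsq (tr K u) y + gsq (tr K v) y)) (gm z s) :=
    J2.sub J3
  have big : ∫ y, ∑ i, (pd i u y - pd i v y - e i) ^ 2 ∂(gm z s) ≤ 2 * I + 4 * (D - G) := by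
    refine (integral_mono (gw z s hs) ((J1.const_mul 2).add (J4.const_mul 4)) pt).trans
      (le_of_eq ?_)
    simp only [Pi.add_apply]
    rw [integral_add (J1.const_mul 2) (J4.const_mul 4), integral_const_mul, integral_const_mul,
      integral_sub J2 J3, integral_add (h.gint_gsq z s hs) (h.symm.gint_gsq z s hs),
      integral_add (hgp z s hs) (hgr z s hs), ← hI, e2, hD]
    rfl
  calc s * ∫ y, ∑ i, (pd i u y - pd i v y - e i) ^ 2 ∂(gm z s)
      ≤ s * (2 * I + 4 * (D - G)) := by gcongr
    _ = 2 * (s * I) + 4 * (s * D - s * G) := by ring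
    _ ≤ 8 * X := by linarith

/-! ### Passage to balls -/

lemma gradient_coord {f : Euc n → ℝ} (y : Euc n) (i : Fin n) : gradient f y i = pd i f y := by
  have h : ⟪gradient f y, EuclideanSpace.single i (1 : ℝ)⟫ = pd i f y := by
    rw [gradient, InnerProductSpace.toDual_symm_apply]; rfl
  rw [← h, EuclideanSpace.inner_single_right]
  simp

lemma norm_gradient_sub (u v : Euc n → ℝ) (e : Fin n → ℝ) (y : Euc n) :
    ‖gradient u y - gradient v y - WithLp.toLp 2 e‖ ^ 2
      = ∑ i, (pd i u y - pd i v y - e i) ^ 2 := by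
  rw [EuclideanSpace.norm_sq_eq]
  refine Finset.sum_congr rfl fun i _ => ?_
  simp [gradient_coord]

/-- The Gaussian density is bounded below on a ball of radius comparable to `√s`. -/
lemma setIntegral_ball_le {F : Euc n → ℝ} (hF : Continuous F) (hF0 : ∀ y, 0 ≤ F y) {x z : Euc n}
    {s R Λ : ℝ} (hs : 0 < s) (hR : R ≤ √s) (hΛ : 0 ≤ Λ) (hx : ‖x - z‖ ≤ Λ * √s)
    (hi : Integrable F (gm z s)) :
    ∫ y in ball x R, F y
      ≤ √(2 * Real.pi * s) ^ n * Real.exp ((Λ + 1) ^ 2 / 2) * ∫ y, F y ∂(gm z s) := by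
  have hpi : 0 < 2 * Real.pi * s := by have := Real.pi_pos; positivity
  obtain ⟨A, hA⟩ : ∃ A, A = √(2 * Real.pi * s) ^ n * Real.exp ((Λ + 1) ^ 2 / 2) := ⟨_, rfl⟩
  have hA0 : 0 < A := by rw [hA]; positivity
  rw [← hA]
  have hi' : Integrable (fun y => gk s (y - z) * F y) := integrable_gm_iff.mp hi
  rw [integral_gm, ← integral_const_mul]
  have hiA : Integrable (fun y => A * (gk s (y - z) * F y)) := hi'.const_mul A
  have hloc : IntegrableOn F (ball x R) :=
    (hF.continuousOn.integrableOn_compact (isCompact_closedBall x R)).mono_set ball_subset_closedBall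
  have hpt : ∀ y ∈ ball x R, F y ≤ A * (gk s (y - z) * F y) := by
    intro y hy
    have hd : ‖y - z‖ ≤ (Λ + 1) * √s := by
      have h1 : ‖y - x‖ < R := by rwa [mem_ball_iff_norm] at hy
      calc ‖y - z‖ = ‖(y - x) + (x - z)‖ := by congr 1; abel
        _ ≤ ‖y - x‖ + ‖x - z‖ := norm_add_le _ _
        _ ≤ (Λ + 1) * √s := by linarith
    have hd2 : ‖y - z‖ ^ 2 / (2 * s) ≤ (Λ + 1) ^ 2 / 2 := by
      have : ‖y - z‖ ^ 2 ≤ (Λ + 1) ^ 2 * s := by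
        calc ‖y - z‖ ^ 2 ≤ ((Λ + 1) * √s) ^ 2 := by gcongr
          _ = _ := by rw [mul_pow, Real.sq_sqrt hs.le]
      rw [div_le_div_iff₀ (by positivity) (by norm_num)]
      linarith
    have hAg : 1 ≤ A * gk s (y - z) := by
      have e1 : A * gk s (y - z) = (√(2 * Real.pi * s) * (√(2 * Real.pi * s))⁻¹) ^ n
          * (Real.exp ((Λ + 1) ^ 2 / 2) * Real.exp (-‖y - z‖ ^ 2 / (2 * s))) := by
        rw [hA, gk, mul_pow]; ring
      rw [e1, mul_inv_cancel₀ (Real.sqrt_pos.mpr hpi).ne', one_pow, one_mul, ← Real.exp_add]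
      apply Real.one_le_exp
      rw [neg_div]; linarith
    calc F y = 1 * F y := (one_mul _).symm
      _ ≤ A * gk s (y - z) * F y := mul_le_mul_of_nonneg_right hAg (hF0 y)
      _ = _ := by ring
  calc ∫ y in ball x R, F y ≤ ∫ y in ball x R, A * (gk s (y - z) * F y) :=
        setIntegral_mono_on hloc hiA.integrableOn measurableSet_ball hpt
    _ ≤ ∫ y, A * (gk s (y - z) * F y) := by
        refine setIntegral_le_integral hiA (Filter.Eventually.of_forall fun y => ?_)
        exact mul_nonneg hA0.le (mul_nonneg (gk_nonneg s _) (hF0 y))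

set_option maxHeartbeats 1600000 in
/-- The excess estimate at large radii. -/
lemma Sol.large (hn : 1 ≤ n) {u v : Euc n → ℝ} (h : Sol u v) {x₀ : Euc n} (hx₀ : u x₀ = v x₀) :
    ∃ C > 0, ∃ c > 0, ∃ R₀ ≥ 1, ∀ x, u x = v x → ∀ R, R₀ ≤ R → ∃ e : Euc n, c ≤ ‖e‖ ∧
      ∫ y in ball x R, ‖gradient u y - gradient v y - e‖ ^ 2 ≤ C * R ^ ((n : ℝ) - 1) := by
  obtain ⟨K, hK, hmin⟩ := h.min_le hn hx₀
  obtain ⟨Λ, hΛ, hlo, hhlo, hhi, hhhi, S₀, hS₀, hg⟩ := h.good_scales hn hx₀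
  obtain ⟨X, hX⟩ : ∃ X, X = 8 * K * √hhi + 4 * K ^ 2 := ⟨_, rfl⟩
  have hX0 : 0 < X := by rw [hX]; positivity
  have hpi := Real.pi_pos
  refine ⟨√(8 * Real.pi) ^ n * Real.exp ((Λ + 1) ^ 2 / 2) * (8 * X), by positivity,
    √(hlo / 2), by positivity, max S₀ (6 * X / hlo), hS₀.trans (le_max_left _ _), ?_⟩
  intro x hx R hR
  have hR1 : S₀ ≤ R := (le_max_left _ _).trans hR
  have hR2 : 6 * X / hlo ≤ R := (le_max_right _ _).trans hR
  have hR3 : 1 ≤ R := hS₀.trans hR1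
  have hR0 : 0 < R := by linarith
  obtain ⟨s, hs1, hs2, hs3⟩ := hg x (R ^ 2) (hR1.trans (le_self_pow₀ hR3 (by norm_num)))
  have hs0 : 0 < s := lt_of_lt_of_le (by positivity) hs1
  rcases hs3 with hc | ⟨z, hz1, hz2, hz3, hz4⟩
  · exact absurd hx hc.2
  obtain ⟨e, he1, he2⟩ := h.excess hK hmin z hs0 hz2
  obtain ⟨r, hr⟩ : ∃ r, r = √s := ⟨_, rfl⟩
  have hRr : R ≤ r := by rw [hr]; exact Real.le_sqrt_of_sq_le hs1
  have hr0 : 0 < r := by linarith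
  have hsr : s = r ^ 2 := by rw [hr, Real.sq_sqrt hs0.le]
  have hr1 : 1 ≤ r := hR3.trans hRr
  rw [le_div_iff₀ hs0] at hz3
  rw [div_le_iff₀ hs0] at hz4
  have hXr : 8 * K * √(mH u v z s) + 4 * K ^ 2 ≤ X * r := by
    have h1 : √(mH u v z s) ≤ √hhi * r := by
      calc √(mH u v z s) ≤ √(hhi * s) := Real.sqrt_le_sqrt hz4
        _ = _ := by rw [Real.sqrt_mul hhhi.le, hr]
    have h2 : 4 * K ^ 2 ≤ 4 * K ^ 2 * r := le_mul_of_one_le_right (by positivity) hr1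
    have h3 : 8 * K * √(mH u v z s) ≤ 8 * K * (√hhi * r) := by gcongr
    rw [hX]; linarith
  have hX6 : 6 * X ≤ hlo * r := by
    have : 6 * X ≤ R * hlo := by rwa [div_le_iff₀ hhlo] at hR2
    have : hlo * R ≤ hlo * r := by gcongr
    linarith
  refine ⟨WithLp.toLp 2 e, ?_, ?_⟩
  · rw [Real.sqrt_le_iff]
    refine ⟨norm_nonneg _, ?_⟩
    rw [EuclideanSpace.norm_sq_eq]
    have e1 : ∑ i, ‖(WithLp.toLp 2 e : Euc n) i‖ ^ 2 = ∑ i, e i ^ 2 :=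
      Finset.sum_congr rfl fun i _ => by simp
    rw [e1]
    refine le_of_mul_le_mul_left ?_ hs0
    have h1 : 6 * X * r ≤ hlo * r * r := by gcongr
    have h2 : hlo * r * r = hlo * s := by rw [hsr]; ring
    linarith
  · have hcont : Continuous fun y => ∑ i, (pd i u y - pd i v y - e i) ^ 2 :=
      continuous_finsetSum _ fun i _ =>
        (((continuous_pd h.c1 i).sub (continuous_pd h.symm.c1 i)).sub continuous_const).pow 2
    have hint : GInt fun y => ∑ i, (pd i u y - pd i v y - e i) ^ 2 := by
      refine (((h.gint_gsq.const_mul 3).add (h.symm.gint_gsq.const_mul 3)).add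
        (gint_const (3 * ∑ i, e i ^ 2))).mono hcont fun y => ?_
      rw [abs_of_nonneg (Finset.sum_nonneg fun i _ => sq_nonneg _)]
      simp only [gsq]
      rw [Finset.mul_sum, Finset.mul_sum, Finset.mul_sum, ← Finset.sum_add_distrib,
        ← Finset.sum_add_distrib]
      refine Finset.sum_le_sum fun i _ => ?_
      nlinarith [sq_nonneg (pd i u y + pd i v y), sq_nonneg (pd i u y + e i),
        sq_nonneg (pd i v y - e i)]
    simp_rw [norm_gradient_sub u v e]
    refine (setIntegral_ball_le hcont (fun y => Finset.sum_nonneg fun i _ => sq_nonneg _) hs0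
      (by rwa [← hr]) hΛ.le hz1 (hint z s hs0)).trans ?_
    obtain ⟨E, hE⟩ : ∃ E, E = ∫ y, ∑ i, (pd i u y - pd i v y - e i) ^ 2 ∂(gm z s) := ⟨_, rfl⟩
    rw [← hE] at he2 ⊢
    have hE0 : 0 ≤ E := by
      rw [hE]; exact integral_nonneg fun y => Finset.sum_nonneg fun i _ => sq_nonneg _
    have hER : E ≤ 8 * X / R := by
      rw [le_div_iff₀ hR0]
      have h1 : r * (E * r) ≤ r * (8 * X) := by
        have : r * (E * r) = s * E := by rw [hsr]; ring
        linarith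
      have h2 := le_of_mul_le_mul_left h1 hr0
      have h3 : E * R ≤ E * r := by gcongr
      linarith
    have hsq : √(2 * Real.pi * s) ≤ √(8 * Real.pi) * R := by
      rw [Real.sqrt_le_iff]
      refine ⟨by positivity, ?_⟩
      rw [mul_pow, Real.sq_sqrt (by positivity)]
      calc 2 * Real.pi * s ≤ 2 * Real.pi * (4 * R ^ 2) := by gcongr
        _ = _ := by ring
    have hpow : R ^ ((n : ℝ) - 1) = R ^ n / R := by
      rw [Real.rpow_sub hR0, Real.rpow_natCast, Real.rpow_one]
    calc √(2 * Real.pi * s) ^ n * Real.exp ((Λ + 1) ^ 2 / 2) * E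
        ≤ (√(8 * Real.pi) * R) ^ n * Real.exp ((Λ + 1) ^ 2 / 2) * (8 * X / R) := by
          gcongr
      _ = _ := by rw [hpow, mul_pow]; ring

end ExcessDecay

end

theorem excess_decay (n : ℕ) (hn : 2 ≤ n)
    (u v : Euc n → ℝ)
    (hu : ContDiff ℝ (⊤ : ℕ∞) u) (hv : ContDiff ℝ (⊤ : ℕ∞) v)
    (hupos : ∀ x, 0 < u x) (hvpos : ∀ x, 0 < v x)
    (hequ : ∀ x, lap u x = u x * v x ^ 2)
    (heqv : ∀ x, lap v x = v x * u x ^ 2)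
    (C₀ : ℝ) (hC₀ : 0 < C₀)
    (hgrowth : ∀ x, u x + v x ≤ C₀ * (1 + ‖x‖)) :
    ∃ C > (0 : ℝ), ∃ c₀ > (0 : ℝ), ∀ x : Euc n, u x = v x → ∀ R > (1 : ℝ),
      ∃ e : Euc n, c₀ / 2 ≤ ‖e‖ ∧
        ∫ y in ball x R, ‖gradient u y - gradient v y - e‖ ^ 2
          ≤ C * R ^ ((n : ℝ) - 1) := by
  have h : ExcessDecay.Sol u v := ⟨hu, hv, hupos, hvpos, hequ, heqv, C₀, hC₀, hgrowth⟩
  by_cases hex : ∃ x₀, u x₀ = v x₀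
  swap
  · exact ⟨1, one_pos, 1, one_pos, fun x hx => absurd ⟨x, hx⟩ hex⟩
  obtain ⟨x₀, hx₀⟩ := hex
  obtain ⟨C, hC, c, hc, R₀, hR₀, hmain⟩ := h.large (by omega) hx₀
  have hn1 : (0 : ℝ) ≤ (n : ℝ) - 1 := by
    have : (2 : ℝ) ≤ n := by exact_mod_cast hn
    linarith
  have hR₀0 : 0 < R₀ := by linarith
  refine ⟨C * R₀ ^ ((n : ℝ) - 1), mul_pos hC (Real.rpow_pos_of_pos hR₀0 _), 2 * c, by linarith,
    fun x hx R hR => ?_⟩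
  have hR0 : 0 < R := by linarith
  -- small radii are absorbed by passing to the larger ball of radius `max R R₀ ≤ R₀ * R`
  obtain ⟨e, he, hle⟩ := hmain x hx (max R R₀) (le_max_right _ _)
  refine ⟨e, by linarith, ?_⟩
  have hcont : Continuous fun y => ‖gradient u y - gradient v y - e‖ ^ 2 := by
    have e1 : e = WithLp.toLp 2 (fun i => e i) := rfl
    rw [e1]
    simp_rw [ExcessDecay.norm_gradient_sub]
    exact continuous_finsetSum _ fun i _ => (((ExcessDecay.continuous_pd h.c1 i).sub
      (ExcessDecay.continuous_pd h.symm.c1 i)).sub continuous_const).pow 2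
  have hint : IntegrableOn (fun y => ‖gradient u y - gradient v y - e‖ ^ 2) (ball x (max R R₀)) :=
    (hcont.continuousOn.integrableOn_compact (isCompact_closedBall x _)).mono_set
      ball_subset_closedBall
  calc ∫ y in ball x R, ‖gradient u y - gradient v y - e‖ ^ 2
      ≤ ∫ y in ball x (max R R₀), ‖gradient u y - gradient v y - e‖ ^ 2 :=
        setIntegral_mono_set hint (Filter.Eventually.of_forall fun y => sq_nonneg _)
          (Filter.Eventually.of_forall (ball_subset_ball (le_max_left _ _)))
    _ ≤ C * max R R₀ ^ ((n : ℝ) - 1) := hle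
    _ ≤ C * (R₀ * R) ^ ((n : ℝ) - 1) := by
        gcongr
        exact max_le (le_mul_of_one_le_left hR0.le hR₀) (le_mul_of_one_le_right hR₀0.le hR.le)
    _ = C * R₀ ^ ((n : ℝ) - 1) * R ^ ((n : ℝ) - 1) := by
        rw [Real.mul_rpow hR₀0.le hR0.le]; ring
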